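/- arXiv:1501.07613 — 8 statements merged into one kernel-verified Lean document; each statement's English description precedes it below -/
import Mathlib

section
/- Let C be a C*-algebra and c ∈ C. Let A be the closed linear span of {cc* x cc* : x ∈ C} (the hereditary C*-subalgebra of C generated by cc*) and B the closed linear span of {c*c x c*c : x ∈ C} (the hereditary C*-subalgebra generated by c*c). Then A and B are *-isomorphic as C*-algebras. -/
/-- The closed linear span of `{a x a : x ∈ C}`, i.e. the hereditary C*-subalgebra of `C`
generated by the positive element `a`, as a closed subspace. -/
noncomputable def hereditaryClosedSpan {C : Type*} [NonUnitalCStarAlgebra C] (a : C) :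
    Submodule ℂ C :=
  (Submodule.span ℂ {y : C | ∃ x : C, y = a * x * a}).topologicalClosure

/-- For selfadjoint `s`, `s` lies in the closure of `s² C`. -/
theorem aux_mem_closure {C : Type*} [NonUnitalCStarAlgebra C] (s : C) (hs : IsSelfAdjoint s) :
    s ∈ closure (Set.range fun x : C => s * s * x) := by
  rw [Metric.mem_closure_range_iff]
  intro ε hε
  set k : ℝ → ℝ := fun t => t / (t ^ 2 + ε ^ 2) with hk
  have hpos : ∀ t : ℝ, t ^ 2 + ε ^ 2 ≠ 0 := fun t => by positivity
  have hkc : Continuous k := by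
    rw [hk]
    exact continuous_id.div (by fun_prop) hpos
  have hk0 : k 0 = 0 := by simp [hk]
  refine ⟨cfcₙ k s, ?_⟩
  have h1 : s - s * s * cfcₙ k s = cfcₙ (fun t : ℝ => t - t * t * k t) s := by
    rw [cfcₙ_sub (fun t : ℝ => t) (fun t => t * t * k t) s (by fun_prop) (by simp)
      (by fun_prop) (by simp),
      cfcₙ_mul (fun t : ℝ => t * t) k s (by fun_prop) (by simp) (by fun_prop) hk0,
      cfcₙ_mul (fun t : ℝ => t) (fun t => t) s (by fun_prop) (by simp) (by fun_prop) (by simp),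
      cfcₙ_id' ℝ s]
  rw [dist_eq_norm, h1]
  refine lt_of_le_of_lt (norm_cfcₙ_le (c := ε / 2) ?_) (by linarith)
  intro t _
  have h2 : t - t * t * k t = t * ε ^ 2 / (t ^ 2 + ε ^ 2) := by
    simp only [hk]
    field_simp [hpos t]
    ring
  have h3 : 0 < t ^ 2 + ε ^ 2 := by positivity
  rw [h2, Real.norm_eq_abs, abs_le, div_le_iff₀ h3, le_div_iff₀ h3]
  constructor <;> nlinarith [mul_nonneg hε.le (sq_nonneg (t - ε)), mul_nonneg hε.le (sq_nonneg (t + ε))]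

theorem aux_conj {C : Type*} [NonUnitalCStarAlgebra C] {p q : C}
    (h : p ∈ closure (Set.range fun x : C => q * x)) (y : C) :
    p * y * star p ∈ closure (Set.range fun x : C => q * x * star q) := by
  have hc : Continuous fun z : C => z * y * star z := by fun_prop
  refine map_mem_closure (f := fun z : C => z * y * star z) hc h ?_
  rintro _ ⟨x, rfl⟩
  exact ⟨x * y * star x, by simp [mul_assoc]⟩

theorem aux_conj_subset {C : Type*} [NonUnitalCStarAlgebra C] {p q : C}
    (h : p ∈ closure (Set.range fun x : C => q * x)) :
    closure (Set.range fun x : C => p * x * star p) ⊆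
      closure (Set.range fun x : C => q * x * star q) := by
  refine closure_minimal ?_ isClosed_closure
  rintro _ ⟨y, rfl⟩
  exact aux_conj h y

/-- The linear map `x ↦ p x q`. -/
noncomputable def auxL {C : Type*} [NonUnitalCStarAlgebra C] (p q : C) : C →ₗ[ℂ] C where
  toFun x := p * x * q
  map_add' x y := by simp [mul_add, add_mul]
  map_smul' r x := by rw [mul_smul_comm, smul_mul_assoc, RingHom.id_apply]

theorem aux_coe {C : Type*} [NonUnitalCStarAlgebra C] (a : C) :
    (hereditaryClosedSpan a : Set C) = closure (Set.range fun x : C => a * x * a) := by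
  have : Submodule.span ℂ {y : C | ∃ x : C, y = a * x * a} = LinearMap.range (auxL a a) := by
    have h : {y : C | ∃ x : C, y = a * x * a} = (LinearMap.range (auxL a a) : Set C) := by
      ext y
      simp [auxL, eq_comm]
    rw [h, Submodule.span_eq]
  rw [hereditaryClosedSpan, this, Submodule.topologicalClosure_coe]
  rfl

theorem aux_norm {C : Type*} [NonUnitalCStarAlgebra C] {p q : C}
    (h : star p * p = star q * q) (y : C) : ‖p * y‖ = ‖q * y‖ := by
  have h1 : star (p * y) * (p * y) = star (q * y) * (q * y) := by
    simp only [star_mul, mul_assoc]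
    rw [← mul_assoc (star p), h, mul_assoc]
  have h2 := CStarRing.norm_star_mul_self (x := p * y)
  rw [h1, CStarRing.norm_star_mul_self] at h2
  exact ((mul_self_inj (norm_nonneg _) (norm_nonneg _)).1 h2).symm

theorem aux_norm' {C : Type*} [NonUnitalCStarAlgebra C] {p q : C}
    (h : star p * p = star q * q) (y : C) : ‖y * star p‖ = ‖y * star q‖ := by
  have := aux_norm h (star y)
  rwa [← norm_star, ← norm_star (q * star y), star_mul, star_mul, star_star] at this

theorem aux_d {C : Type*} [NonUnitalCStarAlgebra C] (c : C) :
    ∃ d : C, star d * d = (c * star c) * (c * star c) ∧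
      closure (Set.range fun x : C => d * x * star d) =
      closure (Set.range fun x : C => (star c * c) * x * (star c * c)) := by
  let _ := CStarAlgebra.spectralOrder C
  have := CStarAlgebra.spectralOrderedRing C
  have hb : 0 ≤ star c * c := star_mul_self_nonneg c
  obtain ⟨s, hs, hss⟩ : ∃ s : C, IsSelfAdjoint s ∧ s * s = star c * c :=
    ⟨CFC.sqrt (star c * c), (CFC.sqrt_nonneg _).isSelfAdjoint, CFC.sqrt_mul_sqrt_self _ hb⟩
  have hsb : IsSelfAdjoint (star c * c) := hb.isSelfAdjoint
  have hcomm : s * (star c * c) = star c * c * s := by rw [← hss, mul_assoc]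
  refine ⟨s * star c, ?_, ?_⟩
  · simp only [star_mul, star_star, hs.star_eq]
    calc c * s * (s * star c) = c * (s * s) * star c := by simp only [mul_assoc]
      _ = _ := by rw [hss]; simp only [mul_assoc]
  · have e : (Set.range fun x : C => (star c * c) * x * (star c * c)) =
        Set.range fun x : C => (star c * c) * x * star (star c * c) := by rw [hsb.star_eq]
    rw [e]
    refine Set.Subset.antisymm (aux_conj_subset ?_) (aux_conj_subset ?_)
    · have h := aux_mem_closure s hs
      rw [hss] at h
      refine map_mem_closure (f := fun z => z * star c) (by fun_prop) h ?_
      rintro _ ⟨x, rfl⟩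
      exact ⟨x * star c, by simp [mul_assoc]⟩
    · have h := aux_mem_closure _ hsb
      refine closure_mono ?_ h
      rintro _ ⟨x, rfl⟩
      refine ⟨c * s * x, ?_⟩
      calc s * star c * (c * s * x) = s * (star c * c) * s * x := by simp only [mul_assoc]
        _ = star c * c * (s * s) * x := by rw [hcomm]; simp only [mul_assoc]
        _ = _ := by rw [hss]

theorem stmt2 {C : Type*} [NonUnitalCStarAlgebra C] (c : C) :
    ∃ f : hereditaryClosedSpan (c * star c) ≃ₗ[ℂ] hereditaryClosedSpan (star c * c),
      (∀ x y z : hereditaryClosedSpan (c * star c),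
        (z : C) = (x : C) * (y : C) → (f z : C) = (f x : C) * (f y : C)) ∧
      (∀ x z : hereditaryClosedSpan (c * star c),
        (z : C) = star (x : C) → (f z : C) = star ((f x : C))) := by
  obtain ⟨d, hd, hcl⟩ := aux_d c
  have hB := aux_coe (star c * c)
  rw [← hcl] at hB
  have ha : star (c * star c) = c * star c := by simp
  generalize hbb : star c * c = b at *
  generalize haa : c * star c = a at *
  have hA := aux_coe a
  have : CompleteSpace (hereditaryClosedSpan a) :=
    (Submodule.isClosed_topologicalClosure _).completeSpace_coe
  have : CompleteSpace (hereditaryClosedSpan b) :=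
    (Submodule.isClosed_topologicalClosure _).completeSpace_coe
  have m1 : ∀ x : C, auxL a a x ∈ hereditaryClosedSpan a := fun x => by
    rw [← SetLike.mem_coe, hA]; exact subset_closure ⟨x, rfl⟩
  have m2 : ∀ x : C, auxL d (star d) x ∈ hereditaryClosedSpan b := fun x => by
    rw [← SetLike.mem_coe, hB]; exact subset_closure ⟨x, rfl⟩
  let e₁ : C →ₗ[ℂ] hereditaryClosedSpan a := (auxL a a).codRestrict _ m1
  let e₂ : C →ₗ[ℂ] hereditaryClosedSpan b := (auxL d (star d)).codRestrict _ m2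
  have d1 : DenseRange e₁ := fun x => by
    rw [closure_subtype, ← Set.range_comp]
    have := x.2
    rw [← SetLike.mem_coe, hA] at this
    exact this
  have d2 : DenseRange e₂ := fun x => by
    rw [closure_subtype, ← Set.range_comp]
    have := x.2
    rw [← SetLike.mem_coe, hB] at this
    exact this
  have hd' : star d * d = star a * a := by rw [hd, ha]
  have hn : ∀ x, ‖e₂ (LinearEquiv.refl ℂ C x)‖ = ‖e₁ x‖ := fun x => by
    change ‖d * x * star d‖ = ‖a * x * a‖
    rw [aux_norm' hd', ha, mul_assoc, aux_norm hd', mul_assoc]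
  let f := (LinearEquiv.refl ℂ C).extendOfIsometry e₁ e₂ d1 d2 hn
  have hf : ∀ x, f (e₁ x) = e₂ x := fun x => LinearEquiv.extendOfIsometry_eq (LinearEquiv.refl ℂ C) e₁ e₂ d1 d2 hn x
  have hfc : Continuous f := f.continuous
  have hmul : ∀ x y : hereditaryClosedSpan a, (x : C) * y ∈ hereditaryClosedSpan a := by
    intro x y
    have hx := x.2
    have hy := y.2
    rw [← SetLike.mem_coe, hA] at hx hy ⊢
    refine map_mem_closure₂ continuous_mul hx hy ?_
    rintro _ ⟨u, rfl⟩ _ ⟨v, rfl⟩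
    exact ⟨u * (a * a) * v, by simp only [mul_assoc]⟩
  have hstar : ∀ x : hereditaryClosedSpan a, star (x : C) ∈ hereditaryClosedSpan a := by
    intro x
    have hx := x.2
    rw [← SetLike.mem_coe, hA] at hx ⊢
    refine map_mem_closure continuous_star hx ?_
    rintro _ ⟨u, rfl⟩
    exact ⟨star u, by simp only [star_mul, ha, mul_assoc]⟩
  refine ⟨f.toLinearEquiv, ?_, ?_⟩
  · intro x y z hz
    obtain rfl : z = ⟨_, hmul x y⟩ := Subtype.ext hz
    change (f ⟨_, hmul x y⟩ : C) = (f x : C) * (f y : C)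
    clear hz
    refine d1.induction_on₂ (p := fun x y => (f ⟨_, hmul x y⟩ : C) = (f x : C) * (f y : C))
      ?_ ?_ x y
    · exact isClosed_eq (by fun_prop) (by fun_prop)
    · intro u v
      have : (⟨_, hmul (e₁ u) (e₁ v)⟩ : hereditaryClosedSpan a) = e₁ (u * (a * a) * v) := by
        apply Subtype.ext
        change a * u * a * (a * v * a) = a * (u * (a * a) * v) * a
        simp only [mul_assoc]
      rw [this, hf, hf, hf]
      change d * (u * (a * a) * v) * star d = d * u * star d * (d * v * star d)
      rw [← hd]
      simp only [mul_assoc]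
  · intro x z hz
    obtain rfl : z = ⟨_, hstar x⟩ := Subtype.ext hz
    change (f ⟨_, hstar x⟩ : C) = star (f x : C)
    clear hz
    refine d1.induction_on (p := fun x => (f ⟨_, hstar x⟩ : C) = star (f x : C)) x ?_ ?_
    · exact isClosed_eq (by fun_prop) (by fun_prop)
    · intro u
      have : (⟨_, hstar (e₁ u)⟩ : hereditaryClosedSpan a) = e₁ (star u) := by
        apply Subtype.ext
        change star (a * u * a) = a * star u * a
        simp only [star_mul, ha, mul_assoc]
      rw [this, hf, hf]
      change d * star u * star d = star (d * u * star d)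
      simp only [star_mul, star_star, mul_assoc]
end

section
/- Let A and B be C*-algebras and φ : B → A a linear bijection such that both φ and φ⁻¹ are 2-positive (the induced maps φ ⊗ id₂ : M₂(B) → M₂(A) and φ⁻¹ ⊗ id₂ : M₂(A) → M₂(B) send positive elements to positive elements). Then φ is a complete order isomorphism: for every n ≥ 1, both φ ⊗ idₙ : Mₙ(B) → Mₙ(A) and φ⁻¹ ⊗ idₙ : Mₙ(A) → Mₙ(B) send positive elements to positive elements. -/
/-- The matrix `[p, z; z*, q]` is of the form `N* N`. -/
def P2 {A : Type*} [NonUnitalCStarAlgebra A] (p z q : A) : Prop :=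
  ∃ a b c d : A, p = star a * a + star c * c ∧ z = star a * b + star c * d ∧
    q = star b * b + star d * d

section aux

variable {A : Type*} [NonUnitalCStarAlgebra A] [PartialOrder A] [StarOrderedRing A]

lemma P2.lower {p z q : A} (h : P2 p z q) (u : A) :
    star u * z + star z * u - star u * p * u ≤ q := by
  obtain ⟨a, b, c, d, rfl, rfl, rfl⟩ := h
  rw [← sub_nonneg]
  have := add_nonneg (star_mul_self_nonneg (b - a * u)) (star_mul_self_nonneg (d - c * u))
  convert this using 1
  simp only [star_sub, star_mul, star_add, star_star, mul_add, add_mul, mul_sub, sub_mul,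
    mul_assoc]
  abel

lemma P2.nonneg_left {p z q : A} (h : P2 p z q) : 0 ≤ p := by
  obtain ⟨a, b, c, d, rfl, rfl, rfl⟩ := h
  exact add_nonneg (star_mul_self_nonneg _) (star_mul_self_nonneg _)

lemma P2.nonneg_right {p z q : A} (h : P2 p z q) : 0 ≤ q := by
  obtain ⟨a, b, c, d, rfl, rfl, rfl⟩ := h
  exact add_nonneg (star_mul_self_nonneg _) (star_mul_self_nonneg _)

lemma P2.mk_conj {a : A} (ha : 0 ≤ a) (y : A) : P2 a (a * y) (star y * a * y) := by
  obtain ⟨v, rfl⟩ := CStarAlgebra.nonneg_iff_eq_star_mul_self.mp ha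
  exact ⟨v, v * y, 0, 0, by simp, by simp [mul_assoc], by simp [mul_assoc]⟩

lemma P2.upper {p z q : A} (h : P2 p z q) : ∃ K : ℝ, 0 ≤ K ∧ z * star z ≤ K • p := by
  have hq := h.nonneg_right
  refine ⟨‖q‖ + 1, by positivity, ?_⟩
  have h1 : z * q * star z ≤ ‖q‖ • (z * star z) :=
    CStarAlgebra.star_right_conjugate_le_norm_smul (IsSelfAdjoint.of_nonneg hq)
  obtain ⟨a, b, c, d, hp, hz, hqq⟩ := h
  set K : ℝ := ‖q‖ + 1 with hK
  have hK0 : 0 < K := by positivity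
  have h2 : 0 ≤ (K * K) • p - K • (z * star z) - K • (z * star z) + z * q * star z := by
    have := add_nonneg (star_mul_self_nonneg (K • a - b * star z))
      (star_mul_self_nonneg (K • c - d * star z))
    convert this using 1
    have e1 : z * star z = star a * b * star z + star c * d * star z := by
      rw [hz]; simp only [add_mul]
    have e2 : z * star z = z * star b * a + z * star d * c := by
      conv_lhs => rw [hz]
      rw [star_add, star_mul, star_mul, star_star, star_star, mul_add, ← hz]
      simp only [mul_assoc]
    have e3 : K • (z * star z) + K • (z * star z) =
      K • (star a * b * star z + star c * d * star z) + K • (z * star b * a + z * star d * c) := by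
      rw [← e1, ← e2]
    rw [sub_sub, e3, hqq, hp]
    simp only [star_sub, star_mul, star_smul, star_star, mul_add, add_mul, mul_sub, sub_mul,
      mul_assoc, smul_add, smul_mul_assoc, mul_smul_comm, star_trivial]
    module
  have h3 : 0 ≤ (K * K) • p - K • (z * star z) := by
    have h4 : z * q * star z ≤ K • (z * star z) :=
      h1.trans (smul_le_smul_of_nonneg_right (by simp [hK]) (mul_star_self_nonneg z))
    calc (0 : A) ≤ _ := h2
      _ ≤ (K * K) • p - K • (z * star z) - K • (z * star z) + K • (z * star z) := by gcongr
      _ = _ := by abel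
  have h5 := smul_nonneg (inv_nonneg.mpr hK0.le) h3
  rw [smul_sub, smul_smul, smul_smul, inv_mul_cancel₀ hK0.ne', one_smul, ← mul_assoc,
    inv_mul_cancel₀ hK0.ne', one_mul, sub_nonneg] at h5
  exact h5

lemma exists_g {p : A} (hp : 0 ≤ p) {δ : ℝ} (hδ : 0 < δ) :
    ∃ g : A, IsSelfAdjoint g ∧ Commute g p ∧ g * p * g ≤ g ∧
      ‖p - p * g * p - p * (p * g) + p * g * p * (p * g)‖ ≤ 2 * δ := by
  have hsp : ∀ t ∈ quasispectrum ℝ p, 0 ≤ t := fun t ht => quasispectrum_nonneg_of_nonneg p hp t ht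
  obtain ⟨f, hfd⟩ : ∃ f : ℝ → ℝ, f = fun t => t / (|t| + δ) ^ 2 := ⟨_, rfl⟩
  have hne : ∀ t : ℝ, (|t| + δ) ^ 2 ≠ 0 := fun t => by positivity
  have hf : Continuous f := by
    rw [hfd]
    apply Continuous.div continuous_id (by fun_prop) hne
  have hf0 : f 0 = 0 := by simp [hfd]
  have hpsa : IsSelfAdjoint p := .of_nonneg hp
  have hid : cfcₙ (fun t : ℝ => t) p = p := cfcₙ_id' ℝ p
  have hfp : cfcₙ (fun t => t * f t) p = p * cfcₙ f p := by
    rw [cfcₙ_mul (fun t : ℝ => t) f p, hid]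
  have hpf : cfcₙ (fun t => f t * t) p = cfcₙ f p * p := by
    rw [cfcₙ_mul f (fun t : ℝ => t) p, hid]
  refine ⟨cfcₙ f p, IsSelfAdjoint.cfcₙ, ?_, ?_, ?_⟩
  · show _ = _
    rw [← hfp, ← hpf]; simp only [mul_comm]
  · rw [← hpf, ← cfcₙ_mul (fun t => f t * t) f p]
    refine cfcₙ_mono (fun t ht => ?_) (by fun_prop) (by fun_prop) (by simp [hf0]) hf0
    have h0 := hsp t ht
    simp only [hfd, abs_of_nonneg h0]
    rw [div_mul_eq_mul_div, div_mul_div_comm, div_le_div_iff₀ (by positivity) (by positivity)]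
    have : 0 ≤ t * (t + δ) ^ 2 * (2 * t * δ + δ ^ 2) := by positivity
    nlinarith
  · have e1 : cfcₙ (fun t => t * f t * t) p = p * cfcₙ f p * p := by
      rw [cfcₙ_mul (fun t => t * f t) (fun t : ℝ => t) p, hid, hfp]
    have e2 : cfcₙ (fun t => t * (t * f t)) p = p * (p * cfcₙ f p) := by
      rw [cfcₙ_mul (fun t : ℝ => t) (fun t => t * f t) p, hid, hfp]
    have e3 : cfcₙ (fun t => t * f t * t * (t * f t)) p = p * cfcₙ f p * p * (p * cfcₙ f p) := by
      rw [cfcₙ_mul (fun t => t * f t * t) (fun t => t * f t) p, e1, hfp]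
    have e4 : cfcₙ (fun t => t - t * f t * t - t * (t * f t) + t * f t * t * (t * f t)) p
        = p - p * cfcₙ f p * p - p * (p * cfcₙ f p)
          + p * cfcₙ f p * p * (p * cfcₙ f p) := by
      rw [cfcₙ_add (fun t => t - t * f t * t - t * (t * f t)) (fun t => t * f t * t * (t * f t)) p,
        cfcₙ_sub (fun t => t - t * f t * t) (fun t => t * (t * f t)) p,
        cfcₙ_sub (fun t => t) (fun t => t * f t * t) p, hid, e1, e2, e3]
    rw [← e4]
    apply norm_cfcₙ_le
    intro t ht
    have h0 := hsp t ht
    have hpos : 0 < t + δ := by positivity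
    have e5 : t - t * f t * t - t * (t * f t) + t * f t * t * (t * f t)
        = t * ((2 * t * δ + δ ^ 2) / (t + δ) ^ 2) ^ 2 := by
      simp only [hfd, abs_of_nonneg h0]
      field_simp
      ring
    rw [e5, Real.norm_of_nonneg (by positivity)]
    set r := (2 * t * δ + δ ^ 2) / (t + δ) ^ 2 with hr
    have hr0 : 0 ≤ r := by positivity
    have hr1 : r ≤ 1 := by
      rw [hr, div_le_one (by positivity)]; nlinarith
    have hr2 : t * r ≤ 2 * δ := by
      rw [hr, mul_div_assoc', div_le_iff₀ (by positivity)]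
      have : 0 ≤ δ * (3 * t * δ + 2 * δ ^ 2) := by positivity
      nlinarith
    calc t * r ^ 2 = (t * r) * r := by ring
      _ ≤ (t * r) * 1 := by gcongr
      _ ≤ 2 * δ := by linarith

lemma norm_sub_conj_le {p z g : A} {K δ : ℝ} (hg : IsSelfAdjoint g)
    (hc : Commute g p) (hp : 0 ≤ p) (hK : 0 ≤ K) (hz : z * star z ≤ K • p)
    (hn : ‖p - p * g * p - p * (p * g) + p * g * p * (p * g)‖ ≤ 2 * δ) :
    ‖z - p * (g * z)‖ ^ 2 ≤ K * (2 * δ) := by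
  have hpsa : star p = p := (IsSelfAdjoint.of_nonneg hp).star_eq
  have hgsa : star g = g := hg.star_eq
  obtain ⟨w, hw⟩ := CStarAlgebra.nonneg_iff_eq_star_mul_self.mp (sub_nonneg.mpr hz)
  set f := p * g with hf
  have hfs : star f = f := by rw [hf, star_mul, hpsa, hgsa, hc.eq]
  have h1 := star_mul_self_nonneg (w - w * f)
  have e1 : star (w - w * f) * (w - w * f)
      = K • (p - f * p - p * f + f * p * f) - (z - f * z) * star (z - f * z) := by
    have : star (w - w * f) * (w - w * f) =
      star w * w - f * (star w * w) - star w * w * f + f * (star w * w) * f := by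
      simp only [star_sub, star_mul, hfs, mul_sub, sub_mul, mul_assoc]; abel
    rw [this, ← hw]
    simp only [star_sub, star_mul, hfs, mul_sub, sub_mul, mul_assoc, smul_sub, smul_add,
      mul_smul_comm, smul_mul_assoc]
    abel
  rw [e1, sub_nonneg] at h1
  have h2 := CStarAlgebra.norm_le_norm_of_nonneg_of_le (mul_star_self_nonneg _) h1
  rw [CStarRing.norm_self_mul_star, norm_smul, Real.norm_of_nonneg hK] at h2
  rw [← mul_assoc, sq]
  exact h2.trans (by gcongr)

lemma conj_le {p z q g : A} (h : P2 p z q) (hg : IsSelfAdjoint g) (hgp : g * p * g ≤ g) :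
    star (g * z) * p * (g * z) ≤ q := by
  have h1 := h.lower (g * z)
  have hgs := hg.star_eq
  have h2 := star_left_conjugate_le_conjugate hgp z
  refine le_trans ?_ h1
  rw [← sub_nonneg] at h2 ⊢
  have h3 := add_nonneg h2 h2
  convert h3 using 1
  simp only [star_mul, hgs, mul_sub, sub_mul, mul_assoc]
  abel

end aux

section main

variable {A B : Type*} [NonUnitalCStarAlgebra A] [NonUnitalCStarAlgebra B]

lemma P2.map (φ : B ≃ₗ[ℂ] A)
    (h2 : ∀ M : Matrix (Fin 2) (Fin 2) B,
      (∃ N : Matrix (Fin 2) (Fin 2) B, M = star N * N) →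
      ∃ N' : Matrix (Fin 2) (Fin 2) A, M.map ⇑φ = star N' * N')
    {p z q : B} (h : P2 p z q) : P2 (φ p) (φ z) (φ q) := by
  obtain ⟨a, b, c, d, hp, hz, hq⟩ := h
  obtain ⟨N, hN⟩ := h2 !![p, z; star z, q] ⟨!![a, b; c, d], by
    ext i j
    fin_cases i <;> fin_cases j <;>
      simp [Matrix.mul_apply, Fin.sum_univ_two, Matrix.star_apply, hp, hz, hq]⟩
  have e := fun i j => congrFun (congrFun hN i) j
  refine ⟨N 0 0, N 0 1, N 1 0, N 1 1, ?_, ?_, ?_⟩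
  · simpa [Matrix.mul_apply, Fin.sum_univ_two, Matrix.star_apply] using e 0 0
  · simpa [Matrix.mul_apply, Fin.sum_univ_two, Matrix.star_apply] using e 0 1
  · simpa [Matrix.mul_apply, Fin.sum_univ_two, Matrix.star_apply] using e 1 1

variable [PartialOrder A] [StarOrderedRing A] [PartialOrder B] [StarOrderedRing B]

lemma map_nonneg_of_P2 (φ : B ≃ₗ[ℂ] A)
    (h2 : ∀ p z q : B, P2 p z q → P2 (φ p) (φ z) (φ q)) {b : B} (hb : 0 ≤ b) : 0 ≤ φ b := by
  have := h2 _ _ _ (P2.mk_conj hb 0)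
  exact this.nonneg_left

lemma bound_of_P2 (φ : B ≃ₗ[ℂ] A)
    (h2 : ∀ p z q : B, P2 p z q → P2 (φ p) (φ z) (φ q)) :
    ∃ C : ℝ, 0 ≤ C ∧ ∀ b, ‖φ b‖ ≤ C * ‖b‖ := by
  obtain ⟨C, hC⟩ := PositiveLinearMap.exists_norm_apply_le
    (PositiveLinearMap.mk₀ (φ : B →ₗ[ℂ] A) (fun b hb => map_nonneg_of_P2 φ h2 hb))
  exact ⟨C, C.2, hC⟩

lemma key_bound (φ : B ≃ₗ[ℂ] A)
    (h2 : ∀ p z q : B, P2 p z q → P2 (φ p) (φ z) (φ q))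
    (h2' : ∀ p z q : A, P2 p z q → P2 (φ.symm p) (φ.symm z) (φ.symm q))
    {a : B} (ha : 0 ≤ a) (y : B) {g : A} (hg : IsSelfAdjoint g)
    (hgp : g * φ a * g ≤ g) :
    ‖star y * a * y - φ.symm (star (g * φ (a * y)) * φ a * (g * φ (a * y)))‖ ≤
      2 * ‖y‖ * ‖φ.symm (φ (a * y) - φ a * (g * φ (a * y)))‖ := by
  have h := h2 _ _ _ (P2.mk_conj ha y)
  have hle := conj_le h hg hgp
  set u := g * φ (a * y) with hu
  have hpa : 0 ≤ φ a := h.nonneg_left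
  have h' := (h2' _ _ _ (P2.mk_conj hpa u)).lower y
  rw [LinearEquiv.symm_apply_apply] at h'
  have hle' : φ.symm (star u * φ a * u) ≤ star y * a * y := by
    have := map_nonneg_of_P2 φ.symm h2' (sub_nonneg.mpr hle)
    rwa [map_sub, LinearEquiv.symm_apply_apply, sub_nonneg] at this
  set s := φ.symm (φ a * u) with hs
  have e : φ.symm (φ (a * y) - φ a * u) = a * y - s := by
    rw [map_sub, LinearEquiv.symm_apply_apply]
  rw [e]
  have has : star a = a := (IsSelfAdjoint.of_nonneg ha).star_eq
  have h3 : star y * a * y - φ.symm (star u * φ a * u) ≤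
      star y * (a * y - s) + star (a * y - s) * y := by
    calc _ ≤ star y * a * y - (star y * s + star s * y - star y * a * y) := by gcongr
      _ = _ := by
        simp only [star_sub, star_mul, has, mul_sub, sub_mul, mul_assoc]; abel
  calc _ ≤ ‖star y * (a * y - s) + star (a * y - s) * y‖ :=
        CStarAlgebra.norm_le_norm_of_nonneg_of_le (sub_nonneg.mpr hle') h3
    _ ≤ ‖star y‖ * ‖a * y - s‖ + ‖star (a * y - s)‖ * ‖y‖ :=
        (norm_add_le _ _).trans (add_le_add (norm_mul_le _ _) (norm_mul_le _ _))
    _ = _ := by rw [norm_star, norm_star]; ring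

open Filter Topology

lemma polar {V W : Type*} [AddCommGroup V] [Module ℂ V] [NonUnitalCStarAlgebra W]
    (T : V →ₗ[ℂ] W) (c : W) (y y' : V) :
    star (T y) * c * T y' = (1 / 4 : ℂ) • (star (T (y + y')) * c * T (y + y')
        - star (T (y - y')) * c * T (y - y')
        - Complex.I • (star (T (y + Complex.I • y')) * c * T (y + Complex.I • y'))
        + Complex.I • (star (T (y - Complex.I • y')) * c * T (y - Complex.I • y'))) := by
  simp only [map_add, map_sub, map_smul, star_add, star_sub, star_smul, mul_add, add_mul,
    mul_sub, sub_mul, smul_mul_assoc, mul_smul_comm, smul_add, smul_sub, smul_smul,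
    Complex.star_def, Complex.conj_I]
  match_scalars <;> ring_nf <;> simp only [Complex.I_sq] <;> norm_num

lemma key_tendsto (φ : B ≃ₗ[ℂ] A)
    (h2 : ∀ p z q : B, P2 p z q → P2 (φ p) (φ z) (φ q))
    (h2' : ∀ p z q : A, P2 p z q → P2 (φ.symm p) (φ.symm z) (φ.symm q))
    {a : B} (ha : 0 ≤ a) : ∃ g : ℕ → A, ∀ y y' : B,
      Tendsto (fun m => star (g m * φ (a * y)) * φ a * (g m * φ (a * y'))) atTop
        (𝓝 (φ (star y * a * y'))) := by
  have hpa : 0 ≤ φ a := map_nonneg_of_P2 φ h2 ha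
  choose g hg hc hgp hn using fun m : ℕ =>
    exists_g hpa (δ := 1 / ((m : ℝ) + 1)) (by positivity)
  obtain ⟨C, hC0, hC⟩ := bound_of_P2 φ h2
  obtain ⟨D, hD0, hD⟩ := bound_of_P2 φ.symm h2'
  have diag : ∀ y : B,
      Tendsto (fun m => star (g m * φ (a * y)) * φ a * (g m * φ (a * y))) atTop
        (𝓝 (φ (star y * a * y))) := by
    intro y
    obtain ⟨K, hK0, hK⟩ := (h2 _ _ _ (P2.mk_conj ha y)).upper
    rw [tendsto_iff_norm_sub_tendsto_zero]
    have hlim : Tendsto (fun m : ℕ => C * (2 * ‖y‖ * (D * √(K * (2 * (1 / ((m : ℝ) + 1)))))))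
        atTop (𝓝 0) := by
      have h1 : Tendsto (fun m : ℕ => K * (2 * (1 / ((m : ℝ) + 1)))) atTop (𝓝 0) := by
        simpa using (tendsto_one_div_add_atTop_nhds_zero_nat (𝕜 := ℝ)).const_mul 2 |>.const_mul K
      have h3 := (Real.continuous_sqrt.tendsto 0).comp h1
      rw [Real.sqrt_zero] at h3
      simpa using (((h3.const_mul D).const_mul (2 * ‖y‖)).const_mul C)
    refine squeeze_zero (fun _ => norm_nonneg _) (fun m => ?_) hlim
    have h1 := key_bound φ h2 h2' ha y (hg m) (hgp m)
    have h3 := norm_sub_conj_le (hg m) (hc m) hpa hK0 hK (hn m)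
    have h4 := Real.le_sqrt_of_sq_le h3
    rw [norm_sub_rev]
    set S := star (g m * φ (a * y)) * φ a * (g m * φ (a * y)) with hS
    calc ‖φ (star y * a * y) - S‖ = ‖φ (star y * a * y - φ.symm S)‖ := by
          rw [map_sub, LinearEquiv.apply_symm_apply]
      _ ≤ C * ‖star y * a * y - φ.symm S‖ := hC _
      _ ≤ C * (2 * ‖y‖ * ‖φ.symm (φ (a * y) - φ a * (g m * φ (a * y)))‖) := by gcongr
      _ ≤ C * (2 * ‖y‖ * (D * ‖φ (a * y) - φ a * (g m * φ (a * y))‖)) := by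
          gcongr; exact hD _
      _ ≤ _ := by gcongr
  refine ⟨g, fun y y' => ?_⟩
  have h := ((((diag (y + y')).sub (diag (y - y'))).sub
    ((diag (y + Complex.I • y')).const_smul Complex.I)).add
    ((diag (y - Complex.I • y')).const_smul Complex.I)).const_smul (1 / 4 : ℂ)
  rw [← map_smul, ← map_smul, ← map_sub, ← map_sub, ← map_add, ← map_smul] at h
  have hid := polar (LinearMap.id : B →ₗ[ℂ] B) a y y'
  simp only [LinearMap.id_apply] at hid
  rw [hid]
  refine h.congr fun m => ?_
  exact (polar ((LinearMap.mulLeft ℂ (g m)) ∘ₗ (φ : B →ₗ[ℂ] A) ∘ₗ LinearMap.mulLeft ℂ a)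
    (φ a) y y').symm

lemma exists_of_nonneg {D : Type*} [NonUnitalCStarAlgebra D] [PartialOrder D] [StarOrderedRing D]
    {x : D} (hx : 0 ≤ x) : ∃ y, x = star y * y :=
  CStarAlgebra.nonneg_iff_eq_star_mul_self.mp hx

lemma psd_closed {n : ℕ} {ι : Type*} {l : Filter ι} [l.NeBot]
    {F : ι → Matrix (Fin n) (Fin n) A} {M : Matrix (Fin n) (Fin n) A}
    (hF : ∀ᶠ i in l, ∃ N : Matrix (Fin n) (Fin n) A, F i = star N * N)
    (hM : ∀ i j, Tendsto (fun k => F k i j) l (𝓝 (M i j))) :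
    ∃ N : Matrix (Fin n) (Fin n) A, M = star N * N := by
  have h1 : Tendsto (fun k => CStarMatrix.ofMatrix (F k)) l (𝓝 (CStarMatrix.ofMatrix M)) := by
    have : Tendsto F l (𝓝 M) := by
      exact tendsto_pi_nhds.mpr fun i => tendsto_pi_nhds.mpr (hM i)
    exact this
  have h2 : 0 ≤ CStarMatrix.ofMatrix M := by
    refine CStarAlgebra.isClosed_nonneg.mem_of_tendsto h1 ?_
    filter_upwards [hF] with i ⟨N, hN⟩
    have : CStarMatrix.ofMatrix (F i)
      = star (CStarMatrix.ofMatrix N) * CStarMatrix.ofMatrix N := by rw [hN]; rfl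
    show 0 ≤ CStarMatrix.ofMatrix (F i)
    rw [this]
    exact star_mul_self_nonneg _
  obtain ⟨N, hN⟩ := exists_of_nonneg h2
  exact ⟨CStarMatrix.ofMatrix.symm N, hN⟩

lemma one_direction (φ : B ≃ₗ[ℂ] A)
    (h2 : ∀ p z q : B, P2 p z q → P2 (φ p) (φ z) (φ q))
    (h2' : ∀ p z q : A, P2 p z q → P2 (φ.symm p) (φ.symm z) (φ.symm q))
    (n : ℕ) (N : Matrix (Fin n) (Fin n) B) :
    ∃ N' : Matrix (Fin n) (Fin n) A, (star N * N).map ⇑φ = star N' * N' := by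
  have hau := CStarAlgebra.increasingApproximateUnit B
  have := hau.neBot
  obtain ⟨C, hC0, hC⟩ := bound_of_P2 φ h2
  have hcont : Continuous φ := (LinearMap.mkContinuousOfExistsBound (φ : B →ₗ[ℂ] A)
    ⟨C, hC⟩).continuous
  refine psd_closed (l := CStarAlgebra.approximateUnit B)
    (F := fun e i j => φ (∑ k, star (N k i) * e * N k j)) ?_ ?_
  · filter_upwards [hau.eventually_nonneg] with a ha
    obtain ⟨g, hgt⟩ := key_tendsto φ h2 h2' ha
    obtain ⟨v, hv⟩ := CStarAlgebra.nonneg_iff_eq_star_mul_self.mp (map_nonneg_of_P2 φ h2 ha)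
    refine psd_closed (l := atTop) (F := fun m i j =>
      ∑ k, star (g m * φ (a * N k i)) * φ a * (g m * φ (a * N k j))) ?_ ?_
    · refine Eventually.of_forall fun m => ⟨Matrix.of fun k i => v * (g m * φ (a * N k i)), ?_⟩
      ext i j
      simp only [Matrix.mul_apply, Matrix.star_apply, Matrix.of_apply, hv]
      refine Finset.sum_congr rfl fun k _ => ?_
      simp only [star_mul, mul_assoc]
    · intro i j
      rw [map_sum]
      exact tendsto_finsetSum _ fun k _ => hgt _ _
  · intro i j
    simp only [Matrix.map_apply, Matrix.mul_apply, Matrix.star_apply]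
    refine (hcont.tendsto _).comp (tendsto_finsetSum _ fun k _ => ?_)
    simp only [mul_assoc]
    exact (hau.tendsto_mul_right _).const_mul _

end main

theorem stmt5 {A B : Type*} [NonUnitalCStarAlgebra A] [NonUnitalCStarAlgebra B]
    (φ : B ≃ₗ[ℂ] A)
    -- `φ` is 2-positive
    (h2 : ∀ M : Matrix (Fin 2) (Fin 2) B,
      (∃ N : Matrix (Fin 2) (Fin 2) B, M = star N * N) →
      ∃ N' : Matrix (Fin 2) (Fin 2) A, M.map ⇑φ = star N' * N')
    -- `φ⁻¹` is 2-positive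
    (h2' : ∀ M : Matrix (Fin 2) (Fin 2) A,
      (∃ N : Matrix (Fin 2) (Fin 2) A, M = star N * N) →
      ∃ N' : Matrix (Fin 2) (Fin 2) B, M.map ⇑φ.symm = star N' * N') :
    -- `φ` is a complete order isomorphism
    ∀ n : ℕ, 1 ≤ n →
      (∀ M : Matrix (Fin n) (Fin n) B,
        (∃ N : Matrix (Fin n) (Fin n) B, M = star N * N) →
        ∃ N' : Matrix (Fin n) (Fin n) A, M.map ⇑φ = star N' * N') ∧
      (∀ M : Matrix (Fin n) (Fin n) A,
        (∃ N : Matrix (Fin n) (Fin n) A, M = star N * N) →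
        ∃ N' : Matrix (Fin n) (Fin n) B, M.map ⇑φ.symm = star N' * N') := by
  intro n _
  let _ : PartialOrder A := CStarAlgebra.spectralOrder A
  have : StarOrderedRing A := CStarAlgebra.spectralOrderedRing A
  let _ : PartialOrder B := CStarAlgebra.spectralOrder B
  have : StarOrderedRing B := CStarAlgebra.spectralOrderedRing B
  have k : ∀ p z q : B, P2 p z q → P2 (φ p) (φ z) (φ q) := fun _ _ _ h => h.map φ h2
  have k' : ∀ p z q : A, P2 p z q → P2 (φ.symm p) (φ.symm z) (φ.symm q) :=
    fun _ _ _ h => h.map φ.symm h2'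
  constructor
  · rintro M ⟨N, rfl⟩
    exact one_direction φ k k' n N
  · rintro M ⟨N, rfl⟩
    exact one_direction φ.symm k' k n N
end

section
/- Let B be a σ-unital C*-algebra and A a C*-algebra. If there exists a complete order isomorphism φ : B → A (a linear bijection such that for every n ≥ 1 the entrywise maps φ ⊗ idₙ : Mₙ(B) → Mₙ(A) and φ⁻¹ ⊗ idₙ : Mₙ(A) → Mₙ(B) send positive elements to positive elements), then A and B are *-isomorphic as C*-algebras. -/
/-- `φ` and its inverse preserve positivity of `n × n` matrices. -/
def OrdIso {A B : Type*} [NonUnitalCStarAlgebra A] [NonUnitalCStarAlgebra B]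
    (φ : B ≃ₗ[ℂ] A) (n : ℕ) : Prop :=
  (∀ M : Matrix (Fin n) (Fin n) B,
    (∃ N : Matrix (Fin n) (Fin n) B, M = star N * N) →
    ∃ N' : Matrix (Fin n) (Fin n) A, M.map ⇑φ = star N' * N') ∧
  (∀ M : Matrix (Fin n) (Fin n) A,
    (∃ N : Matrix (Fin n) (Fin n) A, M = star N * N) →
    ∃ N' : Matrix (Fin n) (Fin n) B, M.map ⇑φ.symm = star N' * N')

theorem OrdIso.symm {A B : Type*} [NonUnitalCStarAlgebra A] [NonUnitalCStarAlgebra B]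
    {φ : B ≃ₗ[ℂ] A} {n : ℕ} (h : OrdIso φ n) : OrdIso φ.symm n :=
  ⟨h.2, h.1⟩

/-- The key computation: `z ↦ φ⁻¹ (φ z * a)` is a left module map (on products). -/
theorem leftmod_aux {A B : Type*} [NonUnitalCStarAlgebra A] [NonUnitalCStarAlgebra B]
    [PartialOrder B] [StarOrderedRing B]
    (φ : B ≃ₗ[ℂ] A) (h3 : OrdIso φ 3) (b u y d : B) (a : A) :
    d * φ.symm (φ (b * u * y) * a) = d * b * φ.symm (φ (u * y) * a) := by
  let R : Matrix (Fin 3) (Fin 3) B := !![star (b * u), star u, y; 0, 0, 0; 0, 0, 0]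
  obtain ⟨N, hN⟩ := h3.1 (star R * R) ⟨R, rfl⟩
  let N2 : Matrix (Fin 3) (Fin 3) A := Matrix.of fun i j => if j = 2 then N i j * a else N i j
  obtain ⟨K, hK⟩ := h3.2 (star N2 * N2) ⟨N2, rfl⟩
  have eN : ∀ i j, φ ((star R * R) i j) = (star N * N) i j := fun i j => by
    rw [← hN]; rfl
  have eK : ∀ i j, (star N2 * N2) i j = φ ((star K * K) i j) := fun i j => by
    rw [← hK]; simp
  have e2 : ∀ i, i ≠ 2 → (star N2 * N2) i 2 = (star N * N) i 2 * a := by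
    intro i hi
    simp [Matrix.mul_apply, N2, hi, Fin.sum_univ_three, add_mul, mul_assoc]
  have e1 : ∀ i j, i ≠ 2 → j ≠ 2 → (star N2 * N2) i j = (star N * N) i j := by
    intro i j hi hj
    simp [Matrix.mul_apply, N2, hi, hj]
  have k1 : ∀ i j, i ≠ 2 → j ≠ 2 → (star K * K) i j = (star R * R) i j := by
    intro i j hi hj
    apply φ.injective
    rw [← eK, e1 i j hi hj, eN]
  have k2 : ∀ i, i ≠ 2 → (star K * K) i 2 = φ.symm (φ ((star R * R) i 2) * a) := by
    intro i hi
    apply φ.injective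
    rw [← eK, e2 i hi, eN]; simp
  have q00 := k1 0 0 (by decide) (by decide)
  have q01 := k1 0 1 (by decide) (by decide)
  have q10 := k1 1 0 (by decide) (by decide)
  have q11 := k1 1 1 (by decide) (by decide)
  have q02 := k2 0 (by decide)
  have q12 := k2 1 (by decide)
  simp [Matrix.mul_apply, Fin.sum_univ_three, R] at q00 q01 q10 q11 q02 q12
  let v : Fin 3 → B := fun k => K k 0 * star d - K k 1 * star (d * b)
  have hv : star (v 0) * v 0 + star (v 1) * v 1 + star (v 2) * v 2 = 0 := by
    have : star (v 0) * v 0 + star (v 1) * v 1 + star (v 2) * v 2 =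
      d * (star (K 0 0) * K 0 0 + star (K 1 0) * K 1 0 + star (K 2 0) * K 2 0) * star d
      - d * (star (K 0 0) * K 0 1 + star (K 1 0) * K 1 1 + star (K 2 0) * K 2 1) * star (d * b)
      - d * b * (star (K 0 1) * K 0 0 + star (K 1 1) * K 1 0 + star (K 2 1) * K 2 0) * star d
      + d * b * (star (K 0 1) * K 0 1 + star (K 1 1) * K 1 1 + star (K 2 1) * K 2 1)
          * star (d * b) := by
      simp only [v, star_sub, star_mul, star_star]
      noncomm_ring
    rw [this, q00, q01, q10, q11]
    simp only [star_mul]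
    noncomm_ring
  have hnn : ∀ k, 0 ≤ star (v k) * v k := fun k => star_mul_self_nonneg _
  have hz : ∀ k, v k = 0 := by
    have h01 := add_nonneg (hnn 0) (hnn 1)
    obtain ⟨h, h2⟩ := (add_eq_zero_iff_of_nonneg h01 (hnn 2)).1 hv
    obtain ⟨h0, h1⟩ := (add_eq_zero_iff_of_nonneg (hnn 0) (hnn 1)).1 h
    intro k
    apply (CStarRing.star_mul_self_eq_zero_iff _).1
    fin_cases k <;> assumption
  have fin : star (v 0) * K 0 2 + star (v 1) * K 1 2 + star (v 2) * K 2 2 = 0 := by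
    simp [hz]
  have : star (v 0) * K 0 2 + star (v 1) * K 1 2 + star (v 2) * K 2 2 =
      d * (star (K 0 0) * K 0 2 + star (K 1 0) * K 1 2 + star (K 2 0) * K 2 2)
      - d * b * (star (K 0 1) * K 0 2 + star (K 1 1) * K 1 2 + star (K 2 1) * K 2 2) := by
    simp only [v, star_sub, star_mul, star_star]
    noncomm_ring
  rw [this, q02, q12] at fin
  exact sub_eq_zero.1 fin

theorem leftmod {A B : Type*} [NonUnitalCStarAlgebra A] [NonUnitalCStarAlgebra B]
    [PartialOrder B] [StarOrderedRing B]
    (φ : B ≃ₗ[ℂ] A) (h3 : OrdIso φ 3) (b z : B) (a : A) :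
    φ.symm (φ (b * z) * a) = b * φ.symm (φ z * a) := by
  have hz : z ∈ Submodule.span ℂ {x : B | 0 ≤ x} := by
    rw [CStarAlgebra.span_nonneg]; trivial
  induction hz using Submodule.span_induction with
  | mem x hx =>
    obtain ⟨w, rfl⟩ := CStarAlgebra.nonneg_iff_eq_star_mul_self.1 hx
    have key := fun d => leftmod_aux φ h3 b (star w) w d a
    have := key (star (φ.symm (φ (b * star w * w) * a) - b * φ.symm (φ (star w * w) * a)))
    rw [mul_assoc (star _) b, ← sub_eq_zero, ← mul_sub, CStarRing.star_mul_self_eq_zero_iff,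
      sub_eq_zero, mul_assoc b] at this
    exact this
  | zero => simp
  | add x y _ _ hx hy => simp [mul_add, add_mul, hx, hy]
  | smul c x _ hx => simp [mul_smul_comm, smul_mul_assoc, hx]

section
variable {A B : Type*} [NonUnitalCStarAlgebra A] [NonUnitalCStarAlgebra B]
  [PartialOrder B] [StarOrderedRing B] [PartialOrder A] [StarOrderedRing A]

theorem OrdIso.nonneg {φ : B ≃ₗ[ℂ] A} (h : OrdIso φ 1) (x : B) (hx : 0 ≤ x) : 0 ≤ φ x := by
  obtain ⟨w, rfl⟩ := CStarAlgebra.nonneg_iff_eq_star_mul_self.1 hx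
  obtain ⟨N, hN⟩ := h.1 _ ⟨Matrix.of fun _ _ => w, rfl⟩
  have := congrFun (congrFun hN 0) 0
  simp [Matrix.mul_apply] at this
  rw [this]
  exact star_mul_self_nonneg _

theorem OrdIso.bdd {φ : B ≃ₗ[ℂ] A} (h : OrdIso φ 1) : ∃ C : ℝ, 0 ≤ C ∧ ∀ b, ‖φ b‖ ≤ C * ‖b‖ := by
  obtain ⟨C, hC⟩ := PositiveLinearMap.exists_norm_apply_le
    (PositiveLinearMap.mk₀ φ.toLinearMap h.nonneg)
  exact ⟨C, C.2, hC⟩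

theorem OrdIso.cont {φ : B ≃ₗ[ℂ] A} (h : OrdIso φ 1) : Continuous φ := by
  obtain ⟨C, -, hC⟩ := h.bdd
  exact (LinearMap.mkContinuousOfExistsBound φ.toLinearMap ⟨C, hC⟩).continuous

theorem OrdIso.map_star {φ : B ≃ₗ[ℂ] A} (h : OrdIso φ 1) (b : B) : φ (star b) = star (φ b) := by
  have hz : b ∈ Submodule.span ℂ {x : B | 0 ≤ x} := by
    rw [CStarAlgebra.span_nonneg]; trivial
  induction hz using Submodule.span_induction with
  | mem x hx =>
    rw [(IsSelfAdjoint.of_nonneg hx).star_eq,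
      (IsSelfAdjoint.of_nonneg (h.nonneg x hx)).star_eq]
  | zero => simp
  | add x y _ _ hx hy => simp [hx, hy]
  | smul c x _ hx => simp [hx]

theorem rightmod (φ : B ≃ₗ[ℂ] A) (h1 : OrdIso φ 1) (h3 : OrdIso φ 3) (b z : B) (a : A) :
    φ.symm (a * φ (z * b)) = φ.symm (a * φ z) * b := by
  have := congrArg star (leftmod φ h3 (star b) (star z) (star a))
  rw [← star_mul z b, h1.map_star] at this
  simpa [h1.map_star, ← h1.symm.map_star] using this

/-- `φ⁻¹(φ(e)²) ≤ C e²`. -/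
theorem phi_sq_le (φ : B ≃ₗ[ℂ] A) (h1 : OrdIso φ 1) (h3 : OrdIso φ 3) (e : B) (he : 0 ≤ e) :
    ∃ C : ℝ, 0 ≤ C ∧ φ.symm (φ e * φ e) ≤ C • (e * e) := by
  obtain ⟨C, hC0, hC⟩ := h1.bdd
  obtain ⟨D, hD0, hD⟩ := h1.symm.bdd
  refine ⟨D * (C * C), by positivity, ?_⟩
  have hu := CStarAlgebra.increasingApproximateUnit B
  have : (CStarAlgebra.approximateUnit B).NeBot := inferInstance
  have hlim : Filter.Tendsto (fun u => φ.symm (φ (e * u) * φ (u * e)))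
      (CStarAlgebra.approximateUnit B) (nhds (φ.symm (φ e * φ e))) := by
    refine (h1.symm.cont.tendsto _).comp (Filter.Tendsto.mul ?_ ?_)
    · exact (h1.cont.tendsto _).comp (hu.tendsto_mul_left e)
    · exact (h1.cont.tendsto _).comp (hu.tendsto_mul_right e)
  refine le_of_tendsto hlim ?_
  filter_upwards [hu.eventually_nonneg, hu.eventually_norm] with u hu0 hu1
  rw [rightmod φ h1 h3, leftmod φ h3]
  have hs : IsSelfAdjoint (φ.symm (φ u * φ u)) := by
    rw [IsSelfAdjoint, ← h1.symm.map_star, star_mul, ← h1.map_star,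
      (IsSelfAdjoint.of_nonneg hu0).star_eq]
  have hn : ‖φ.symm (φ u * φ u)‖ ≤ D * (C * C) := by
    refine (hD _).trans ?_
    gcongr
    refine (norm_mul_le _ _).trans ?_
    have : ‖φ u‖ ≤ C := (hC u).trans (mul_le_of_le_one_right hC0 hu1)
    gcongr
  have hes : star e = e := (IsSelfAdjoint.of_nonneg he).star_eq
  have h := CStarAlgebra.star_left_conjugate_le_norm_smul (a := e) (b := φ.symm (φ u * φ u)) hs
  rw [hes] at h
  refine h.trans ?_
  have hee : 0 ≤ e * e := by
    have := star_mul_self_nonneg e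
    rwa [hes] at this
  exact smul_le_smul_of_nonneg_right hn hee

/-- comparison of compressions -/
theorem compress_le (s e : B) (hs : 0 ≤ s) (he : 0 ≤ e) (C : ℝ) (hC : 0 ≤ C)
    (h : s * s ≤ C • (e * e)) (b : B) : ‖s * b * s‖ ≤ C * ‖e * b * e‖ := by
  have hss : star s = s := (IsSelfAdjoint.of_nonneg hs).star_eq
  have hes : star e = e := (IsSelfAdjoint.of_nonneg he).star_eq
  have step : ∀ x : B, ‖s * x‖ * ‖s * x‖ ≤ C * (‖e * x‖ * ‖e * x‖) := by
    intro x
    rw [← CStarRing.norm_star_mul_self, ← CStarRing.norm_star_mul_self]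
    have := star_left_conjugate_le_conjugate h x
    have h2 := CStarAlgebra.norm_le_norm_of_nonneg_of_le (a := star x * (s * s) * x) ?_ this
    · rw [mul_smul_comm, smul_mul_assoc, norm_smul, Real.norm_of_nonneg hC] at h2
      simpa [star_mul, hss, hes, mul_assoc] using h2
    · have := star_mul_self_nonneg (s * x)
      simpa [star_mul, hss, mul_assoc] using this
  have nstar : ∀ x y z : B, ‖x * y * z‖ = ‖star z * (star y * star x)‖ := by
    intro x y z
    rw [← norm_star]; simp
  have a1 := step (b * s)
  have a2 := step (star b * e)
  have e1 : ‖e * (b * s)‖ = ‖s * (star b * e)‖ := by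
    rw [← mul_assoc, nstar, hss, hes]
  have e2 : ‖e * (star b * e)‖ = ‖e * b * e‖ := by
    rw [nstar, hes]
  rw [e1] at a1
  rw [e2] at a2
  have : ‖s * b * s‖ ^ 2 ≤ (C * ‖e * b * e‖) ^ 2 := by
    rw [mul_assoc s]
    nlinarith [mul_le_mul_of_nonneg_left a2 hC]
  exact (pow_le_pow_iff_left₀ (norm_nonneg _) (by positivity) two_ne_zero).1 this

theorem dense_of_sq (s : B) (h : DenseRange fun b => s * s * b) : DenseRange fun b => s * b := by
  refine Dense.mono ?_ h
  rintro _ ⟨b, rfl⟩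
  exact ⟨s * b, by simp [mul_assoc]⟩

theorem dense_conj (s : B) (hs : 0 ≤ s) (h : DenseRange fun b => s * b) :
    DenseRange fun b => s * b * s := by
  have hss : star s = s := (IsSelfAdjoint.of_nonneg hs).star_eq
  have hst : DenseRange (star : B → B) := (star_involutive (R := B)).surjective.denseRange
  have hr : DenseRange fun b : B => b * s := by
    have := hst.comp (h.comp hst (by fun_prop)) continuous_star
    convert this using 2 with b
    simp [hss]
  have := h.comp hr (by fun_prop)
  convert this using 2 with b
  simp [mul_assoc]

theorem main_ord (φ : B ≃ₗ[ℂ] A) (h1 : OrdIso φ 1) (h3 : OrdIso φ 3) (e : B) (he : 0 ≤ e)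
    (hd : DenseRange fun b => e * b) : Nonempty (B ≃⋆ₐ[ℂ] A) := by
  have hes : star e = e := (IsSelfAdjoint.of_nonneg he).star_eq
  set f := φ e with hf
  have hf0 : 0 ≤ f := h1.nonneg e he
  have hfs : star f = f := (IsSelfAdjoint.of_nonneg hf0).star_eq
  set k := φ.symm (f * f) with hk
  have hff : 0 ≤ f * f := by
    have := star_mul_self_nonneg f
    rwa [hfs] at this
  have hk0 : 0 ≤ k := h1.symm.nonneg _ hff
  set s := CFC.sqrt k with hsdef
  have hs0 : 0 ≤ s := CFC.sqrt_nonneg k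
  have hss : s * s = k := CFC.sqrt_mul_sqrt_self k hk0
  have hsst : star s = s := (IsSelfAdjoint.of_nonneg hs0).star_eq
  have hφd : DenseRange φ := φ.surjective.denseRange
  have hφsd : DenseRange φ.symm := φ.symm.surjective.denseRange
  -- `f` has dense range
  have hfd : DenseRange fun a => f * a := by
    set g := CFC.sqrt f
    have hgg : g * g = f := CFC.sqrt_mul_sqrt_self f hf0
    have hgd : DenseRange fun a => g * a := by
      refine Dense.mono ?_ (hφd.comp hd h1.cont)
      rintro _ ⟨b, rfl⟩
      refine ⟨φ (φ.symm g * b), ?_⟩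
      have := leftmod φ.symm h3.symm g g b
      simp only [hgg, LinearEquiv.symm_symm] at this
      simp [← this, hf]
    have := hgd.comp hgd (by fun_prop)
    convert this using 2 with b
    simp [← hgg, mul_assoc]
  have hkd : DenseRange fun b => k * b := by
    have := hφsd.comp (hfd.comp (hφd.comp hd h1.cont) (by fun_prop)) h1.symm.cont
    convert this using 2 with b
    simp [rightmod φ h1 h3, hk, hf]
  have hsd : DenseRange fun b => s * b := dense_of_sq s (by rw [hss]; exact hkd)
  obtain ⟨C1, hC1, hle1⟩ := phi_sq_le φ h1 h3 e he
  obtain ⟨C2, hC2, hle2⟩ := phi_sq_le φ.symm h1.symm h3.symm f hf0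
  have hle1' : s * s ≤ C1 • (e * e) := by rw [hss]; exact hle1
  have hle2' : e * e ≤ C2 • (s * s) := by
    rw [hss]
    have h0 := h1.symm.nonneg _ (sub_nonneg.2 hle2)
    rw [map_sub, sub_nonneg] at h0
    have hsm : φ.symm (C2 • (f * f)) = C2 • k := by
      rw [hk, ← Complex.coe_smul, ← Complex.coe_smul, map_smul]
    rw [hsm] at h0
    simpa [hf] using h0
  obtain ⟨D1, hD1, hb1⟩ := h1.bdd
  obtain ⟨D2, hD2, hb2⟩ := h1.symm.bdd
  let P : B →ₗ[ℂ] B :=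
    { toFun := fun b => s * b * s
      map_add' := fun x y => by simp [mul_add, add_mul]
      map_smul' := fun c x => by simp [mul_smul_comm, smul_mul_assoc] }
  let Q : B →ₗ[ℂ] A :=
    { toFun := fun b => φ (e * b * e)
      map_add' := fun x y => by simp [mul_add, add_mul]
      map_smul' := fun c x => by simp [mul_smul_comm, smul_mul_assoc] }
  have hP : DenseRange P := dense_conj s hs0 hsd
  have hQ : DenseRange Q := hφd.comp (dense_conj e he hd) h1.cont
  have n1 : ∃ C, ∀ x, ‖Q (LinearEquiv.refl ℂ B x)‖ ≤ C * ‖P x‖ := by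
    refine ⟨D1 * C2, fun x => ?_⟩
    rw [mul_assoc]
    refine (hb1 _).trans ?_
    gcongr
    exact compress_le e s he hs0 C2 hC2 hle2' x
  have n2 : ∃ C, ∀ x, ‖P ((LinearEquiv.refl ℂ B).symm x)‖ ≤ C * ‖Q x‖ := by
    refine ⟨C1 * D2, fun x => ?_⟩
    rw [mul_assoc]
    refine (compress_le s e hs0 he C1 hC1 hle1' x).trans ?_
    gcongr
    simpa [Q] using hb2 (Q x)
  let θ : B ≃L[ℂ] A := (LinearEquiv.refl ℂ B).extend P Q hP n1 hQ n2
  have hθ : ∀ b, θ (P b) = Q b := fun b => LinearEquiv.extend_eq (LinearEquiv.refl ℂ B) P Q hP n1 hQ n2 b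
  have hPm : ∀ x y, P x * P y = P (x * k * y) := fun x y => by
    simp [P, ← hss, mul_assoc]
  have hQm : ∀ x y, Q x * Q y = Q (x * k * y) := fun x y => by
    apply φ.symm.injective
    have : φ.symm (φ (e * x * e) * φ (e * y * e)) = e * x * (k * (y * e)) := by
      rw [leftmod φ h3, mul_assoc e y, rightmod φ h1 h3]
    simpa [Q, mul_assoc] using this
  have hPs : ∀ x, star (P x) = P (star x) := fun x => by
    simp [P, hsst, mul_assoc]
  have hQs : ∀ x, star (Q x) = Q (star x) := fun x => by
    simp [Q, ← h1.map_star, hes, mul_assoc]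
  refine ⟨{ toFun := θ, invFun := θ.symm, left_inv := θ.left_inv, right_inv := θ.right_inv,
            map_mul' := ?_, map_add' := map_add θ, map_star' := ?_, map_smul' := map_smul θ }⟩
  · intro x y
    refine hP.induction_on₂ (p := fun x y => θ (x * y) = θ x * θ y) ?_ ?_ x y
    · exact isClosed_eq (by fun_prop) (by fun_prop)
    · intro x y
      rw [hPm, hθ, hθ, hθ, hQm]
  · intro x
    refine hP.induction_on (p := fun x => θ (star x) = star (θ x)) x ?_ ?_
    · exact isClosed_eq (by fun_prop) (by fun_prop)
    · intro x
      rw [hPs, hθ, hθ, hQs]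

end

theorem stmt6 {A B : Type*} [NonUnitalCStarAlgebra A] [NonUnitalCStarAlgebra B]
    -- `B` is σ-unital
    (hσ : ∃ e : B, (∃ f : B, e = star f * f) ∧ Dense (Set.range fun b : B => e * b))
    -- `φ` is a complete order isomorphism from `B` onto `A`
    (φ : B ≃ₗ[ℂ] A)
    (hn : ∀ n : ℕ, 1 ≤ n →
      (∀ M : Matrix (Fin n) (Fin n) B,
        (∃ N : Matrix (Fin n) (Fin n) B, M = star N * N) →
        ∃ N' : Matrix (Fin n) (Fin n) A, M.map ⇑φ = star N' * N') ∧
      (∀ M : Matrix (Fin n) (Fin n) A,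
        (∃ N : Matrix (Fin n) (Fin n) A, M = star N * N) →
        ∃ N' : Matrix (Fin n) (Fin n) B, M.map ⇑φ.symm = star N' * N')) :
    -- `A` and `B` are ⋆-isomorphic
    Nonempty (B ≃⋆ₐ[ℂ] A) := by
  obtain ⟨e, ⟨f, hf⟩, hd⟩ := hσ
  let _ : PartialOrder A := CStarAlgebra.spectralOrder A
  let _ : StarOrderedRing A := CStarAlgebra.spectralOrderedRing A
  let _ : PartialOrder B := CStarAlgebra.spectralOrder B
  let _ : StarOrderedRing B := CStarAlgebra.spectralOrderedRing B
  exact main_ord φ (hn 1 le_rfl) (hn 3 (by norm_num)) e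
    (by rw [hf]; exact star_mul_self_nonneg f) hd
end

section
/- Let B be a σ-unital C*-algebra and A a C*-algebra. If there exists an order isomorphism φ : B → A (a linear bijection with φ(B₊) = A₊, where B₊ and A₊ are the cones of positive elements), then there exists a Jordan isomorphism ψ : B → A, that is, a linear bijection satisfying ψ(x*) = ψ(x)* and ψ((xy + yx)/2) = (ψ(x)ψ(y) + ψ(y)ψ(x))/2 for all x, y ∈ B. -/
theorem kad_sum {D E : Type*} [CStarAlgebra D] [CStarAlgebra E]
    (Ψ : D →ₗ[ℂ] E) (c : D) (y z : E) (n : ℕ) :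
    ∑ i ∈ Finset.range (n + 1),
      star ((n : ℝ) • y + (i : ℝ) • z) * Ψ (Polynomial.aeval c (bernsteinPolynomial ℝ n i)) *
        ((n : ℝ) • y + (i : ℝ) • z) =
    ((n : ℝ) ^ 2) • (star y * Ψ 1 * y + star y * Ψ c * z + star z * Ψ c * y
      + star z * Ψ (c * c) * z) + (n : ℝ) • (star z * Ψ (c - c * c) * z) := by
  set p : ℕ → D := fun i => Polynomial.aeval c (bernsteinPolynomial ℝ n i) with hp
  have S0 : ∑ i ∈ Finset.range (n + 1), Ψ (p i) = Ψ 1 := by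
    rw [← map_sum, hp, ← map_sum, bernsteinPolynomial.sum, map_one]
  have S1 : ∑ i ∈ Finset.range (n + 1), i • Ψ (p i) = n • Ψ c := by
    have := congrArg (fun q => Ψ (Polynomial.aeval c q)) (bernsteinPolynomial.sum_smul ℝ n)
    simpa only [map_sum, map_nsmul, Polynomial.aeval_X] using this
  have S2 : ∑ i ∈ Finset.range (n + 1), (i * (i - 1)) • Ψ (p i) = (n * (n - 1)) • Ψ (c * c) := by
    have := congrArg (fun q => Ψ (Polynomial.aeval c q)) (bernsteinPolynomial.sum_mul_smul ℝ n)
    simpa only [map_sum, map_nsmul, pow_two, map_mul, Polynomial.aeval_X] using this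
  have nn : ∀ k : ℕ, ((k * (k - 1) : ℕ) : ℝ) = (k : ℝ) ^ 2 - k := by
    intro k; cases k with
    | zero => simp
    | succ k => push_cast [Nat.add_sub_cancel]; ring
  simp only [← Nat.cast_smul_eq_nsmul ℝ, nn] at S1 S2
  have S3 : ∑ i ∈ Finset.range (n + 1), ((i : ℝ) ^ 2) • Ψ (p i)
      = ((n : ℝ) ^ 2) • Ψ (c * c) + (n : ℝ) • Ψ (c - c * c) := by
    simp only [sub_smul, Finset.sum_sub_distrib, S1] at S2
    rw [sub_eq_iff_eq_add] at S2
    rw [S2, map_sub, smul_sub]; abel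
  have T : ∀ i : ℕ, star ((n : ℝ) • y + (i : ℝ) • z) * Ψ (p i) * ((n : ℝ) • y + (i : ℝ) • z)
      = ((n : ℝ) ^ 2) • (star y * Ψ (p i) * y) + (n : ℝ) • (star y * ((i : ℝ) • Ψ (p i)) * z)
       + (n : ℝ) • (star z * ((i : ℝ) • Ψ (p i)) * y) + star z * (((i : ℝ) ^ 2) • Ψ (p i)) * z := by
    intro i
    simp only [star_add, star_smul, star_trivial, add_mul, mul_add, smul_mul_assoc, mul_smul_comm,
      smul_smul, smul_add]
    rw [mul_comm (i : ℝ) n, pow_two, pow_two]; abel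
  rw [Finset.sum_congr rfl (fun i _ => T i)]
  simp only [Finset.sum_add_distrib, ← Finset.smul_sum, ← Finset.sum_mul, ← Finset.mul_sum, S0,
    S1, S3]
  simp only [add_mul, mul_add, smul_mul_assoc, mul_smul_comm, smul_smul, smul_add, pow_two]
  abel

theorem bern_nonneg {D : Type*} [CStarAlgebra D] [PartialOrder D] [StarOrderedRing D]
    (c : D) (h0 : 0 ≤ c) (h1 : c ≤ 1) (n i : ℕ) :
    0 ≤ Polynomial.aeval c (bernsteinPolynomial ℝ n i) := by
  have hsa : IsSelfAdjoint c := .of_nonneg h0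
  rw [← cfc_polynomial _ c]
  apply cfc_nonneg
  intro x hx
  have hx0 : 0 ≤ x := spectrum_nonneg_of_nonneg h0 hx
  have hx1 : x ≤ 1 := by
    have := (CFC.le_one_iff (R := ℝ) c).1 h1
    exact this x hx
  simp only [bernsteinPolynomial, Polynomial.eval_mul, Polynomial.eval_pow, Polynomial.eval_X,
    Polynomial.eval_sub, Polynomial.eval_one, Polynomial.eval_natCast]
  have : 0 ≤ 1 - x := by linarith
  positivity

theorem kad1 {D E : Type*} [CStarAlgebra D] [PartialOrder D] [StarOrderedRing D]
    [CStarAlgebra E] [PartialOrder E] [StarOrderedRing E]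
    (Ψ : D →ₗ[ℂ] E) (hΨ : ∀ d, 0 ≤ d → 0 ≤ Ψ d) (c : D) (h0 : 0 ≤ c) (h1 : c ≤ 1) (y z : E) :
    0 ≤ star y * Ψ 1 * y + star y * Ψ c * z + star z * Ψ c * y + star z * Ψ (c * c) * z := by
  set X := star y * Ψ 1 * y + star y * Ψ c * z + star z * Ψ c * y + star z * Ψ (c * c) * z with hX
  set Y := star z * Ψ (c - c * c) * z with hY
  have key : ∀ n : ℕ, 0 ≤ X + ((n : ℝ) + 1)⁻¹ • Y := by
    intro n
    have h := kad_sum Ψ c y z (n + 1)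
    rw [← hX, ← hY] at h
    have h2 : 0 ≤ (((n + 1 : ℕ) : ℝ) ^ 2) • X + ((n + 1 : ℕ) : ℝ) • Y := by
      rw [← h]
      apply Finset.sum_nonneg
      intro i _
      exact star_left_conjugate_nonneg (hΨ _ (bern_nonneg c h0 h1 _ _)) _
    have h3 := smul_nonneg (inv_nonneg.2 (sq_nonneg ((n + 1 : ℕ) : ℝ))) h2
    have hn : ((n : ℝ) + 1) ≠ 0 := by positivity
    convert h3 using 1
    rw [smul_add, smul_smul, smul_smul]
    congr 1
    · push_cast; rw [inv_mul_cancel₀ (by positivity), one_smul]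
    · push_cast; congr 1; field_simp
  have lim : Filter.Tendsto (fun n : ℕ => X + ((n : ℝ) + 1)⁻¹ • Y) Filter.atTop (nhds X) := by
    have : Filter.Tendsto (fun n : ℕ => ((n : ℝ) + 1)⁻¹) Filter.atTop (nhds 0) := by
      simpa [one_div] using tendsto_one_div_add_atTop_nhds_zero_nat (𝕜 := ℝ)
    simpa using (tendsto_const_nhds (x := X)).add (this.smul_const Y)
  exact ge_of_tendsto' lim key

theorem kadison {D E : Type*} [CStarAlgebra D] [PartialOrder D] [StarOrderedRing D]
    [CStarAlgebra E] [PartialOrder E] [StarOrderedRing E]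
    (Ψ : D →ₗ[ℂ] E) (hΨ : ∀ d, 0 ≤ d → 0 ≤ Ψ d) (c : D) (h0 : 0 ≤ c) (y z : E) :
    0 ≤ star y * Ψ 1 * y + star y * Ψ c * z + star z * Ψ c * y + star z * Ψ (c * c) * z := by
  set L : ℝ := ‖c‖ + 1
  have hL : 0 < L := by positivity
  have h1 : L⁻¹ • c ≤ 1 := by
    have : c ≤ L • (1 : D) := by
      have h := IsSelfAdjoint.le_algebraMap_norm_self (a := c) (.of_nonneg h0)
      rw [Algebra.algebraMap_eq_smul_one] at h
      exact h.trans (smul_le_smul_of_nonneg_right (by simp [L]) zero_le_one)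
    calc L⁻¹ • c ≤ L⁻¹ • (L • (1 : D)) := smul_le_smul_of_nonneg_left this (by positivity)
      _ = 1 := by rw [smul_smul, inv_mul_cancel₀ hL.ne', one_smul]
  have h := kad1 Ψ hΨ (L⁻¹ • c) (smul_nonneg (by positivity) h0) h1 y (L • z)
  have e : ∀ (t : ℝ) d, Ψ (t • d) = t • Ψ d := fun t d => by
    rw [← Complex.coe_smul, map_smul, Complex.coe_smul]
  convert h using 1
  simp only [smul_mul_assoc, mul_smul_comm, e, star_smul, star_trivial, smul_smul]
  have a1 : L * L⁻¹ = 1 := mul_inv_cancel₀ hL.ne'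
  have a3 : L⁻¹ * L = 1 := inv_mul_cancel₀ hL.ne'
  have a2 : L * (L⁻¹ * L⁻¹ * L) = 1 := by field_simp
  simp [a1, a2, a3]

structure Pack {D : Type*} [CStarAlgebra D] [PartialOrder D] [StarOrderedRing D]
    (r : D) (ε : ℝ) (R s h S : D) : Prop where
  R0 : 0 ≤ R
  s0 : 0 ≤ s
  h0 : 0 ≤ h
  S0 : 0 ≤ S
  RR : R * R = r
  ss : s * s = S
  Rs : R * s = h
  sR : s * R = h
  hh1 : h * h ≤ 1
  app : (1 - h) * r * (1 - h) ≤ ε • 1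
  SrS : S * r * S ≤ S
  srs : s * r * s ≤ 1
  Sε : S ≤ ε⁻¹ • 1
  hhr : (‖r‖ + ε)⁻¹ • r ≤ h * h
  Sr : (‖r‖ + ε)⁻¹ • 1 ≤ S

theorem exists_pack {D : Type*} [CStarAlgebra D] [PartialOrder D] [StarOrderedRing D]
    (r : D) (hr : 0 ≤ r) (ε : ℝ) (hε : 0 < ε) : ∃ R s h S : D, Pack r ε R s h S := by
  have hsa : IsSelfAdjoint r := .of_nonneg hr
  have pos : ∀ x ∈ spectrum ℝ r, 0 ≤ x := fun x hx => spectrum_nonneg_of_nonneg hr hx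
  have posn : ∀ x ∈ spectrum ℝ r, x ≤ ‖r‖ := fun x hx => by
    have h1 := IsSelfAdjoint.le_algebraMap_norm_self (a := r) hsa
    exact (le_algebraMap_iff_spectrum_le (R := ℝ) (a := r)).1 h1 x hx
  let fR : ℝ → ℝ := fun t => √t
  let fS : ℝ → ℝ := fun t => (|t| + ε)⁻¹
  let fs : ℝ → ℝ := fun t => √((|t| + ε)⁻¹)
  let fh : ℝ → ℝ := fun t => √t * √((|t| + ε)⁻¹)
  have cR : Continuous fR := Real.continuous_sqrt
  have cS : Continuous fS := (continuous_abs.add continuous_const).inv₀ (fun t => (add_pos_of_nonneg_of_pos (abs_nonneg t) hε).ne')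
  have cs : Continuous fs := cS.sqrt
  have ch : Continuous fh := cR.mul cs
  have idc : Continuous (fun t : ℝ => t) := continuous_id
  have one : cfc (fun _ : ℝ => (1 : ℝ)) r = 1 := cfc_const_one ℝ r
  have cid : cfc (fun t : ℝ => t) r = r := cfc_id' ℝ r
  have mul : ∀ f g : ℝ → ℝ, Continuous f → Continuous g →
      cfc f r * cfc g r = cfc (fun t => f t * g t) r := fun f g hf hg =>
    (cfc_mul f g r hf.continuousOn hg.continuousOn).symm
  have mul3 : ∀ f : ℝ → ℝ, Continuous f →
      cfc f r * r * cfc f r = cfc (fun t => f t * t * f t) r := fun f hf => by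
    have h1 : cfc f r * r = cfc (fun t => f t * t) r := by
      rw [← mul f (fun t => t) hf idc, cid]
    have h2 : Continuous (fun t => f t * t) := hf.mul idc
    rw [h1, mul _ _ h2 hf]
  have le : ∀ f g : ℝ → ℝ, Continuous f → Continuous g → (∀ t, 0 ≤ t → t ≤ ‖r‖ → f t ≤ g t) →
      cfc f r ≤ cfc g r := fun f g hf hg H =>
    cfc_mono (fun t ht => H t (pos t ht) (posn t ht)) hf.continuousOn hg.continuousOn
  have congr : ∀ f g : ℝ → ℝ, (∀ t, 0 ≤ t → t ≤ ‖r‖ → f t = g t) →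
      cfc f r = cfc g r := fun f g H =>
    cfc_congr (fun t ht => H t (pos t ht) (posn t ht))
  have cst : ∀ k : ℝ, k • (1 : D) = cfc (fun _ : ℝ => k) r := fun k => by
    rw [cfc_const k r, Algebra.algebraMap_eq_smul_one]
  have sss : ∀ t, fs t * fs t = fS t := fun t => Real.mul_self_sqrt (by positivity)
  have hhe : ∀ t, 0 ≤ t → fh t * fh t = t / (t + ε) := fun t ht => by
    simp only [fh]
    rw [mul_mul_mul_comm, Real.mul_self_sqrt ht, Real.mul_self_sqrt (by positivity),
      abs_of_nonneg ht, div_eq_mul_inv]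
  have fh0 : ∀ t, 0 ≤ fh t := fun t => by positivity
  have fh1 : ∀ t, 0 ≤ t → fh t ≤ 1 := fun t ht => by
    have h1 : fh t * fh t ≤ 1 := by
      rw [hhe t ht, div_le_one (by positivity)]; linarith
    nlinarith [fh0 t]
  refine ⟨cfc fR r, cfc fs r, cfc fh r, cfc fS r, ?_, ?_, ?_, ?_, ?_, ?_, ?_, ?_, ?_, ?_, ?_, ?_, ?_,
    ?_, ?_⟩
  · exact cfc_nonneg (fun t _ => Real.sqrt_nonneg t)
  · exact cfc_nonneg (fun t _ => by positivity)
  · exact cfc_nonneg (fun t _ => by positivity)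
  · exact cfc_nonneg (fun t _ => by positivity)
  · rw [mul _ _ cR cR]
    conv_rhs => rw [← cid]
    exact congr _ _ (fun t ht _ => Real.mul_self_sqrt ht)
  · rw [mul _ _ cs cs]
    exact congr _ _ (fun t _ _ => sss t)
  · rw [mul _ _ cR cs]
  · rw [mul _ _ cs cR]
    exact congr _ _ (fun t _ _ => mul_comm _ _)
  · rw [mul _ _ ch ch, ← one]
    refine le _ _ (ch.mul ch) continuous_const (fun t ht _ => ?_)
    rw [hhe t ht, div_le_one (by positivity)]; linarith
  · have e1 : 1 - cfc fh r = cfc (fun t => 1 - fh t) r := by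
      rw [cfc_sub (fun _ => (1 : ℝ)) fh r continuous_const.continuousOn ch.continuousOn, one]
    have c1 : Continuous (fun t => 1 - fh t) := continuous_const.sub ch
    have e2 : (1 - cfc fh r) * r * (1 - cfc fh r)
        = cfc (fun t => (1 - fh t) * t * (1 - fh t)) r := by
      rw [e1, mul3 _ c1]
    rw [e2, cst]
    refine le _ _ ((c1.mul idc).mul c1) continuous_const (fun t ht _ => ?_)
    have h1 := fh1 t ht
    have h2 := fh0 t
    have h3 := hhe t ht
    have h4 : (1 - fh t) * (1 - fh t) ≤ 1 - t / (t + ε) := by nlinarith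
    have h5 : (1 - t / (t + ε)) * t ≤ ε := by
      have : 1 - t / (t + ε) = ε / (t + ε) := by field_simp; ring
      rw [this, div_mul_eq_mul_div, div_le_iff₀ (by positivity)]; nlinarith
    nlinarith
  · rw [mul3 _ cS]
    refine le _ _ ((cS.mul idc).mul cS) cS (fun t ht _ => ?_)
    simp only [fS, abs_of_nonneg ht]
    have : (t + ε)⁻¹ * t ≤ 1 := by rw [inv_mul_le_one₀ (by positivity)]; linarith
    exact mul_le_of_le_one_left (by positivity) this
  · rw [mul3 _ cs, ← one]
    refine le _ _ ((cs.mul idc).mul cs) continuous_const (fun t ht _ => ?_)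
    have : fs t * t * fs t = (t + ε)⁻¹ * t := by
      have := sss t
      simp only [fS, abs_of_nonneg ht] at this
      rw [mul_right_comm, this]
    rw [this, inv_mul_le_one₀ (by positivity)]; linarith
  · rw [cst]
    refine le _ _ cS continuous_const (fun t ht _ => ?_)
    simp only [fS, abs_of_nonneg ht]
    gcongr; linarith
  · nth_rewrite 2 [← cid]
    rw [mul _ _ ch ch, ← cfc_smul _ _ _ idc.continuousOn]
    refine le _ _ (by fun_prop) (ch.mul ch) (fun t ht ht' => ?_)
    rw [hhe t ht, smul_eq_mul, div_eq_inv_mul]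
    gcongr
  · rw [cst]
    refine le _ _ continuous_const cS (fun t ht ht' => ?_)
    simp only [fS, abs_of_nonneg ht]
    gcongr

section
variable {D : Type*} [CStarAlgebra D] [PartialOrder D] [StarOrderedRing D]

theorem sa_le_smul {a : D} (ha : IsSelfAdjoint a) {δ : ℝ} (h : ‖a‖ ≤ δ) : a ≤ δ • 1 := by
  have h1 := ha.le_algebraMap_norm_self
  rw [Algebra.algebraMap_eq_smul_one] at h1
  exact h1.trans (smul_le_smul_of_nonneg_right h zero_le_one)

theorem sa_ge_smul {a : D} (ha : IsSelfAdjoint a) {δ : ℝ} (h : ‖a‖ ≤ δ) : -(δ • 1) ≤ a := by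
  have h1 := sa_le_smul ha.neg (δ := δ) (by rwa [norm_neg])
  exact neg_le.1 h1

theorem nn_norm_le {a : D} (ha : 0 ≤ a) {δ : ℝ} (hδ : 0 ≤ δ) (h : a ≤ δ • 1) : ‖a‖ ≤ δ := by
  rw [CStarAlgebra.norm_le_iff_le_algebraMap a hδ ha, Algebra.algebraMap_eq_smul_one]
  exact h

theorem sa_norm_le {a : D} (ha : IsSelfAdjoint a) {δ : ℝ} (hδ : 0 ≤ δ) (h1 : a ≤ δ • 1)
    (h2 : -(δ • 1) ≤ a) : ‖a‖ ≤ δ := by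
  rcases subsingleton_or_nontrivial D with hD | hD
  · rw [Subsingleton.elim a 0, norm_zero]; exact hδ
  rw [← Algebra.algebraMap_eq_smul_one] at h1 h2
  have u := (le_algebraMap_iff_spectrum_le (R := ℝ) (a := a)).1 h1
  rw [← map_neg] at h2
  have l := (algebraMap_le_iff_le_spectrum (R := ℝ) (a := a)).1 h2
  rcases CStarAlgebra.norm_or_neg_norm_mem_spectrum (a := a) ha with h | h
  · exact u _ h
  · have := l _ h; linarith

theorem sandwich {P1 P2 P3 P4 Q X : D} (s1 : IsSelfAdjoint P1) (s2 : IsSelfAdjoint P2)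
    (s3 : IsSelfAdjoint P3) (s4 : IsSelfAdjoint P4) (sQ : IsSelfAdjoint Q) (sX : IsSelfAdjoint X)
    {δ1 δ2 δ3 δ4 : ℝ} (h12 : P2 ≤ P1) (h34 : P3 ≤ P4) (d1 : ‖P1 - Q‖ ≤ δ1) (d2 : ‖P2 - X‖ ≤ δ2)
    (d3 : ‖P3 - Q‖ ≤ δ3) (d4 : ‖P4 - X‖ ≤ δ4) : ‖Q - X‖ ≤ (δ3 + δ4) + (δ1 + δ2) := by
  have e1 := (norm_nonneg _).trans d1
  have e2 := (norm_nonneg _).trans d2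
  have e3 := (norm_nonneg _).trans d3
  have e4 := (norm_nonneg _).trans d4
  refine sa_norm_le (sQ.sub sX) (by positivity) ?_ ?_
  · have a1 := sa_ge_smul (s3.sub sQ) d3
    have a2 := sa_le_smul (s4.sub sX) d4
    calc Q - X = (P3 - P4) + -(P3 - Q) + (P4 - X) := by abel
      _ ≤ 0 + δ3 • 1 + δ4 • 1 := by
        gcongr
        · exact sub_nonpos.2 h34
        · exact neg_le.1 a1
      _ ≤ 0 + δ3 • 1 + δ4 • 1 + (δ1 + δ2) • 1 :=
        le_add_of_nonneg_right (smul_nonneg (by positivity) zero_le_one)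
      _ = _ := by module
  · have a1 := sa_le_smul (s1.sub sQ) d1
    have a2 := sa_ge_smul (s2.sub sX) d2
    calc -(((δ3 + δ4) + (δ1 + δ2)) • (1 : D)) ≤ -((δ1 + δ2) • (1 : D)) := by
          apply neg_le_neg
          exact smul_le_smul_of_nonneg_right (by linarith) zero_le_one
      _ = 0 + -(δ1 • (1 : D)) + -(δ2 • 1) := by module
      _ ≤ (P1 - P2) + -(P1 - Q) + (P2 - X) := by
        gcongr
        · exact sub_nonneg.2 h12
      _ = Q - X := by abel

theorem sq_le_norm_smul {T : D} (hT : 0 ≤ T) : T * T ≤ ‖T‖ • T := by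
  set q := CFC.sqrt T
  have hq : IsSelfAdjoint q := .of_nonneg (CFC.sqrt_nonneg T)
  have e : q * q = T := CFC.sqrt_mul_sqrt_self T hT
  have h := CStarAlgebra.star_left_conjugate_le_norm_smul (a := q) (b := T) (.of_nonneg hT)
  rw [hq.star_eq, e] at h
  calc T * T = (q * q) * (q * q) := by rw [e]
    _ = q * (q * q) * q := by simp only [mul_assoc]
    _ = q * T * q := by rw [e]
    _ ≤ _ := h

theorem Pack.norm_h {r R s h S : D} {ε : ℝ} (P : Pack r ε R s h S) : ‖h‖ ≤ 1 := by
  have h1 : ‖h * h‖ ≤ 1 := by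
    refine nn_norm_le ?_ zero_le_one (by simpa using P.hh1)
    have := mul_self_nonneg ‖h‖
    have := star_mul_self_nonneg h
    rwa [(IsSelfAdjoint.of_nonneg P.h0).star_eq] at this
  have h2 := CStarRing.norm_star_mul_self (x := h)
  rw [(IsSelfAdjoint.of_nonneg P.h0).star_eq] at h2
  rw [h2] at h1
  nlinarith [norm_nonneg h]

theorem Pack.approx {r R s h S : D} {ε : ℝ} (hε : 0 < ε) (P : Pack r ε R s h S) {T : D} {K N : ℝ}
    (hT : 0 ≤ T) (hK : 0 ≤ K) (hTK : T ≤ K • r) (hN : ‖T‖ ≤ N) :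
    ‖h * T * h - T‖ ≤ 2 * √(N * K * ε) := by
  have hN0 := (norm_nonneg _).trans hN
  have sh : IsSelfAdjoint (1 - h) := (IsSelfAdjoint.one D).sub (.of_nonneg P.h0)
  have sT : IsSelfAdjoint T := .of_nonneg hT
  have h1 : (1 - h) * T * (star ((1 - h) * T)) ≤ (N * K * ε) • 1 := by
    rw [star_mul, sh.star_eq, sT.star_eq]
    calc (1 - h) * T * (T * (1 - h)) = (1 - h) * (T * T) * (1 - h) := by simp only [mul_assoc]
      _ ≤ (1 - h) * (N • (K • r)) * (1 - h) := by
        refine sh.conjugate_le_conjugate ?_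
        refine (sq_le_norm_smul hT).trans ?_
        refine (smul_le_smul_of_nonneg_left hTK (norm_nonneg _)).trans ?_
        exact smul_le_smul_of_nonneg_right hN (hT.trans hTK)
      _ = (N * K) • ((1 - h) * r * (1 - h)) := by
        simp only [mul_smul_comm, smul_mul_assoc, smul_smul]
      _ ≤ (N * K) • (ε • 1) := smul_le_smul_of_nonneg_left P.app (by positivity)
      _ = _ := by rw [smul_smul]
  have h2 : ‖(1 - h) * T‖ ≤ √(N * K * ε) := by
    apply Real.le_sqrt_of_sq_le
    rw [pow_two, ← CStarRing.norm_self_mul_star]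
    exact nn_norm_le (mul_star_self_nonneg _) (by positivity) h1
  have h3 : ‖T * (1 - h)‖ ≤ √(N * K * ε) := by
    rw [← norm_star, star_mul, sh.star_eq, sT.star_eq]; exact h2
  calc ‖h * T * h - T‖ = ‖-(h * (T * (1 - h))) - (1 - h) * T‖ := by congr 1; noncomm_ring
    _ ≤ ‖h * (T * (1 - h))‖ + ‖(1 - h) * T‖ := by
      refine (norm_sub_le _ _).trans ?_; rw [norm_neg]
    _ ≤ 1 * √(N * K * ε) + √(N * K * ε) := by
      gcongr
      exact (norm_mul_le _ _).trans (mul_le_mul P.norm_h h3 (norm_nonneg _) zero_le_one)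
    _ = _ := by ring

theorem Pack.xSx {r R s h S : D} {ε : ℝ} (P : Pack r ε R s h S) {x : D} {K : ℝ}
    (hx : 0 ≤ x) (hK : 0 ≤ K) (hxK : x ≤ K • r) : x * S * x ≤ K • x := by
  set q := CFC.sqrt x
  have hq : IsSelfAdjoint q := .of_nonneg (CFC.sqrt_nonneg x)
  have hs : IsSelfAdjoint s := .of_nonneg P.s0
  have e : q * q = x := CFC.sqrt_mul_sqrt_self x hx
  have h1 : ‖q * S * q‖ ≤ K := by
    have e1 : q * S * q = star (s * q) * (s * q) := by
      rw [star_mul, hs.star_eq, hq.star_eq, ← P.ss]; simp only [mul_assoc]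
    have e2 : (s * q) * star (s * q) = s * x * s := by
      rw [star_mul, hs.star_eq, hq.star_eq, ← e]; simp only [mul_assoc]
    rw [e1, CStarRing.norm_star_mul_self, ← CStarRing.norm_self_mul_star, e2]
    refine nn_norm_le (hs.conjugate_nonneg hx) hK ?_
    calc s * x * s ≤ s * (K • r) * s := hs.conjugate_le_conjugate hxK
      _ = K • (s * r * s) := by simp only [mul_smul_comm, smul_mul_assoc]
      _ ≤ K • 1 := smul_le_smul_of_nonneg_left P.srs hK
  have hS : IsSelfAdjoint (q * S * q) := .of_nonneg (hq.conjugate_nonneg P.S0)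
  calc x * S * x = q * (q * S * q) * q := by rw [← e]; simp only [mul_assoc]
    _ ≤ q * (K • 1) * q := hq.conjugate_le_conjugate (sa_le_smul hS h1)
    _ = K • x := by rw [mul_smul_comm, smul_mul_assoc, mul_one, e]
end

structure OI {D E : Type*} [CStarAlgebra D] [PartialOrder D] [StarOrderedRing D]
    [CStarAlgebra E] [PartialOrder E] [StarOrderedRing E]
    (χD : D →ₐ[ℂ] ℂ) (χE : E →ₐ[ℂ] ℂ) (F : D →ₗ[ℂ] E) (G : E →ₗ[ℂ] D) (M : ℝ) : Prop where
  M0 : 0 ≤ M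
  Fpos : ∀ d, χD d = 0 → 0 ≤ d → 0 ≤ F d
  Gpos : ∀ d, χE d = 0 → 0 ≤ d → 0 ≤ G d
  FI : ∀ d, χE (F d) = 0
  GI : ∀ d, χD (G d) = 0
  FG : ∀ d, χE d = 0 → F (G d) = d
  GF : ∀ d, χD d = 0 → G (F d) = d
  Fb : ∀ d, χD d = 0 → ‖F d‖ ≤ M * ‖d‖
  Gb : ∀ d, χE d = 0 → ‖G d‖ ≤ M * ‖d‖

noncomputable def errG (M Nq Nx K' ε : ℝ) : ℝ :=
  M * ((M * (2 * √(Nx * K' * ε))) * (Nq + M * (2 * √(Nx * K' * ε)))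
    + Nq * (M * (2 * √(Nx * K' * ε)))) + 2 * √((K' * Nx) * (K' * K') * ε)

noncomputable def errH (M Nq Nx K ε η : ℝ) : ℝ :=
  M * (2 * √((Nq * Nq) * (Nq * K) * η)) +
    ((M * (2 * √(Nq * K * η))) * ε⁻¹ * (Nx + M * (2 * √(Nq * K * η)))
      + Nx * ε⁻¹ * (M * (2 * √(Nq * K * η))))

theorem norm_quad_sub {D : Type*} [NormedRing D] {S X Y : D} {t u N : ℝ}
    (h : ‖Y - X‖ ≤ t) (hS : ‖S‖ ≤ u) (hX : ‖X‖ ≤ N) :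
    ‖Y * S * Y - X * S * X‖ ≤ t * u * (N + t) + N * u * t := by
  have ht := (norm_nonneg _).trans h
  have hu := (norm_nonneg _).trans hS
  have hN := (norm_nonneg _).trans hX
  have hY : ‖Y‖ ≤ N + t := by
    calc ‖Y‖ = ‖X + (Y - X)‖ := by congr 1; abel
      _ ≤ _ := (norm_add_le _ _).trans (add_le_add hX h)
  calc ‖Y * S * Y - X * S * X‖ = ‖(Y - X) * S * Y + X * S * (Y - X)‖ := by
        congr 1; noncomm_ring
    _ ≤ ‖Y - X‖ * ‖S‖ * ‖Y‖ + ‖X‖ * ‖S‖ * ‖Y - X‖ := by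
      refine (norm_add_le _ _).trans (add_le_add ?_ ?_)
      · exact norm_mul₃_le
      · exact norm_mul₃_le
    _ ≤ _ := by gcongr

theorem norm_sq_sub {D : Type*} [NormedRing D] {X Y : D} {t N : ℝ}
    (h : ‖Y - X‖ ≤ t) (hX : ‖X‖ ≤ N) :
    ‖Y * Y - X * X‖ ≤ t * (N + t) + N * t := by
  have ht := (norm_nonneg _).trans h
  have hN := (norm_nonneg _).trans hX
  have hY : ‖Y‖ ≤ N + t := by
    calc ‖Y‖ = ‖X + (Y - X)‖ := by congr 1; abel
      _ ≤ _ := (norm_add_le _ _).trans (add_le_add hX h)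
  calc ‖Y * Y - X * X‖ = ‖(Y - X) * Y + X * (Y - X)‖ := by
        congr 1; noncomm_ring
    _ ≤ ‖Y - X‖ * ‖Y‖ + ‖X‖ * ‖Y - X‖ := 
      (norm_add_le _ _).trans (add_le_add (norm_mul_le _ _) (norm_mul_le _ _))
    _ ≤ _ := by gcongr

theorem sa_mul_self {D : Type*} [NonUnitalRing D] [StarRing D] {x : D} (h : IsSelfAdjoint x) :
    IsSelfAdjoint (x * x) := by
  simp [IsSelfAdjoint, h.star_eq]

theorem sa_conj {D : Type*} [NonUnitalRing D] [StarRing D] {x y : D} (h : IsSelfAdjoint x)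
    (hy : IsSelfAdjoint y) :
    IsSelfAdjoint (x * y * x) := by
  simp [IsSelfAdjoint, h.star_eq, hy.star_eq, mul_assoc]

theorem rsmul_map {D E : Type*} [CStarAlgebra D] [CStarAlgebra E] (F : D →ₗ[ℂ] E) (t : ℝ) (d : D) :
    F (t • d) = t • F d := by
  rw [← Complex.coe_smul, map_smul, Complex.coe_smul]

/-- sandwich as a linear map -/
noncomputable def sand {D E : Type*} [CStarAlgebra D] [CStarAlgebra E] (F : D →ₗ[ℂ] E) (w : D) : D →ₗ[ℂ] E :=
  F ∘ₗ (LinearMap.mulRight ℂ w) ∘ₗ (LinearMap.mulLeft ℂ w)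

theorem sand_apply {D E : Type*} [CStarAlgebra D] [CStarAlgebra E] (F : D →ₗ[ℂ] E) (w d : D) :
    sand F w d = F (w * d * w) := rfl

theorem est {D E : Type*} [CStarAlgebra D] [PartialOrder D] [StarOrderedRing D]
    [CStarAlgebra E] [PartialOrder E] [StarOrderedRing E]
    {χD : D →ₐ[ℂ] ℂ} {χE : E →ₐ[ℂ] ℂ} {F : D →ₗ[ℂ] E} {G : E →ₗ[ℂ] D} {M : ℝ}
    (O : OI χD χE F G M) {e x : D} (Ie : χD e = 0) (Ix : χD x = 0) (he : 0 ≤ e) (hx : 0 ≤ x)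
    {K : ℝ} (hK : 0 ≤ K) (hxe : x ≤ K • e) {ε η : ℝ} (hε : 0 < ε) (hη : 0 < η) (hη1 : η ≤ 1)
    {R1 s1 w S1 : E} (P1 : Pack (F e) η R1 s1 w S1)
    {R s h S : D} (P : Pack (G (w * w)) ε R s h S) :
    ‖G (F x * F x) - x * S * x‖ ≤
      errG M ‖F x‖ ‖x‖ (K * (‖F e‖ + 1)) ε + errH M ‖F x‖ ‖x‖ K ε η := by
  have hM := O.M0
  have monoF : ∀ a b, χD a = 0 → χD b = 0 → a ≤ b → F a ≤ F b := fun a b ha hb hab => by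
    rw [← sub_nonneg, ← map_sub]
    exact O.Fpos _ (by rw [map_sub, ha, hb, sub_zero]) (sub_nonneg.2 hab)
  have monoG : ∀ a b, χE a = 0 → χE b = 0 → a ≤ b → G a ≤ G b := fun a b ha hb hab => by
    rw [← sub_nonneg, ← map_sub]
    exact O.Gpos _ (by rw [map_sub, ha, hb, sub_zero]) (sub_nonneg.2 hab)
  have smI : ∀ (t : ℝ) (a : D), χD a = 0 → χD (t • a) = 0 := fun t a ha => by
    rw [← Complex.coe_smul, map_smul, ha, smul_zero]
  have smI' : ∀ (t : ℝ) (a : E), χE a = 0 → χE (t • a) = 0 := fun t a ha => by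
    rw [← Complex.coe_smul, map_smul, ha, smul_zero]
  set p := F e with hp
  set q := F x with hq
  set r := G (w * w) with hr
  have Ir : χD r = 0 := O.GI _
  have IR : χD R = 0 := by
    have : χD R * χD R = 0 := by rw [← map_mul, P.RR, Ir]
    exact mul_self_eq_zero.1 this
  have Ih : χD h = 0 := by rw [← P.Rs, map_mul, IR, zero_mul]
  have IR1 : χE R1 = 0 := by
    have : χE R1 * χE R1 = 0 := by rw [← map_mul, P1.RR, O.FI]
    exact mul_self_eq_zero.1 this
  have Iw : χE w = 0 := by rw [← P1.Rs, map_mul, IR1, zero_mul]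
  have Iq : χE q = 0 := O.FI _
  have p0 : 0 ≤ p := O.Fpos _ Ie he
  have q0 : 0 ≤ q := O.Fpos _ Ix hx
  have sw : IsSelfAdjoint w := .of_nonneg P1.h0
  have sh : IsSelfAdjoint h := .of_nonneg P.h0
  have sR : IsSelfAdjoint R := .of_nonneg P.R0
  have ss : IsSelfAdjoint s := .of_nonneg P.s0
  have sS : IsSelfAdjoint S := .of_nonneg P.S0
  have sx : IsSelfAdjoint x := .of_nonneg hx
  have sq : IsSelfAdjoint q := .of_nonneg q0
  have qp : q ≤ K • p := by
    rw [hq, hp, ← rsmul_map]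
    exact monoF _ _ Ix (smI _ _ Ie) hxe
  have nS : ‖S‖ ≤ ε⁻¹ := nn_norm_le P.S0 (by positivity) P.Sε
  have r0 : 0 ≤ r := O.Gpos _ (by simp [Iw])
    (by have := star_mul_self_nonneg w; rwa [sw.star_eq] at this)
  -- lower
  set Y := G (w * q * w) with hY
  have Iwqw : χE (w * q * w) = 0 := by simp [Iw]
  have Y0 : 0 ≤ Y := O.Gpos _ Iwqw (sw.conjugate_nonneg q0)
  have sY : IsSelfAdjoint Y := .of_nonneg Y0
  have low : Y * S * Y ≤ G (w * (q * q) * w) := by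
    have k := kadison (sand G w) (fun d hd => by
      rw [sand_apply]; exact O.Gpos _ (by simp [Iw]) (sw.conjugate_nonneg hd)) q q0 (-(S * Y)) 1
    simp only [sand_apply, mul_one, ← hr, ← hY, star_neg, star_mul, sS.star_eq, sY.star_eq,
      star_one, one_mul] at k
    have k2 : Y * (S * r * S) * Y ≤ Y * S * Y := sY.conjugate_le_conjugate P.SrS
    have k3 : 0 ≤ Y * (S * r * S) * Y - Y * S * Y - Y * S * Y + G (w * (q * q) * w) := by
      convert k using 1
      noncomm_ring
    have k4 : Y * S * Y ≤ Y * S * Y +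
      ((Y * (S * r * S) * Y - Y * S * Y - Y * S * Y + G (w * (q * q) * w))
        + (Y * S * Y - Y * (S * r * S) * Y)) :=
      le_add_of_nonneg_right (add_nonneg k3 (sub_nonneg.2 k2))
    refine k4.trans_eq ?_
    abel
  -- upper
  set Z := F (h * x * h) with hZ
  have Ihxh : χD (h * x * h) = 0 := by simp [Ih]
  have sZ : IsSelfAdjoint Z := .of_nonneg (O.Fpos _ Ihxh (sh.conjugate_nonneg hx))
  have up0 : Z * Z ≤ F (h * (x * S * x) * h) := by
    have k := kadison (sand F R) (fun d hd => by
      rw [sand_apply]; exact O.Fpos _ (by simp [IR]) (sR.conjugate_nonneg hd)) (s * x * s)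
        (ss.conjugate_nonneg hx) (-Z) 1
    have e1 : R * (s * x * s) * R = h * x * h := by
      simp only [← mul_assoc, P.Rs]; simp only [mul_assoc, P.sR]
    have e2 : R * ((s * x * s) * (s * x * s)) * R = h * (x * S * x) * h := by
      have : R * ((s * x * s) * (s * x * s)) * R = (R * s) * (x * (s * s) * x) * (s * R) := by
        noncomm_ring
      rw [this, P.Rs, P.sR, P.ss]
    have e3 : F (R * R) = w * w := by rw [P.RR, hr, O.FG _ (by simp [Iw])]
    simp only [sand_apply, mul_one, e1, e2, e3, ← hZ, star_neg, sZ.star_eq,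
      star_one, one_mul] at k
    have k2 : Z * (w * w) * Z ≤ Z * 1 * Z := sZ.conjugate_le_conjugate P1.hh1
    have k4 : Z * Z ≤ Z * Z +
      ((-Z * (w * w) * -Z + -Z * Z + Z * -Z + F (h * (x * S * x) * h))
        + (Z * 1 * Z - Z * (w * w) * Z)) :=
      le_add_of_nonneg_right (add_nonneg k (sub_nonneg.2 k2))
    refine k4.trans_eq ?_
    noncomm_ring
  have IhTh : χD (h * (x * S * x) * h) = 0 := by simp [Ih]
  have IZ : χE Z = 0 := O.FI _
  have up : G (Z * Z) ≤ h * (x * S * x) * h := by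
    have := monoG _ _ (by simp [IZ]) (O.FI _) up0
    rwa [O.GF _ IhTh] at this
  -- r dominates e
  set K' := K * (‖p‖ + 1) with hK'
  have hK'0 : 0 ≤ K' := by positivity
  have xr : x ≤ K' • r := by
    have h1 : (‖p‖ + η)⁻¹ • e ≤ r := by
      have := monoG _ _ (smI' _ _ (O.FI e)) (by simp [Iw]) P1.hhr
      rwa [rsmul_map, O.GF _ Ie] at this
    have h2 : e ≤ (‖p‖ + η) • r := by
      have := smul_le_smul_of_nonneg_left h1 (show 0 ≤ ‖p‖ + η by positivity)
      rwa [smul_smul, mul_inv_cancel₀ (by positivity), one_smul] at this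
    have h3 : e ≤ (‖p‖ + 1) • r := h2.trans
      (smul_le_smul_of_nonneg_right (by linarith) r0)
    rw [hK', mul_smul]
    exact hxe.trans (smul_le_smul_of_nonneg_left h3 hK)
  -- errors
  have d1 : ‖G (w * (q * q) * w) - G (q * q)‖ ≤ M * (2 * √((‖q‖ * ‖q‖) * (‖q‖ * K) * η)) := by
    rw [← map_sub]
    refine (O.Gb _ (by simp [Iw, Iq])).trans (mul_le_mul_of_nonneg_left ?_ hM)
    refine P1.approx hη ?_ (by positivity) ?_ (norm_mul_le _ _)
    · have := star_mul_self_nonneg q; rwa [sq.star_eq] at this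
    · rw [mul_smul]
      exact (sq_le_norm_smul q0).trans (smul_le_smul_of_nonneg_left qp (norm_nonneg _))
  have dY : ‖Y - x‖ ≤ M * (2 * √(‖q‖ * K * η)) := by
    have : Y - x = G (w * q * w - q) := by rw [map_sub, hq, O.GF _ Ix]
    rw [this]
    refine (O.Gb _ (by simp [Iw, Iq])).trans (mul_le_mul_of_nonneg_left ?_ hM)
    exact P1.approx hη q0 hK qp le_rfl
  have d2 := norm_quad_sub dY nS (le_refl ‖x‖)
  have dx : ‖h * x * h - x‖ ≤ 2 * √(‖x‖ * K' * ε) := P.approx hε hx hK'0 xr le_rfl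
  have dZ : ‖Z - q‖ ≤ M * (2 * √(‖x‖ * K' * ε)) := by
    rw [hZ, hq, ← map_sub]
    exact (O.Fb _ (by simp [Ih, Ix])).trans (mul_le_mul_of_nonneg_left dx hM)
  have d3 : ‖G (Z * Z) - G (q * q)‖ ≤ M * ((M * (2 * √(‖x‖ * K' * ε))) *
      (‖q‖ + M * (2 * √(‖x‖ * K' * ε))) + ‖q‖ * (M * (2 * √(‖x‖ * K' * ε)))) := by
    rw [← map_sub]
    refine (O.Gb _ (by simp [IZ, Iq])).trans (mul_le_mul_of_nonneg_left ?_ hM)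
    exact norm_sq_sub dZ le_rfl
  have T0 : 0 ≤ x * S * x := sx.conjugate_nonneg P.S0
  have Tx : x * S * x ≤ K' • x := P.xSx hx hK'0 xr
  have d4 : ‖h * (x * S * x) * h - x * S * x‖ ≤ 2 * √((K' * ‖x‖) * (K' * K') * ε) := by
    refine P.approx hε T0 (by positivity) ?_ ?_
    · rw [mul_smul]; exact Tx.trans (smul_le_smul_of_nonneg_left xr hK'0)
    · refine (CStarAlgebra.norm_le_norm_of_nonneg_of_le T0 Tx).trans ?_
      rw [norm_smul, Real.norm_of_nonneg hK'0]
  have sGq : IsSelfAdjoint (G (q * q)) := .of_nonneg (O.Gpos _ (by simp [Iq])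
    (by have := star_mul_self_nonneg q; rwa [sq.star_eq] at this))
  have sGZ : IsSelfAdjoint (G (Z * Z)) := .of_nonneg (O.Gpos _ (by simp [IZ])
    (by have := star_mul_self_nonneg Z; rwa [sZ.star_eq] at this))
  have sP1 : IsSelfAdjoint (G (w * (q * q) * w)) := .of_nonneg (O.Gpos _ (by simp [Iw])
    (sw.conjugate_nonneg (by have := star_mul_self_nonneg q; rwa [sq.star_eq] at this)))
  exact sandwich sP1 (sa_conj sY sS) sGZ (sa_conj sh (sa_conj sx sS)) sGq (sa_conj sx sS)
    low up d1 d2 d3 d4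

theorem exists_S {D E : Type*} [CStarAlgebra D] [PartialOrder D] [StarOrderedRing D]
    [CStarAlgebra E] [PartialOrder E] [StarOrderedRing E]
    {χD : D →ₐ[ℂ] ℂ} {χE : E →ₐ[ℂ] ℂ} {F : D →ₗ[ℂ] E} {G : E →ₗ[ℂ] D} {M : ℝ}
    (O : OI χD χE F G M) {e x y : D} (Ie : χD e = 0) (Ix : χD x = 0) (Iy : χD y = 0)
    (he : 0 ≤ e) (hx : 0 ≤ x) (hy : 0 ≤ y)
    {K L : ℝ} (hK : 0 ≤ K) (hxe : x ≤ K • e) (hL : 0 ≤ L) (hye : y ≤ L • e)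
    {δ : ℝ} (hδ : 0 < δ) : ∃ S : D, (M + 1)⁻¹ • 1 ≤ S ∧
      ‖G (F x * F x) - x * S * x‖ ≤ δ ∧ ‖G (F y * F y) - y * S * y‖ ≤ δ := by
  have hM := O.M0
  have cG : ∀ M Nq Nx K' : ℝ, ∀ᶠ ε in nhdsWithin (0 : ℝ) (Set.Ioi 0),
      errG M Nq Nx K' ε < δ / 2 := by
    intro M Nq Nx K'
    have c : Continuous (errG M Nq Nx K') := by unfold errG; fun_prop
    have := c.tendsto 0
    have z : errG M Nq Nx K' 0 = 0 := by simp [errG]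
    rw [z] at this
    exact (this.mono_left nhdsWithin_le_nhds).eventually (gt_mem_nhds (by positivity))
  have cH : ∀ M Nq Nx K' ε : ℝ, ∀ᶠ η in nhdsWithin (0 : ℝ) (Set.Ioi 0),
      errH M Nq Nx K' ε η < δ / 2 := by
    intro M Nq Nx K' ε
    have c : Continuous (errH M Nq Nx K' ε) := by unfold errH; fun_prop
    have := c.tendsto 0
    have z : errH M Nq Nx K' ε 0 = 0 := by simp [errH]
    rw [z] at this
    exact (this.mono_left nhdsWithin_le_nhds).eventually (gt_mem_nhds (by positivity))
  have one : ∀ᶠ η in nhdsWithin (0 : ℝ) (Set.Ioi 0), η ≤ 1 :=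
    nhdsWithin_le_nhds (Iic_mem_nhds one_pos)
  have pos : ∀ᶠ η in nhdsWithin (0 : ℝ) (Set.Ioi 0), 0 < η := self_mem_nhdsWithin
  obtain ⟨ε, ⟨⟨g1, g2⟩, hε1⟩, hε⟩ := ((((cG M ‖F x‖ ‖x‖ (K * (‖F e‖ + 1))).and
    (cG M ‖F y‖ ‖y‖ (L * (‖F e‖ + 1)))).and one).and pos).exists
  obtain ⟨η, ⟨⟨g3, g4⟩, hη1⟩, hη⟩ := ((((cH M ‖F x‖ ‖x‖ K ε).and
    (cH M ‖F y‖ ‖y‖ L ε)).and one).and pos).exists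
  obtain ⟨R1, s1, w, S1, P1⟩ := exists_pack (F e) (O.Fpos _ Ie he) η hη
  have IR1 : χE R1 = 0 := by
    have : χE R1 * χE R1 = 0 := by rw [← map_mul, P1.RR, O.FI]
    exact mul_self_eq_zero.1 this
  have Iw : χE w = 0 := by rw [← P1.Rs, map_mul, IR1, zero_mul]
  have sw : IsSelfAdjoint w := .of_nonneg P1.h0
  have ww0 : 0 ≤ w * w := by have := star_mul_self_nonneg w; rwa [sw.star_eq] at this
  have r0 : 0 ≤ G (w * w) := O.Gpos _ (by simp [Iw]) ww0
  obtain ⟨R, s, h, S, P⟩ := exists_pack (G (w * w)) r0 ε hε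
  refine ⟨S, ?_, ?_, ?_⟩
  · refine le_trans ?_ P.Sr
    apply smul_le_smul_of_nonneg_right _ zero_le_one
    have n1 : ‖w * w‖ ≤ 1 := nn_norm_le ww0 zero_le_one (by simpa using P1.hh1)
    have n2 : ‖G (w * w)‖ ≤ M := (O.Gb _ (by simp [Iw])).trans (by nlinarith)
    gcongr
  · exact (est O Ie Ix he hx hK hxe hε hη hη1 P1 P).trans (by linarith)
  · exact (est O Ie Iy he hy hL hye hε hη hη1 P1 P).trans (by linarith)

theorem key1 {D E : Type*} [CStarAlgebra D] [PartialOrder D] [StarOrderedRing D]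
    [CStarAlgebra E] [PartialOrder E] [StarOrderedRing E]
    {χD : D →ₐ[ℂ] ℂ} {χE : E →ₐ[ℂ] ℂ} {F : D →ₗ[ℂ] E} {G : E →ₗ[ℂ] D} {M : ℝ}
    (O : OI χD χE F G M) {e b : D} (Ie : χD e = 0) (he : 0 ≤ e) (hb : 0 ≤ b) :
    G (F (e * b * e) * F (e * b * e)) = e * b * G (F e * F e) * (b * e) := by
  have se : IsSelfAdjoint e := .of_nonneg he
  have hm : 0 ≤ e * b * e := se.conjugate_nonneg hb
  have hme : e * b * e ≤ (‖b‖ * ‖e‖) • e := by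
    have h := CStarAlgebra.star_left_conjugate_le_norm_smul (a := e) (b := b) (.of_nonneg hb)
    rw [se.star_eq] at h
    refine h.trans ?_
    rw [mul_smul]
    exact smul_le_smul_of_nonneg_left (sq_le_norm_smul he) (norm_nonneg _)
  rw [← sub_eq_zero, ← norm_le_zero_iff]
  have H : ∀ δ : ℝ, 0 < δ →
      ‖G (F (e * b * e) * F (e * b * e)) - e * b * G (F e * F e) * (b * e)‖ ≤
        δ + ‖e * b‖ * δ * ‖b * e‖ := by
    intro δ hδ
    obtain ⟨S, -, h1, h2⟩ := exists_S O Ie (x := e * b * e) (y := e) (by simp [Ie]) Ie he hm he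
      (K := ‖b‖ * ‖e‖) (L := 1) (by positivity) hme zero_le_one (by simp) hδ
    calc _ = ‖(G (F (e * b * e) * F (e * b * e)) - e * b * e * S * (e * b * e))
            - (e * b) * (G (F e * F e) - e * S * e) * (b * e)‖ := by congr 1; noncomm_ring
      _ ≤ _ := by
        refine (norm_sub_le _ _).trans (add_le_add h1 ?_)
        refine norm_mul₃_le.trans ?_
        gcongr
  have lim : Filter.Tendsto (fun δ : ℝ => δ + ‖e * b‖ * δ * ‖b * e‖)
      (nhdsWithin (0 : ℝ) (Set.Ioi 0)) (nhds 0) := by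
    have c : Continuous (fun δ : ℝ => δ + ‖e * b‖ * δ * ‖b * e‖) := by fun_prop
    have := c.tendsto 0
    simp only [mul_zero, zero_mul, add_zero] at this
    exact this.mono_left nhdsWithin_le_nhds
  exact ge_of_tendsto lim (Filter.eventually_of_mem self_mem_nhdsWithin H)

theorem key2 {D E : Type*} [CStarAlgebra D] [PartialOrder D] [StarOrderedRing D]
    [CStarAlgebra E] [PartialOrder E] [StarOrderedRing E]
    {χD : D →ₐ[ℂ] ℂ} {χE : E →ₐ[ℂ] ℂ} {F : D →ₗ[ℂ] E} {G : E →ₗ[ℂ] D} {M : ℝ}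
    (O : OI χD χE F G M) {e : D} (Ie : χD e = 0) (he : 0 ≤ e) :
    (M + 1)⁻¹ • (e * e) ≤ G (F e * F e) := by
  have se : IsSelfAdjoint e := .of_nonneg he
  have p0 : 0 ≤ F e := O.Fpos _ Ie he
  have sQ : IsSelfAdjoint (G (F e * F e)) := .of_nonneg (O.Gpos _ (by simp [O.FI])
    (by have := star_mul_self_nonneg (F e); rwa [(IsSelfAdjoint.of_nonneg p0).star_eq] at this))
  have H : ∀ δ : ℝ, 0 < δ → (M + 1)⁻¹ • (e * e) ≤ G (F e * F e) + δ • 1 := by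
    intro δ hδ
    obtain ⟨S, h0, h1, -⟩ := exists_S O Ie Ie Ie he he he
      (K := 1) (L := 1) zero_le_one (by simp) zero_le_one (by simp) hδ
    have M0 := O.M0
    have sS : IsSelfAdjoint S := .of_nonneg
      ((smul_nonneg (by positivity) zero_le_one).trans h0)
    have h2 := sa_ge_smul (sQ.sub (sa_conj se sS)) h1
    have h3 : e * ((M + 1)⁻¹ • 1) * e ≤ e * S * e := se.conjugate_le_conjugate h0
    rw [mul_smul_comm, smul_mul_assoc, mul_one] at h3
    refine h3.trans ?_
    have h4 := add_le_add_left h2 (e * S * e + δ • 1)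
    calc e * S * e = -(δ • 1) + (e * S * e + δ • 1) := by abel
      _ ≤ _ := h4
      _ = _ := by abel
  have lim : Filter.Tendsto (fun δ : ℝ => G (F e * F e) + δ • (1 : D))
      (nhdsWithin (0 : ℝ) (Set.Ioi 0)) (nhds (G (F e * F e))) := by
    have c : Continuous (fun δ : ℝ => G (F e * F e) + δ • (1 : D)) := by fun_prop
    have := c.tendsto 0
    simp only [zero_smul, add_zero] at this
    exact this.mono_left nhdsWithin_le_nhds
  exact ge_of_tendsto lim (Filter.eventually_of_mem self_mem_nhdsWithin H)
section ext
set_option linter.unusedSectionVars false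
variable {B C C' : Type*} [NonUnitalCStarAlgebra B] [PartialOrder B] [StarOrderedRing B]
  [NonUnitalCStarAlgebra C] [PartialOrder C] [StarOrderedRing C]
  [NonUnitalCStarAlgebra C'] [PartialOrder C'] [StarOrderedRing C']

theorem pos_induct (p : B → Prop) (h0 : ∀ x, 0 ≤ x → p x) (ha : ∀ x y, p x → p y → p (x + y))
    (hs : ∀ (c : ℂ) x, p x → p (c • x)) (x : B) : p x := by
  have hx : x ∈ Submodule.span ℂ {a : B | 0 ≤ a} := by
    rw [CStarAlgebra.span_nonneg]; trivial
  induction hx using Submodule.span_induction with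
  | mem x hx => exact h0 x hx
  | zero => exact h0 0 le_rfl
  | add x y _ _ h1 h2 => exact ha x y h1 h2
  | smul c x _ h => exact hs c x h

theorem map_star_of_pos (T : B →ₗ[ℂ] C) (hT : ∀ x, 0 ≤ x → 0 ≤ T x) (x : B) :
    T (star x) = star (T x) := by
  refine pos_induct (fun x => T (star x) = star (T x)) ?_ ?_ ?_ x
  · intro x hx
    show T (star x) = star (T x)
    rw [(IsSelfAdjoint.of_nonneg hx).star_eq, (IsSelfAdjoint.of_nonneg (hT x hx)).star_eq]
  · intro x y h1 h2
    simp only [star_add, map_add, h1, h2]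
  · intro c x h
    simp only [star_smul, map_smul, h]

theorem polarize (T : B →ₗ[ℂ] C) (Q : B) (H : ∀ b, 0 ≤ b → T b * T b = T (b * Q * b)) (b b' : B) :
    T b * T b' + T b' * T b = T (b * Q * b' + b' * Q * b) := by
  refine pos_induct (fun b => T b * T b' + T b' * T b = T (b * Q * b' + b' * Q * b)) ?_ ?_ ?_ b
  · intro b hb
    refine pos_induct (fun b' => T b * T b' + T b' * T b = T (b * Q * b' + b' * Q * b)) ?_ ?_ ?_ b'
    · intro b' hb'
      have h := H (b + b') (add_nonneg hb hb')
      have h1 := H b hb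
      have h2 := H b' hb'
      simp only [map_add, mul_add, add_mul] at h ⊢
      rw [h1, h2] at h
      have h3 : T (b * Q * b) + T (b' * Q * b') + (T b * T b' + T b' * T b)
        = T (b * Q * b) + T (b' * Q * b') + (T (b * Q * b') + T (b' * Q * b)) := by
        calc _ = T (b * Q * b) + T b' * T b + (T b * T b' + T (b' * Q * b')) := by abel
          _ = _ := by rw [h]; abel
      exact add_left_cancel h3
    · intro x y h1 h2
      simp only [map_add, mul_add, add_mul] at h1 h2 ⊢
      calc _ = (T b * T x + T x * T b) + (T b * T y + T y * T b) := by abel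
        _ = _ := by rw [h1, h2]; abel
    · intro c x h
      simp only [map_add, map_smul, mul_smul_comm, smul_mul_assoc, ← smul_add] at h ⊢
      rw [h]
  · intro x y h1 h2
    simp only [map_add, mul_add, add_mul] at h1 h2 ⊢
    calc _ = (T x * T b' + T b' * T x) + (T y * T b' + T b' * T y) := by abel
      _ = _ := by rw [h1, h2]; abel
  · intro c x h
    simp only [map_add, map_smul, mul_smul_comm, smul_mul_assoc, ← smul_add] at h ⊢
    rw [h]

theorem norm_le_iff_sq {z : C} (hz : 0 ≤ z) {t : ℝ} (ht : 0 ≤ t) : ‖z‖ ≤ t ↔ z * z ≤ t • z := by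
  constructor
  · intro h
    have hs : 0 ≤ CFC.sqrt z := CFC.sqrt_nonneg z
    have h1 := CStarAlgebra.star_left_conjugate_le_norm_smul (a := CFC.sqrt z) (b := z)
      (.of_nonneg hz)
    rw [(IsSelfAdjoint.of_nonneg hs).star_eq, CFC.sqrt_mul_sqrt_self z hz] at h1
    have h2 : CFC.sqrt z * z * CFC.sqrt z = z * z := by
      have := CFC.sqrt_mul_sqrt_self z hz
      calc _ = CFC.sqrt z * (CFC.sqrt z * CFC.sqrt z) * CFC.sqrt z := by rw [this]
        _ = (CFC.sqrt z * CFC.sqrt z) * (CFC.sqrt z * CFC.sqrt z) := by simp only [mul_assoc]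
        _ = _ := by rw [this]
    rw [h2] at h1
    exact h1.trans (smul_le_smul_of_nonneg_right h hz)
  · intro h
    have sz : IsSelfAdjoint z := .of_nonneg hz
    have h0 : 0 ≤ z * z := by have := star_mul_self_nonneg z; rwa [sz.star_eq] at this
    have h1 := CStarAlgebra.norm_le_norm_of_nonneg_of_le h0 h
    have h2 : ‖z * z‖ = ‖z‖ * ‖z‖ := by
      have := CStarRing.norm_star_mul_self (x := z)
      rwa [sz.star_eq] at this
    rw [h2, norm_smul, Real.norm_of_nonneg ht] at h1
    by_contra hc
    push Not at hc
    have : 0 < ‖z‖ := ht.trans_lt hc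
    nlinarith

theorem norm_iff (T : B →ₗ[ℂ] C) (hT : ∀ x, 0 ≤ x ↔ 0 ≤ T x) (Q : B)
    (H : ∀ b b', T b * T b' + T b' * T b = T (b * Q * b' + b' * Q * b)) (b : B) (hb : 0 ≤ b)
    (t : ℝ) (ht : 0 ≤ t) : ‖T b‖ ≤ t ↔ 0 ≤ t • b - b * Q * b := by
  have h1 : T b * T b = T (b * Q * b) := by
    have := H b b
    rw [map_add, ← two_smul ℂ, ← two_smul ℂ] at this
    exact smul_right_injective _ two_ne_zero this
  have h2 : T (t • b) = t • T b := by
    rw [← Complex.coe_smul, map_smul, Complex.coe_smul]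
  rw [norm_le_iff_sq ((hT b).1 hb) ht, ← sub_nonneg, h1, hT, map_sub, h2]

theorem norm_eq_pos (T : B →ₗ[ℂ] C) (hT : ∀ x, 0 ≤ x ↔ 0 ≤ T x)
    (T' : B →ₗ[ℂ] C') (hT' : ∀ x, 0 ≤ x ↔ 0 ≤ T' x) (Q : B)
    (H : ∀ b b', T b * T b' + T b' * T b = T (b * Q * b' + b' * Q * b))
    (H' : ∀ b b', T' b * T' b' + T' b' * T' b = T' (b * Q * b' + b' * Q * b))
    (b : B) (hb : 0 ≤ b) : ‖T b‖ = ‖T' b‖ := by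
  apply le_antisymm
  · rw [norm_iff T hT Q H b hb _ (norm_nonneg _), ← norm_iff T' hT' Q H' b hb _ (norm_nonneg _)]
  · rw [norm_iff T' hT' Q H' b hb _ (norm_nonneg _), ← norm_iff T hT Q H b hb _ (norm_nonneg _)]

theorem norm_eq_sa (T : B →ₗ[ℂ] C) (hT : ∀ x, 0 ≤ x ↔ 0 ≤ T x)
    (T' : B →ₗ[ℂ] C') (hT' : ∀ x, 0 ≤ x ↔ 0 ≤ T' x) (Q : B) (hQ : 0 ≤ Q)
    (H : ∀ b b', T b * T b' + T b' * T b = T (b * Q * b' + b' * Q * b))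
    (H' : ∀ b b', T' b * T' b' + T' b' * T' b = T' (b * Q * b' + b' * Q * b))
    (b : B) (hb : IsSelfAdjoint b) : ‖T b‖ = ‖T' b‖ := by
  have h1 : T b * T b = T (b * Q * b) := by
    have := H b b
    rw [map_add, ← two_smul ℂ, ← two_smul ℂ] at this
    exact smul_right_injective _ two_ne_zero this
  have h2 : T' b * T' b = T' (b * Q * b) := by
    have := H' b b
    rw [map_add, ← two_smul ℂ, ← two_smul ℂ] at this
    exact smul_right_injective _ two_ne_zero this
  have h3 := norm_eq_pos T hT T' hT' Q H H' (b * Q * b) (hb.conjugate_nonneg hQ)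
  have s1 : star (T b) = T b := by rw [← map_star_of_pos T (fun x => (hT x).1), hb.star_eq]
  have s2 : star (T' b) = T' b := by rw [← map_star_of_pos T' (fun x => (hT' x).1), hb.star_eq]
  have n1 := CStarRing.norm_star_mul_self (x := T b)
  have n2 := CStarRing.norm_star_mul_self (x := T' b)
  rw [s1, h1] at n1
  rw [s2, h2, ← h3, n1] at n2
  exact (mul_self_inj (norm_nonneg _) (norm_nonneg _)).1 n2

theorem norm_le_gen (T : B →ₗ[ℂ] C) (hT : ∀ x, 0 ≤ x ↔ 0 ≤ T x)
    (T' : B →ₗ[ℂ] C') (hT' : ∀ x, 0 ≤ x ↔ 0 ≤ T' x) (Q : B) (hQ : 0 ≤ Q)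
    (H : ∀ b b', T b * T b' + T b' * T b = T (b * Q * b' + b' * Q * b))
    (H' : ∀ b b', T' b * T' b' + T' b' * T' b = T' (b * Q * b' + b' * Q * b))
    (b : B) : ‖T' b‖ ≤ 2 * ‖T b‖ := by
  have e1 : (2 : ℂ) • b = (b + star b) + Complex.I • (Complex.I • (star b - b)) := by
    rw [smul_smul, Complex.I_mul_I, two_smul]; simp
  have s1 : IsSelfAdjoint (b + star b) := .add_star_self b
  have s2 : IsSelfAdjoint (Complex.I • (star b - b)) := by
    rw [IsSelfAdjoint]; simp [smul_sub]; abel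
  have n1 := norm_eq_sa T hT T' hT' Q hQ H H' _ s1
  have n2 := norm_eq_sa T hT T' hT' Q hQ H H' _ s2
  have m1 : ‖T (b + star b)‖ ≤ 2 * ‖T b‖ := by
    rw [map_add, map_star_of_pos T (fun x => (hT x).1)]
    refine (norm_add_le _ _).trans ?_
    rw [norm_star]; linarith
  have m2 : ‖T (Complex.I • (star b - b))‖ ≤ 2 * ‖T b‖ := by
    rw [map_smul, norm_smul, map_sub, map_star_of_pos T (fun x => (hT x).1)]
    simp only [Complex.norm_I, one_mul]
    refine (norm_sub_le _ _).trans ?_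
    rw [norm_star]; linarith
  have h := congrArg (fun x => ‖T' x‖) e1
  simp only [map_smul T', map_add T' (b + star b), norm_smul] at h
  have h4 := norm_add_le (T' (b + star b)) (Complex.I • T' (Complex.I • (star b - b)))
  rw [norm_smul (Complex.I)] at h4
  simp only [Complex.norm_I, one_mul, map_smul, map_smul T', Complex.norm_ofNat] at h h4 n2 m2
  linarith

theorem jordan_of_maps (T : B →ₗ[ℂ] C) (hT : ∀ x, 0 ≤ x ↔ 0 ≤ T x)
    (T' : B →ₗ[ℂ] C') (hT' : ∀ x, 0 ≤ x ↔ 0 ≤ T' x) (Q : B) (hQ : 0 ≤ Q)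
    (H : ∀ b b', T b * T b' + T b' * T b = T (b * Q * b' + b' * Q * b))
    (H' : ∀ b b', T' b * T' b' + T' b' * T' b = T' (b * Q * b' + b' * Q * b))
    (d : DenseRange T) (d' : DenseRange T') :
    ∃ ψ : C ≃ₗ[ℂ] C', (∀ x, ψ (star x) = star (ψ x)) ∧
      ∀ x y, ψ (x * y + y * x) = ψ x * ψ y + ψ y * ψ x := by
  let Ψ := (LinearEquiv.refl ℂ B).extend T T' d
    ⟨2, norm_le_gen T hT T' hT' Q hQ H H'⟩ d' ⟨2, norm_le_gen T' hT' T hT Q hQ H' H⟩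
  have hΨ : ∀ b, Ψ (T b) = T' b := fun b => LinearEquiv.extend_eq _ _ _ _ _ _ _ _
  have hc : Continuous Ψ := Ψ.continuous
  refine ⟨Ψ.toLinearEquiv, ?_, ?_⟩
  · intro x
    show Ψ (star x) = star (Ψ x)
    refine d.induction_on (p := fun x => Ψ (star x) = star (Ψ x)) x
      (isClosed_eq (by fun_prop) (by fun_prop)) ?_
    intro b
    rw [← map_star_of_pos T (fun x => (hT x).1), hΨ, hΨ, map_star_of_pos T' (fun x => (hT' x).1)]
  · intro x y
    show Ψ (x * y + y * x) = Ψ x * Ψ y + Ψ y * Ψ x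
    refine d.induction_on₂ (p := fun x y => Ψ (x * y + y * x) = Ψ x * Ψ y + Ψ y * Ψ x)
      (isClosed_eq (by fun_prop) (by fun_prop)) ?_ x y
    intro b b'
    rw [H, hΨ, hΨ, hΨ, H']

theorem dense_conj_s7 {k : B} (hk : IsSelfAdjoint k) (d : DenseRange (fun b => k * b)) :
    DenseRange (fun b => k * b * k) := by
  intro x
  refine closure_minimal ?_ isClosed_closure (d x)
  rintro _ ⟨b, rfl⟩
  have h1 : star b ∈ closure (Set.range (fun b => k * b)) := d _
  have hc : Continuous (fun y : B => k * star y) := by fun_prop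
  have h2 := map_mem_closure hc h1 (t := Set.range (fun b => k * b * k)) (by
    rintro _ ⟨c, rfl⟩
    exact ⟨star c, by simp [hk.star_eq, mul_assoc]⟩)
  simpa using h2

theorem nonneg_of_conj' {x : B} (h : ∀ d, 0 ≤ star d * x * d) : 0 ≤ x := by
  have sx : IsSelfAdjoint x := by
    have hy : ∀ d, star d * (x - star x) * d = 0 := by
      intro d
      have := (IsSelfAdjoint.of_nonneg (h d)).star_eq
      simp only [star_mul, star_star] at this
      rw [mul_sub, sub_mul, sub_eq_zero, ← this, mul_assoc]
    set y := x - star x with hyd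
    have ys : star y = - y := by simp [hyd]
    have h1 := hy y
    have h2 : star (star y * y) * (star y * y) = 0 := by
      have : star (star y * y) * (star y * y) = - (star y * y * y * y) := by
        rw [star_mul, star_star, ys]; simp [mul_assoc]
      rw [this, h1]; simp
    have h3 := (CStarRing.star_mul_self_eq_zero_iff _).1 h2
    have h4 := (CStarRing.star_mul_self_eq_zero_iff _).1 h3
    exact (sub_eq_zero.1 h4).symm
  have hn := h x⁻
  have n0 : 0 ≤ x⁻ := CFC.negPart_nonneg x
  have sn : star x⁻ = x⁻ := (IsSelfAdjoint.of_nonneg n0).star_eq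
  have hx := CFC.posPart_sub_negPart x sx
  have e1 : star x⁻ * x * x⁻ = - (x⁻ * x⁻ * x⁻) := by
    rw [sn]
    nth_rewrite 2 [← hx]
    rw [mul_sub, CFC.negPart_mul_posPart]; simp
  have h5 : 0 ≤ x⁻ * x⁻ * x⁻ := (IsSelfAdjoint.of_nonneg n0).conjugate_nonneg n0
  rw [e1] at hn
  have h6 : x⁻ * x⁻ * x⁻ = 0 := le_antisymm (by simpa using hn) h5
  have h7 : star (x⁻ * x⁻) * (x⁻ * x⁻) = 0 := by
    rw [star_mul, sn, ← mul_assoc, h6, zero_mul]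
  have h8 := (CStarRing.star_mul_self_eq_zero_iff _).1 h7
  have h9 : x⁻ = 0 := (CStarRing.star_mul_self_eq_zero_iff _).1 (by rw [sn, h8])
  rw [h9, sub_zero] at hx
  rw [← hx]; exact CFC.posPart_nonneg x

theorem nonneg_conj_iff {k : B} (hk : IsSelfAdjoint k) (d : DenseRange (fun b => k * b)) (x : B) :
    0 ≤ x ↔ 0 ≤ k * x * k := by
  refine ⟨fun h => hk.conjugate_nonneg h, fun h => nonneg_of_conj' fun y => ?_⟩
  refine d.induction_on (p := fun y => 0 ≤ star y * x * y) y ?_ ?_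
  · exact CStarAlgebra.isClosed_nonneg.preimage (f := fun y : B => star y * x * y) (by fun_prop)
  · intro c
    have := star_left_conjugate_nonneg h c
    simpa [hk.star_eq, mul_assoc] using this

theorem assemble (φ : B ≃ₗ[ℂ] C) (hφ : ∀ x, 0 ≤ x ↔ 0 ≤ φ x) (hc : Continuous φ)
    {e Q k : B} (he : 0 ≤ e) (hd : DenseRange (fun b => e * b))
    (hk : IsSelfAdjoint k) (hkk : k * k = Q) (hQ : 0 ≤ Q) (hdk : DenseRange (fun b => k * b))
    (H : ∀ b, 0 ≤ b → φ (e * b * e) * φ (e * b * e) = φ (e * (b * Q * b) * e)) :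
    ∃ ψ : B ≃ₗ[ℂ] C, (∀ x, ψ (star x) = star (ψ x)) ∧
      ∀ x y, ψ (x * y + y * x) = ψ x * ψ y + ψ y * ψ x := by
  have se : IsSelfAdjoint e := .of_nonneg he
  let T : B →ₗ[ℂ] B := LinearMap.mulLeftRight ℂ (k, k)
  let T' : B →ₗ[ℂ] C := φ.toLinearMap ∘ₗ LinearMap.mulLeftRight ℂ (e, e)
  have hT : ∀ b, T b = k * b * k := fun b => by simp [T]
  have hT' : ∀ b, T' b = φ (e * b * e) := fun b => by simp [T']
  refine jordan_of_maps T ?_ T' ?_ Q hQ ?_ ?_ ?_ ?_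
  · intro x; rw [hT]; exact nonneg_conj_iff hk hdk x
  · intro x; rw [hT', ← hφ]; exact nonneg_conj_iff se hd x
  · intro b b'
    simp only [hT, ← hkk, mul_add, add_mul, mul_assoc]
  · apply polarize
    intro b hb
    rw [hT', hT', H b hb]
  · exact dense_conj_s7 hk hdk
  · exact (φ.surjective.denseRange.comp (dense_conj_s7 se hd) hc)
end ext
section final
set_option linter.unusedSectionVars false
open Unitization
variable {A B : Type*} [NonUnitalCStarAlgebra A] [PartialOrder A] [StarOrderedRing A]
  [NonUnitalCStarAlgebra B] [PartialOrder B] [StarOrderedRing B]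

noncomputable def liftU (φ : B →ₗ[ℂ] A) : Unitization ℂ B →ₗ[ℂ] Unitization ℂ A :=
  (Unitization.inrHom ℂ ℂ A) ∘ₗ φ ∘ₗ (Unitization.sndHom ℂ ℂ B)

theorem liftU_apply (φ : B →ₗ[ℂ] A) (x : Unitization ℂ B) :
    liftU φ x = ((φ x.snd : A) : Unitization ℂ A) := rfl

theorem eq_inr {x : Unitization ℂ B} (h : Unitization.fstHom ℂ B x = 0) :
    x = (x.snd : Unitization ℂ B) := by
  ext
  · simpa using h
  · simp

theorem exists_bound (φ : B →ₗ[ℂ] A) (hφ : ∀ x, 0 ≤ x → 0 ≤ φ x) :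
    ∃ M : ℝ, 0 ≤ M ∧ ∀ x, ‖φ x‖ ≤ M * ‖x‖ := by
  obtain ⟨C, hC⟩ := PositiveLinearMap.exists_norm_apply_le (PositiveLinearMap.mk₀ φ hφ)
  exact ⟨C, C.2, hC⟩

theorem exists_OI (φ : B ≃ₗ[ℂ] A) (hφ : ∀ x, 0 ≤ x ↔ 0 ≤ φ x) :
    ∃ M : ℝ, OI (Unitization.fstHom ℂ B) (Unitization.fstHom ℂ A)
      (liftU φ.toLinearMap) (liftU φ.symm.toLinearMap) M := by
  obtain ⟨M, M0, hM⟩ := exists_bound φ.toLinearMap (fun x => (hφ x).1)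
  obtain ⟨N, N0, hN⟩ := exists_bound φ.symm.toLinearMap
    (fun x hx => (hφ _).2 (by simpa using hx))
  refine ⟨M + N, ⟨by positivity, ?_, ?_, ?_, ?_, ?_, ?_, ?_, ?_⟩⟩
  · intro d h hd
    rw [eq_inr h, Unitization.inr_nonneg_iff] at hd
    rw [liftU_apply, Unitization.inr_nonneg_iff]
    exact (hφ _).1 hd
  · intro d h hd
    rw [eq_inr h, Unitization.inr_nonneg_iff] at hd
    rw [liftU_apply, Unitization.inr_nonneg_iff]
    exact (hφ _).2 (by simpa using hd)
  · intro d; simp [liftU_apply]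
  · intro d; simp [liftU_apply]
  · intro d h
    rw [eq_inr h]; simp [liftU_apply]
  · intro d h
    rw [eq_inr h]; simp [liftU_apply]
  · intro d h
    rw [eq_inr h, liftU_apply, Unitization.norm_inr, Unitization.norm_inr, Unitization.snd_inr]
    refine (hM _).trans ?_
    gcongr; linarith
  · intro d h
    rw [eq_inr h, liftU_apply, Unitization.norm_inr, Unitization.norm_inr, Unitization.snd_inr]
    refine (hN _).trans ?_
    gcongr; linarith

theorem dense_of_ge {e Q : B} (he : 0 ≤ e) (hQ : 0 ≤ Q) (d : DenseRange (fun b => e * b))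
    {K : ℝ} (hK : 0 ≤ K) (hle : (e : Unitization ℂ B) * e ≤ K • (Q : Unitization ℂ B)) :
    DenseRange (fun b => CFC.sqrt Q * b) := by
  have se : IsSelfAdjoint e := .of_nonneg he
  have hee : 0 ≤ e * e := by have := star_mul_self_nonneg e; rwa [se.star_eq] at this
  have h1 : e * e ∈ closure (Set.range (fun b => CFC.sqrt Q * b)) := by
    have hT : (0 : Unitization ℂ B) ≤ (e : Unitization ℂ B) * e := by
      rw [← Unitization.inr_mul, Unitization.inr_nonneg_iff]; exact hee
    rw [Metric.mem_closure_iff]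
    intro δ hδ
    set N := ‖(e : Unitization ℂ B) * e‖ with hN
    have hN0 : 0 ≤ N := norm_nonneg _
    obtain ⟨ε, hε, hεδ⟩ : ∃ ε : ℝ, 0 < ε ∧ 2 * √(N * K * ε) < δ := by
      have hc : Filter.Tendsto (fun ε : ℝ => 2 * √(N * K * ε)) (nhdsWithin 0 (Set.Ioi 0))
          (nhds 0) := by
        have : Continuous (fun ε : ℝ => 2 * √(N * K * ε)) := by fun_prop
        have h := this.tendsto 0
        simp only [mul_zero, Real.sqrt_zero] at h
        exact h.mono_left nhdsWithin_le_nhds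
      have h2 := hc.eventually (gt_mem_nhds hδ)
      obtain ⟨ε, h3, h4⟩ := (h2.and self_mem_nhdsWithin).exists
      exact ⟨ε, h4, h3⟩
    obtain ⟨R, s, h, S, P⟩ := exists_pack (Q : Unitization ℂ B)
      (Unitization.inr_nonneg_iff.2 hQ) ε hε
    have hR : R = ((CFC.sqrt Q : B) : Unitization ℂ B) := by
      rw [← Unitization.sqrt_inr]; exact (CFC.sqrt_unique P.RR P.R0).symm
    have ha := P.approx hε hT hK hle le_rfl
    have hI : Unitization.fstHom ℂ B (s * (e * e) * h) = 0 := by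
      simp [map_mul]
    refine ⟨_, ⟨(s * ((e : Unitization ℂ B) * e) * h).snd, rfl⟩, ?_⟩
    rw [dist_comm, dist_eq_norm, ← Unitization.norm_inr (𝕜 := ℂ), Unitization.inr_sub,
      Unitization.inr_mul, Unitization.inr_mul, ← eq_inr hI, ← hR]
    have e1 : R * (s * ((e : Unitization ℂ B) * e) * h) = h * ((e : Unitization ℂ B) * e) * h := by
      rw [← mul_assoc, ← mul_assoc, P.Rs]
    rw [e1]
    exact ha.trans_lt hεδ
  have h2 : ∀ b, e * b ∈ closure (Set.range (fun b => CFC.sqrt Q * b)) := by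
    intro b
    have hc : Continuous (fun y : B => e * y) := by fun_prop
    have := map_mem_closure hc (d b) (t := closure (Set.range (fun b => CFC.sqrt Q * b))) (by
      rintro _ ⟨c, rfl⟩
      have hc' : Continuous (fun y : B => y * c) := by fun_prop
      have h3 := map_mem_closure hc' h1 (t := Set.range (fun b => CFC.sqrt Q * b)) (by
        rintro _ ⟨x, rfl⟩
        exact ⟨x * c, by simp [mul_assoc]⟩)
      simpa [mul_assoc] using h3)
    rwa [closure_closure] at this
  intro x
  refine closure_minimal ?_ isClosed_closure (d x)
  rintro _ ⟨b, rfl⟩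
  exact h2 b

theorem main_thm (φ : B ≃ₗ[ℂ] A) (hφ : ∀ x, 0 ≤ x ↔ 0 ≤ φ x) {e : B} (he : 0 ≤ e)
    (d : DenseRange (fun b => e * b)) :
    ∃ ψ : B ≃ₗ[ℂ] A, (∀ x, ψ (star x) = star (ψ x)) ∧
      ∀ x y, ψ (x * y + y * x) = ψ x * ψ y + ψ y * ψ x := by
  obtain ⟨M, O⟩ := exists_OI φ hφ
  have hpe : 0 ≤ φ e := (hφ e).1 he
  have hQ : 0 ≤ φ.symm (φ e * φ e) := by
    rw [hφ, LinearEquiv.apply_symm_apply]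
    have := star_mul_self_nonneg (φ e)
    rwa [(IsSelfAdjoint.of_nonneg hpe).star_eq] at this
  have Ie : Unitization.fstHom ℂ B (e : Unitization ℂ B) = 0 := by simp
  have he' : (0 : Unitization ℂ B) ≤ e := Unitization.inr_nonneg_iff.2 he
  have k2 := key2 O Ie he'
  have k1 := fun (b : B) (hb : 0 ≤ b) => key1 O Ie he' (Unitization.inr_nonneg_iff.2 hb)
  have hF : ∀ b : B, liftU φ.toLinearMap (b : Unitization ℂ B) = (φ b : Unitization ℂ A) :=
    fun b => rfl
  have hG : ∀ b : A, liftU φ.symm.toLinearMap (b : Unitization ℂ A)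
      = (φ.symm b : Unitization ℂ B) := fun b => rfl
  have hM : 0 < M + 1 := by linarith [O.M0]
  rw [hF, ← Unitization.inr_mul, ← Unitization.inr_mul, hG] at k2
  have hle : (e : Unitization ℂ B) * e ≤ (M + 1) • (φ.symm (φ e * φ e) : Unitization ℂ B) := by
    have := smul_le_smul_of_nonneg_left k2 hM.le
    rwa [smul_smul, mul_inv_cancel₀ hM.ne', one_smul, Unitization.inr_mul] at this
  obtain ⟨N, N0, hN⟩ := exists_bound φ.toLinearMap (fun x => (hφ x).1)
  have hc : Continuous φ := (φ.toLinearMap.mkContinuous N hN).continuous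
  refine assemble φ hφ hc he d (IsSelfAdjoint.of_nonneg (CFC.sqrt_nonneg (φ.symm (φ e * φ e))))
    (CFC.sqrt_mul_sqrt_self _ hQ) hQ (dense_of_ge he hQ d hM.le hle) ?_
  intro b hb
  have h := k1 b hb
  rw [← Unitization.inr_mul, ← Unitization.inr_mul, hF, hF, ← Unitization.inr_mul, hG,
    ← Unitization.inr_mul, hG, ← Unitization.inr_mul, ← Unitization.inr_mul,
    ← Unitization.inr_mul] at h
  have h2 := Unitization.inr_injective h
  rw [LinearEquiv.symm_apply_eq] at h2
  rw [h2]
  simp only [mul_assoc]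

end final

theorem stmt7 {A B : Type*} [NonUnitalCStarAlgebra A] [NonUnitalCStarAlgebra B]
    -- `B` is σ-unital
    (hσ : ∃ e : B, (∃ f : B, e = star f * f) ∧ Dense (Set.range fun b : B => e * b))
    -- `φ` is an order isomorphism from `B` onto `A`: a linear bijection with `φ(B₊) = A₊`
    (φ : B ≃ₗ[ℂ] A)
    (hpos : ⇑φ '' {x : B | ∃ y : B, x = star y * y} = {x : A | ∃ y : A, x = star y * y}) :
    -- there is a Jordan isomorphism `ψ : B → A`
    ∃ ψ : B ≃ₗ[ℂ] A,
      (∀ x : B, ψ (star x) = star (ψ x)) ∧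
      (∀ x y : B, ψ ((2 : ℂ)⁻¹ • (x * y + y * x)) =
        (2 : ℂ)⁻¹ • (ψ x * ψ y + ψ y * ψ x)) := by
  letI : PartialOrder A := CStarAlgebra.spectralOrder A
  haveI : StarOrderedRing A := CStarAlgebra.spectralOrderedRing A
  letI : PartialOrder B := CStarAlgebra.spectralOrder B
  haveI : StarOrderedRing B := CStarAlgebra.spectralOrderedRing B
  obtain ⟨e, hf, hd⟩ := hσ
  have hφ : ∀ x : B, 0 ≤ x ↔ 0 ≤ φ x := by
    intro x
    rw [CStarAlgebra.nonneg_iff_eq_star_mul_self, CStarAlgebra.nonneg_iff_eq_star_mul_self]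
    constructor
    · intro h
      have : φ x ∈ ⇑φ '' {x : B | ∃ y : B, x = star y * y} := ⟨x, h, rfl⟩
      rw [hpos] at this
      exact this
    · intro h
      have : φ x ∈ {x : A | ∃ y : A, x = star y * y} := h
      rw [← hpos] at this
      obtain ⟨z, hz, hzx⟩ := this
      rw [← φ.injective hzx]
      exact hz
  obtain ⟨ψ, h1, h2⟩ := main_thm φ hφ (CStarAlgebra.nonneg_iff_eq_star_mul_self.2 hf) hd
  refine ⟨ψ, h1, fun x y => ?_⟩
  rw [map_smul, h2]
end

section
/- Let H be a complex Hilbert space and A ⊆ B(H) a nondegenerate σ-unital C*-subalgebra. If h ∈ B(H) is positive, invertible in B(H), and satisfies a h a' ∈ A for all a, a' ∈ A (h is a quasi-multiplier of A), then there exists an invertible operator S ∈ B(H) with SA ⊆ A (S is a left multiplier of A) and S*S = h. -/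
open ContinuousLinearMap

variable {H : Type*} [NormedAddCommGroup H] [InnerProductSpace ℂ H] [CompleteSpace H]

theorem aux_dense (k : H →L[ℂ] H) (hk : IsSelfAdjoint k) (hi : ∀ x, k x = 0 → x = 0) :
    DenseRange k := by
  have h1 : (LinearMap.range (k : H →ₗ[ℂ] H)).topologicalClosure = ⊤ := by
    rw [Submodule.topologicalClosure_eq_top_iff, Submodule.eq_bot_iff]
    intro x hx
    apply hi
    rw [Submodule.mem_orthogonal] at hx
    have h2 := hx (k (k x)) ⟨k x, rfl⟩
    have h3 : inner ℂ (k (k x)) x = inner ℂ (k x) (k x) := by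
      have := ContinuousLinearMap.adjoint_inner_left k x (k x)
      rwa [ContinuousLinearMap.isSelfAdjoint_iff'.mp hk] at this
    rw [h3] at h2
    exact inner_self_eq_zero.mp h2
  have h4 := Submodule.dense_iff_topologicalClosure_eq_top.mpr h1
  exact h4

theorem aux_inj (e : H →L[ℂ] H) (he : IsSelfAdjoint e) (hd : DenseRange e) (x : H)
    (hx : e x = 0) : x = 0 := by
  apply hd.eq_zero_of_inner_left ℂ
  intro y
  have := ContinuousLinearMap.adjoint_inner_left e y x
  rw [ContinuousLinearMap.isSelfAdjoint_iff'.mp he, hx] at this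
  simpa using this.symm

theorem stmt8
    (A : NonUnitalStarSubalgebra ℂ (H →L[ℂ] H))
    (hAc : IsClosed (A : Set (H →L[ℂ] H)))
    -- `A` is nondegenerate
    (hnd : Dense (Submodule.span ℂ {v : H | ∃ a ∈ A, ∃ ξ : H, a ξ = v} : Set H))
    -- `A` is σ-unital
    (hσ : ∃ e ∈ A, 0 ≤ e ∧
      (A : Set (H →L[ℂ] H)) ⊆ closure {y : H →L[ℂ] H | ∃ a ∈ A, y = e * a})
    -- `h` is a positive invertible quasi-multiplier of `A`
    (h : H →L[ℂ] H) (hpos : 0 ≤ h) (hinv : IsUnit h)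
    (hqm : ∀ a ∈ A, ∀ a' ∈ A, a * h * a' ∈ A) :
    ∃ S : H →L[ℂ] H, IsUnit S ∧ (∀ a ∈ A, S * a ∈ A) ∧ star S * S = h := by
  obtain ⟨e, heA, he0, hσ⟩ := hσ
  have hesa : IsSelfAdjoint e := he0.isSelfAdjoint
  have hed : DenseRange e := by
    have h1 : Submodule.span ℂ {v : H | ∃ a ∈ A, ∃ ξ : H, a ξ = v} ≤
        (LinearMap.range (e : H →ₗ[ℂ] H)).topologicalClosure := by
      rw [Submodule.span_le]
      rintro _ ⟨a, ha, ξ, rfl⟩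
      have hcont : Continuous (fun y : H →L[ℂ] H => y ξ) := by fun_prop
      have := map_mem_closure (t := (LinearMap.range (e : H →ₗ[ℂ] H) : Set H)) hcont (hσ ha)
        (by rintro _ ⟨b, hb, rfl⟩; exact ⟨b ξ, rfl⟩)
      exact this
    have h2 := hnd.mono (show _ ⊆ closure (Set.range e) from fun x hx => by
      exact h1 hx)
    exact dense_closure.mp h2
  have hei := aux_inj e hesa hed
  set r := CFC.sqrt h with hr
  have hr0 : 0 ≤ r := CFC.sqrt_nonneg h
  have hrr : r * r = h := CFC.sqrt_mul_sqrt_self h hpos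
  have hrsa : star r = r := hr0.isSelfAdjoint.star_eq
  have hru : IsUnit r := by
    rw [← hrr] at hinv
    exact ((Commute.refl r).isUnit_mul_iff.mp hinv).1
  obtain ⟨q, hq⟩ := hru.exists_left_inv
  have hm0 : 0 ≤ e * h * e := by
    have := star_left_conjugate_nonneg hpos e
    rwa [hesa.star_eq] at this
  set k := CFC.sqrt (e * h * e) with hk
  have hk0 : 0 ≤ k := CFC.sqrt_nonneg _
  have hkk : k * k = e * h * e := CFC.sqrt_mul_sqrt_self _ hm0
  have hksa : IsSelfAdjoint k := hk0.isSelfAdjoint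
  have hkA : k ∈ A := by
    rw [hk, CFC.sqrt_eq_real_sqrt _ hm0]
    exact cfcₙ_mem (𝕜' := ℂ) (hs := hAc) _ (hqm e heA e heA)
  have hnorm : ∀ x, ‖k x‖ = ‖r (e x)‖ := by
    intro x
    have h1 : star k * k = star (r * e) * (r * e) := by
      rw [hksa.star_eq, hkk, star_mul, hrsa, hesa.star_eq, ← hrr]; simp only [mul_assoc]
    have h2 : ∀ T : H →L[ℂ] H, inner ℂ ((star T * T) x) x = ((‖T x‖ ^ 2 : ℝ) : ℂ) := by
      intro T
      have := ContinuousLinearMap.adjoint_inner_left T x (T x)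
      rw [inner_self_eq_norm_sq_to_K] at this
      simpa [ContinuousLinearMap.star_eq_adjoint] using this
    have h3 := (h2 k).symm.trans ((congrArg (fun T : H →L[ℂ] H => inner ℂ (T x) x) h1).trans
      (h2 (r * e)))
    have h4 : ‖k x‖ ^ 2 = ‖r (e x)‖ ^ 2 := by exact_mod_cast h3
    exact (sq_eq_sq₀ (norm_nonneg _) (norm_nonneg _)).mp h4
  have hqr : ∀ x, q (r x) = x := fun x => by
    have := congrArg (fun T : H →L[ℂ] H => T x) hq
    simpa using this
  have hb1 : ∀ x, ‖k x‖ ≤ ‖r‖ * ‖e x‖ := fun x => by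
    rw [hnorm]; exact r.le_opNorm _
  have hb2 : ∀ x, ‖e x‖ ≤ ‖q‖ * ‖k x‖ := fun x => by
    rw [hnorm]
    conv_lhs => rw [← hqr (e x)]
    exact q.le_opNorm _
  have hkd : DenseRange k := aux_dense k hksa (fun x hx => hei x (by
    have := hb2 x
    rw [hx] at this
    simpa using this))
  have cancel : ∀ (X Y g : H →L[ℂ] H), DenseRange g → X * g = Y * g → X = Y := by
    intro X Y g hg hXY
    ext x
    exact congrFun (hg.equalizer X.continuous Y.continuous
      (funext fun y => congrArg (fun T : H →L[ℂ] H => T y) hXY)) x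
  obtain ⟨S, hS⟩ : ∃ S : H →L[ℂ] H, S * e = k :=
    ⟨LinearMap.extendOfNorm (k : H →ₗ[ℂ] H) (e : H →ₗ[ℂ] H), by
      ext x; exact LinearMap.extendOfNorm_eq (f := (k : H →ₗ[ℂ] H)) (e := (e : H →ₗ[ℂ] H))
        hed ⟨_, hb1⟩ x⟩
  obtain ⟨T, hT⟩ : ∃ T : H →L[ℂ] H, T * k = e :=
    ⟨LinearMap.extendOfNorm (e : H →ₗ[ℂ] H) (k : H →ₗ[ℂ] H), by
      ext x; exact LinearMap.extendOfNorm_eq (f := (e : H →ₗ[ℂ] H)) (e := (k : H →ₗ[ℂ] H))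
        hkd ⟨_, hb2⟩ x⟩
  refine ⟨S, ?_, ?_, ?_⟩
  · have h1 : S * T = 1 := cancel _ _ k hkd (by rw [mul_assoc, hT, hS, one_mul])
    have h2 : T * S = 1 := cancel _ _ e hed (by rw [mul_assoc, hS, hT, one_mul])
    exact ⟨⟨S, T, h1, h2⟩, rfl⟩
  · intro a ha
    have hcont : Continuous (fun y : H →L[ℂ] H => S * y) := continuous_const.mul continuous_id
    have := map_mem_closure (t := (A : Set (H →L[ℂ] H))) hcont (hσ ha) (by
      rintro _ ⟨b, hb, rfl⟩
      change S * (e * b) ∈ A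
      rw [← mul_assoc, hS]
      exact mul_mem hkA hb)
    rwa [hAc.closure_eq] at this
  · have h1 : e * (star S * S * e) = e * (h * e) := by
      have h2 : e * star S = k := by
        have := congrArg star hS
        rwa [star_mul, hesa.star_eq, hksa.star_eq] at this
      rw [mul_assoc, ← mul_assoc, h2, hS, hkk, mul_assoc]
    apply cancel _ _ e hed
    ext x
    have h3 := congrArg (fun T : H →L[ℂ] H => T x) h1
    apply sub_eq_zero.mp
    apply hei
    rw [map_sub]
    exact sub_eq_zero.mpr h3
end

section
/- Let H be a complex Hilbert space and A ⊆ B(H) a nondegenerate σ-unital C*-subalgebra. If h ∈ B(H) satisfies h ≥ 0 and a h a' ∈ A for all a, a' ∈ A (h is a positive quasi-multiplier of A), then there exists T ∈ B(H) with TA ⊆ A (T is a left multiplier of A) and T*T = h. -/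
open ContinuousLinearMap

variable {H : Type*} [NormedAddCommGroup H] [InnerProductSpace ℂ H] [CompleteSpace H]

theorem stmt9
    (A : NonUnitalStarSubalgebra ℂ (H →L[ℂ] H))
    (hAc : IsClosed (A : Set (H →L[ℂ] H)))
    -- `A` is nondegenerate
    (hnd : Dense (Submodule.span ℂ {v : H | ∃ a ∈ A, ∃ ξ : H, a ξ = v} : Set H))
    -- `A` is σ-unital
    (hσ : ∃ e ∈ A, 0 ≤ e ∧
      (A : Set (H →L[ℂ] H)) ⊆ closure {y : H →L[ℂ] H | ∃ a ∈ A, y = e * a})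
    -- `h` is a positive quasi-multiplier of `A`
    (h : H →L[ℂ] H) (hpos : 0 ≤ h)
    (hqm : ∀ a ∈ A, ∀ a' ∈ A, a * h * a' ∈ A) :
    ∃ T : H →L[ℂ] H, (∀ a ∈ A, T * a ∈ A) ∧ star T * T = h := by
  obtain ⟨e, heA, he0, hed⟩ := hσ
  have hesa : star e = e := (IsSelfAdjoint.of_nonneg he0).star_eq
  -- `e` has dense range
  have hdense : DenseRange (e.toLinearMap : H →ₗ[ℂ] H) := by
    have hsub : (Submodule.span ℂ {v : H | ∃ a ∈ A, ∃ ξ : H, a ξ = v}) ≤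
        (LinearMap.range (e.toLinearMap : H →ₗ[ℂ] H)).topologicalClosure := by
      rw [Submodule.span_le]
      rintro v ⟨a, ha, ξ, rfl⟩
      have hc : Continuous (fun y : H →L[ℂ] H => y ξ) := by fun_prop
      have := map_mem_closure hc (hed ha)
        (t := (LinearMap.range (e.toLinearMap : H →ₗ[ℂ] H) : Set H)) (by
          rintro y ⟨b, hb, rfl⟩
          exact ⟨b ξ, rfl⟩)
      exact this
    intro x
    have := closure_minimal (SetLike.coe_subset_coe.2 hsub)
      (Submodule.isClosed_topologicalClosure _) (hnd x)
    exact this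
  have hk0 : 0 ≤ e * h * e := by
    have := star_left_conjugate_nonneg hpos e
    rwa [hesa] at this
  obtain ⟨r, hrA, hr, hrr⟩ : ∃ r ∈ A, star r = r ∧ r * r = e * h * e := by
    refine ⟨CFC.sqrt (e * h * e), ?_, (IsSelfAdjoint.of_nonneg (CFC.sqrt_nonneg _)).star_eq,
      CFC.sqrt_mul_sqrt_self _ hk0⟩
    have hkA : e * h * e ∈ A := hqm e heA e heA
    rw [CFC.sqrt_eq_real_sqrt _ hk0]
    exact cfcₙ_mem (𝕜' := ℂ) (hs := hAc) _ hkA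
  obtain ⟨s, hs, hss⟩ : ∃ s : H →L[ℂ] H, star s = s ∧ s * s = h :=
    ⟨CFC.sqrt h, (IsSelfAdjoint.of_nonneg (CFC.sqrt_nonneg _)).star_eq,
      CFC.sqrt_mul_sqrt_self _ hpos⟩
  have hinner : ∀ x y, inner ℂ (r x) (r y) = inner ℂ (e x) (h (e y)) := by
    intro x y
    have h1 : r (r y) = e (h (e y)) := congrArg (fun t : H →L[ℂ] H => t y) hrr
    have h2 := adjoint_inner_right r x (r y)
    rw [← star_eq_adjoint, hr, h1] at h2
    have h3 := adjoint_inner_right e x (h (e y))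
    rw [← star_eq_adjoint, hesa] at h3
    rw [← h2, h3]
  have hnorm : ∀ x, ‖(r.toLinearMap : H →ₗ[ℂ] H) x‖ ≤ ‖s‖ * ‖(e.toLinearMap : H →ₗ[ℂ] H) x‖ := by
    intro x
    have h1 : inner ℂ (r x) (r x) = inner ℂ (s (e x)) (s (e x)) := by
      rw [hinner, ← hss]
      have h3 := adjoint_inner_right s (e x) (s (e x))
      rw [← star_eq_adjoint, hs] at h3
      exact h3
    have h2 : ‖r x‖ = ‖s (e x)‖ := by
      rw [inner_self_eq_norm_sq_to_K, inner_self_eq_norm_sq_to_K] at h1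
      have : ‖r x‖ ^ 2 = ‖s (e x)‖ ^ 2 := by exact_mod_cast h1
      exact (sq_eq_sq₀ (norm_nonneg _) (norm_nonneg _)).1 this
    change ‖r x‖ ≤ _
    rw [h2]
    exact s.le_opNorm _
  let T : H →L[ℂ] H := (r.toLinearMap : H →ₗ[ℂ] H).extendOfNorm (e.toLinearMap : H →ₗ[ℂ] H)
  have hT : ∀ x, T (e x) = r x := fun x => LinearMap.extendOfNorm_eq hdense ⟨_, hnorm⟩ x
  have hTe : T * e = r := by ext x; exact hT x
  refine ⟨T, ?_, ?_⟩
  · intro a ha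
    have hc : Continuous (fun y : H →L[ℂ] H => T * y) := by fun_prop
    have := map_mem_closure hc (hed ha) (t := (A : Set (H →L[ℂ] H))) (by
      rintro y ⟨b, hb, rfl⟩
      change T * (e * b) ∈ A
      rw [← mul_assoc, hTe]
      exact mul_mem hrA hb)
    rwa [hAc.closure_eq] at this
  · have key : ∀ x y, inner ℂ x ((star T * T) y) = inner ℂ x (h y) := by
      intro x y
      refine hdense.induction_on₂ (p := fun x y => inner ℂ x ((star T * T) y) = inner ℂ x (h y))
        (isClosed_eq (by fun_prop) (by fun_prop)) ?_ x y
      intro a b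
      have := adjoint_inner_right T (e a) (T (e b))
      rw [← star_eq_adjoint, hT, hT, hinner] at this
      rw [← hT b] at this
      exact this
    ext y
    exact ext_inner_left ℂ fun x => key x y
end

section
/- Let H be a complex Hilbert space and A ⊆ B(H) a nondegenerate σ-unital C*-subalgebra. If R ∈ B(H) satisfies ‖R‖ ≤ 1 and a R a' ∈ A for all a, a' ∈ A (R is a quasi-multiplier of A), then there exist operators L₁₁, L₁₂, L₂₁, L₂₂ ∈ B(H), each satisfying Lᵢⱼ A ⊆ A (each is a left multiplier of A), such that L₁₁*L₁₁ + L₂₁*L₂₁ = 1, L₁₂*L₁₂ + L₂₂*L₂₂ = 1, and R = L₁₁*L₁₂ + L₂₁*L₂₂. -/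
open ContinuousLinearMap

variable {H : Type*} [NormedAddCommGroup H] [InnerProductSpace ℂ H] [CompleteSpace H]

/-- The square root of `star c * c` can be found in any closed star subalgebra containing it. -/
theorem exists_factor_mem {B : Type*} [CStarAlgebra B] (S : NonUnitalStarSubalgebra ℂ B)
    (hS : IsClosed (S : Set B)) (c : B) (hc : star c * c ∈ S) :
    ∃ b ∈ S, star b * b = star c * c := by
  let _ : PartialOrder B := CStarAlgebra.spectralOrder B
  have : StarOrderedRing B := CStarAlgebra.spectralOrderedRing B
  have h0 : 0 ≤ star c * c := star_mul_self_nonneg c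
  refine ⟨CFC.sqrt (star c * c), ?_, ?_⟩
  · rw [CFC.sqrt_eq_real_sqrt _ h0]
    have := hS
    exact cfcₙ_mem (𝕜 := ℝ) (𝕜' := ℂ) (s := S) _ hc
  · rw [(IsSelfAdjoint.of_nonneg (CFC.sqrt_nonneg (star c * c))).star_eq,
      CFC.sqrt_mul_sqrt_self _ h0]

/-- Two by two matrices with entries in `A`. -/
def matSub {D : Type*} [CStarAlgebra D] [PartialOrder D] [StarOrderedRing D]
    (A : NonUnitalStarSubalgebra ℂ D) : NonUnitalStarSubalgebra ℂ (CStarMatrix (Fin 2) (Fin 2) D) where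
  carrier := {M | ∀ i j, M i j ∈ A}
  add_mem' h1 h2 i j := A.add_mem (h1 i j) (h2 i j)
  zero_mem' i j := A.zero_mem
  mul_mem' h1 h2 i j := by
    rw [CStarMatrix.mul_apply]
    exact sum_mem fun k _ => A.mul_mem (h1 i k) (h2 k j)
  smul_mem' c M h i j := SMulMemClass.smul_mem c (h i j)
  star_mem' h i j := by
    rw [CStarMatrix.star_apply]
    exact star_mem (h j i)

theorem isClosed_matSub {D : Type*} [CStarAlgebra D] [PartialOrder D] [StarOrderedRing D]
    (A : NonUnitalStarSubalgebra ℂ D) (hA : IsClosed (A : Set D)) :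
    IsClosed (matSub A : Set (CStarMatrix (Fin 2) (Fin 2) D)) := by
  have : (matSub A : Set (CStarMatrix (Fin 2) (Fin 2) D)) =
      ⋂ i, ⋂ j, (fun M : CStarMatrix (Fin 2) (Fin 2) D => M i j) ⁻¹' (A : Set D) := by
    ext M
    simp only [Set.mem_iInter]
    rfl
  rw [this]
  refine isClosed_iInter fun i => isClosed_iInter fun j => hA.preimage ?_
  exact (continuous_apply j).comp (continuous_apply i)

theorem exists_entries {D : Type*} [CStarAlgebra D] [PartialOrder D] [StarOrderedRing D]
    (A : NonUnitalStarSubalgebra ℂ D) (hA : IsClosed (A : Set D))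
    (e : D) (he : e ∈ A) (he' : star e = e) (R : D) (hR : ‖R‖ ≤ 1)
    (hqm : ∀ a ∈ A, ∀ a' ∈ A, a * R * a' ∈ A) :
    ∃ b₁₁ ∈ A, ∃ b₁₂ ∈ A, ∃ b₂₁ ∈ A, ∃ b₂₂ ∈ A,
      star b₁₁ * b₁₁ + star b₂₁ * b₂₁ = e * e ∧
      star b₁₂ * b₁₂ + star b₂₂ * b₂₂ = e * e ∧
      star b₁₁ * b₁₂ + star b₂₁ * b₂₂ = e * R * e := by
  have h1 : 0 ≤ 1 - star R * R := by
    rw [sub_nonneg, ← CStarAlgebra.norm_le_one_iff_of_nonneg _ (star_mul_self_nonneg R),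
      CStarRing.norm_star_mul_self]
    exact mul_le_one₀ hR (norm_nonneg _) hR
  obtain ⟨s, hs⟩ : ∃ s : D, star s * s = 1 - star R * R :=
    ⟨CFC.sqrt (1 - star R * R), by
      rw [(IsSelfAdjoint.of_nonneg (CFC.sqrt_nonneg (1 - star R * R))).star_eq,
        CFC.sqrt_mul_sqrt_self _ h1]⟩
  let c : CStarMatrix (Fin 2) (Fin 2) D := CStarMatrix.ofMatrix !![e, R * e; 0, s * e]
  have c00 : (star c * c) 0 0 = e * e := by
    simp [CStarMatrix.mul_apply, CStarMatrix.star_apply, c, he']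
  have c01 : (star c * c) 0 1 = e * R * e := by
    simp [CStarMatrix.mul_apply, CStarMatrix.star_apply, c, he', mul_assoc]
  have c10 : (star c * c) 1 0 = star (e * R * e) := by
    simp [CStarMatrix.mul_apply, CStarMatrix.star_apply, c, he', mul_assoc]
  have c11 : (star c * c) 1 1 = e * e := by
    have : e * star R * (R * e) + e * star s * (s * e) = e * e := by
      calc _ = e * (star R * R + star s * s) * e := by noncomm_ring
        _ = _ := by rw [hs]; simp
    simpa [CStarMatrix.mul_apply, CStarMatrix.star_apply, c, he'] using this
  have hc : star c * c ∈ matSub A := by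
    intro i j
    fin_cases i <;> fin_cases j
    · exact c00 ▸ A.mul_mem he he
    · exact c01 ▸ hqm e he e he
    · exact c10 ▸ star_mem (hqm e he e he)
    · exact c11 ▸ A.mul_mem he he
  obtain ⟨b, hb, hbc⟩ := exists_factor_mem (matSub A) (isClosed_matSub A hA) c hc
  refine ⟨b 0 0, hb 0 0, b 0 1, hb 0 1, b 1 0, hb 1 0, b 1 1, hb 1 1, ?_, ?_, ?_⟩
  · rw [← c00, ← hbc]; simp [CStarMatrix.mul_apply, CStarMatrix.star_apply]
  · rw [← c11, ← hbc]; simp [CStarMatrix.mul_apply, CStarMatrix.star_apply]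
  · rw [← c01, ← hbc]; simp [CStarMatrix.mul_apply, CStarMatrix.star_apply]

/-- Columns dominated by `e` factor through `e`. -/
theorem exists_column (e b c : H →L[ℂ] H) (he : DenseRange e) (he' : star e = e)
    (h : star b * b + star c * c = e * e) :
    ∃ L : H →L[ℂ] H, L * e = b := by
  have hb : ∀ x, ‖b x‖ ≤ 1 * ‖e x‖ := by
    intro x
    have h2 : ‖b x‖ ^ 2 + ‖c x‖ ^ 2 = ‖e x‖ ^ 2 := by
      have h3 : inner ℂ ((star b * b + star c * c) x) x = inner ℂ ((star e * e) x) x := by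
        rw [h, he']
      simp only [ContinuousLinearMap.star_eq_adjoint, add_apply,
        mul_apply_eq_comp, inner_add_left,
        ContinuousLinearMap.adjoint_inner_left, inner_self_eq_norm_sq_to_K] at h3
      exact_mod_cast h3
    rw [one_mul]
    exact le_of_sq_le_sq (by nlinarith [sq_nonneg ‖c x‖]) (norm_nonneg _)
  refine ⟨(b : H →ₗ[ℂ] H).extendOfNorm (e : H →ₗ[ℂ] H), ?_⟩
  ext x
  exact LinearMap.extendOfNorm_eq (f := (b : H →ₗ[ℂ] H)) (e := (e : H →ₗ[ℂ] H)) he ⟨1, hb⟩ x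

theorem cancel_right_dense (e X Y : H →L[ℂ] H) (he : DenseRange e) (h : X * e = Y * e) : X = Y := by
  ext x
  have := he.equalizer X.continuous Y.continuous (by
    ext z; exact congrArg (fun T : H →L[ℂ] H => T z) h)
  exact congrFun this x

theorem cancel_dense (e X Y : H →L[ℂ] H) (he : DenseRange e) (he' : star e = e)
    (h : e * X * e = e * Y * e) : X = Y := by
  have h1 := cancel_right_dense e _ _ he h
  have h2 : star X * e = star Y * e := by
    have := congrArg star h1
    simpa [he'] using this
  exact star_injective (cancel_right_dense e _ _ he h2)

theorem stmt10
    (A : NonUnitalStarSubalgebra ℂ (H →L[ℂ] H))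
    (hAc : IsClosed (A : Set (H →L[ℂ] H)))
    -- `A` is nondegenerate
    (hnd : Dense (Submodule.span ℂ {v : H | ∃ a ∈ A, ∃ ξ : H, a ξ = v} : Set H))
    -- `A` is σ-unital
    (hσ : ∃ e ∈ A, 0 ≤ e ∧
      (A : Set (H →L[ℂ] H)) ⊆ closure {y : H →L[ℂ] H | ∃ a ∈ A, y = e * a})
    -- `R` is a quasi-multiplier of `A` with `‖R‖ ≤ 1`
    (R : H →L[ℂ] H) (hR : ‖R‖ ≤ 1)
    (hqm : ∀ a ∈ A, ∀ a' ∈ A, a * R * a' ∈ A) :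
    ∃ L₁₁ L₁₂ L₂₁ L₂₂ : H →L[ℂ] H,
      (∀ a ∈ A, L₁₁ * a ∈ A) ∧ (∀ a ∈ A, L₁₂ * a ∈ A) ∧
      (∀ a ∈ A, L₂₁ * a ∈ A) ∧ (∀ a ∈ A, L₂₂ * a ∈ A) ∧
      star L₁₁ * L₁₁ + star L₂₁ * L₂₁ = 1 ∧
      star L₁₂ * L₁₂ + star L₂₂ * L₂₂ = 1 ∧
      R = star L₁₁ * L₁₂ + star L₂₁ * L₂₂ := by
  obtain ⟨e, heA, he0, hed⟩ := hσ
  have he' : star e = e := (IsSelfAdjoint.of_nonneg he0).star_eq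
  have hdr : DenseRange e := by
    have hcl : (Submodule.span ℂ {v : H | ∃ a ∈ A, ∃ ξ : H, a ξ = v}) ≤
        (LinearMap.range (e : H →ₗ[ℂ] H)).topologicalClosure := by
      rw [Submodule.span_le]
      rintro _ ⟨a, ha, ξ, rfl⟩
      have hcont : Continuous (fun T : H →L[ℂ] H => T ξ) := by fun_prop
      refine map_mem_closure (f := fun T : H →L[ℂ] H => T ξ) hcont (hed ha) ?_
      rintro _ ⟨a', -, rfl⟩
      exact ⟨a' ξ, rfl⟩
    have := hnd.mono hcl
    intro x
    have h3 : x ∈ closure (((LinearMap.range (e : H →ₗ[ℂ] H)).topologicalClosure : Set H)) := this x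
    rw [Submodule.topologicalClosure_coe, closure_closure] at h3
    have h4 : ((LinearMap.range (e : H →ₗ[ℂ] H) : Submodule ℂ H) : Set H) = Set.range e := by
      ext y; simp
    rwa [h4] at h3
  obtain ⟨b₁₁, m₁₁, b₁₂, m₁₂, b₂₁, m₂₁, b₂₂, m₂₂, h1, h2, h3⟩ :=
    exists_entries A hAc e heA he' R hR hqm
  obtain ⟨L₁₁, rfl⟩ := exists_column e b₁₁ b₂₁ hdr he' h1
  obtain ⟨L₁₂, rfl⟩ := exists_column e b₁₂ b₂₂ hdr he' h2
  obtain ⟨L₂₁, rfl⟩ := exists_column e b₂₁ _ hdr he' ((add_comm _ _).trans h1)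
  obtain ⟨L₂₂, rfl⟩ := exists_column e b₂₂ _ hdr he' ((add_comm _ _).trans h2)
  have hmul : ∀ L : H →L[ℂ] H, L * e ∈ A → ∀ a ∈ A, L * a ∈ A := by
    intro L hL a ha
    have hcont : Continuous (fun T : H →L[ℂ] H => L * T) := continuous_const.mul continuous_id
    have : L * a ∈ closure (A : Set (H →L[ℂ] H)) := by
      refine map_mem_closure hcont (hed ha) ?_
      rintro _ ⟨a', ha', rfl⟩
      change L * (e * a') ∈ A
      rw [← mul_assoc]
      exact A.mul_mem hL ha'
    rwa [hAc.closure_eq] at this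
  refine ⟨L₁₁, L₁₂, L₂₁, L₂₂, hmul _ m₁₁, hmul _ m₁₂, hmul _ m₂₁, hmul _ m₂₂, ?_, ?_, ?_⟩
  · apply cancel_dense e _ _ hdr he'
    rw [mul_one, ← h1]
    simp only [star_mul, he']
    noncomm_ring
  · apply cancel_dense e _ _ hdr he'
    rw [mul_one, ← h2]
    simp only [star_mul, he']
    noncomm_ring
  · apply cancel_dense e _ _ hdr he'
    rw [← h3]
    simp only [star_mul, he']
    noncomm_ring
end

section
/- Let π : A → B be a surjective *-homomorphism of C*-algebras with A σ-unital, and let L : B → B be a bounded linear map satisfying L(bb') = L(b)b' for all b, b' ∈ B (L is a left centralizer of B). Then there exists a bounded linear map L̃ : A → A satisfying L̃(aa') = L̃(a)a' for all a, a' ∈ A, π(L̃(a)) = L(π(a)) for all a ∈ A, and ‖L̃‖ = ‖L‖. -/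
open Filter Topology

lemma aux_unital {U : Type*} [CStarAlgebra U] [PartialOrder U] [StarOrderedRing U]
    (w t s : U) (M : ℝ) (hM : 0 ≤ M) (hw0 : 0 ≤ w) (hw1 : w ≤ 1) (ht : ‖t‖ ≤ M) (hs : ‖s‖ ≤ M) :
    ‖w * t * w + (1 - w) * s * (1 - w)‖ ≤ M := by
  have hwsa : star w = w := (IsSelfAdjoint.of_nonneg hw0).star_eq
  have hc0 : 0 ≤ 1 - w := sub_nonneg.2 hw1
  have key : ∀ (c t : U), 0 ≤ c → c ≤ 1 → ‖t‖ ≤ M →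
      star (t * c) * c * (t * c) ≤ (M ^ 2) • (c * c) := by
    intro c t hc hc1 ht
    have hcsa : star c = c := (IsSelfAdjoint.of_nonneg hc).star_eq
    have h1 : star (t * c) * c * (t * c) ≤ star (t * c) * 1 * (t * c) :=
      star_left_conjugate_le_conjugate hc1 _
    have h2 : star t * t ≤ algebraMap ℝ U (M ^ 2) := by
      refine (CStarAlgebra.norm_le_iff_le_algebraMap _ (by positivity) (star_mul_self_nonneg t)).1 ?_
      rw [CStarRing.norm_star_mul_self]
      nlinarith [norm_nonneg t]
    have h3 := star_left_conjugate_le_conjugate h2 c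
    refine h1.trans ?_
    calc _ = star c * (star t * t) * c := by simp [mul_assoc]
      _ ≤ _ := h3
      _ = _ := by rw [Algebra.algebraMap_eq_smul_one, hcsa]; simp
  have hk1 := key w t hw0 hw1 ht
  have hk2 := key (1 - w) s hc0 (by simpa using hw0) hs
  have hww : 0 ≤ w * (1 - w) := by
    have : Commute w (1 - w) := by simp [commute_iff_eq, mul_sub, sub_mul]
    exact this.mul_nonneg hw0 hc0
  set x := t * w with hx
  set y := s * (1 - w) with hy
  set z := w * t * w + (1 - w) * s * (1 - w) with hz
  have hz' : z = w * x + (1 - w) * y := by simp only [hz, hx, hy, mul_assoc]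
  have hJ : star z * z ≤ star x * w * x + star y * (1 - w) * y := by
    rw [← sub_nonneg]
    have : star x * w * x + star y * (1 - w) * y - star z * z
        = star (x - y) * (w * (1 - w)) * (x - y) := by
      rw [hz']
      simp only [star_add, star_mul, star_sub, star_one, hwsa]
      noncomm_ring
    rw [this]
    exact star_left_conjugate_nonneg hww _
  have hfin : star z * z ≤ algebraMap ℝ U (M ^ 2) := by
    refine hJ.trans ((add_le_add hk1 hk2).trans ?_)
    rw [Algebra.algebraMap_eq_smul_one, ← smul_add]
    refine smul_le_smul_of_nonneg_left ?_ (by positivity)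
    rw [← sub_nonneg]
    have : (1 : U) - (w * w + (1 - w) * (1 - w)) = w * (1 - w) + w * (1 - w) := by noncomm_ring
    rw [this]
    exact add_nonneg hww hww
  have := (CStarAlgebra.norm_le_iff_le_algebraMap _ (by positivity) (star_mul_self_nonneg z)).2 hfin
  rw [CStarRing.norm_star_mul_self] at this
  exact abs_le_of_sq_le_sq' (by nlinarith) hM |>.2

lemma aux_comb {A : Type*} [NonUnitalCStarAlgebra A] (w r t s : A) (M : ℝ) (hM : 0 ≤ M)
    (hw : w = star r * r) (hw1 : ‖w‖ ≤ 1) (ht : ‖t‖ ≤ M) (hs : ‖s‖ ≤ M) :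
    ‖w * t * w + (s - w * s - (s * w - w * s * w))‖ ≤ M := by
  let _ : PartialOrder (Unitization ℂ A) := CStarAlgebra.spectralOrder _
  have _ : StarOrderedRing (Unitization ℂ A) := CStarAlgebra.spectralOrderedRing _
  have h0 : 0 ≤ (w : Unitization ℂ A) := by
    rw [hw, Unitization.inr_mul, Unitization.inr_star]
    exact star_mul_self_nonneg _
  have h1 : (w : Unitization ℂ A) ≤ 1 := by
    rw [← CStarAlgebra.norm_le_one_iff_of_nonneg _ h0, Unitization.norm_inr]; exact hw1
  have := aux_unital (w : Unitization ℂ A) t s M hM h0 h1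
    (by rwa [Unitization.norm_inr]) (by rwa [Unitization.norm_inr])
  rw [← Unitization.norm_inr (𝕜 := ℂ)]
  convert this using 2
  push_cast
  noncomm_ring

lemma aux_le {A : Type*} [NonUnitalCStarAlgebra A] (w r y : A)
    (hw : w = star r * r) (hw1 : ‖w‖ ≤ 1) :
    ‖y - w * y‖ ≤ ‖y‖ ∧ ‖y - y * w‖ ≤ ‖y‖ := by
  let _ : PartialOrder (Unitization ℂ A) := CStarAlgebra.spectralOrder _
  have _ : StarOrderedRing (Unitization ℂ A) := CStarAlgebra.spectralOrderedRing _
  have h0 : 0 ≤ (w : Unitization ℂ A) := by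
    rw [hw, Unitization.inr_mul, Unitization.inr_star]
    exact star_mul_self_nonneg _
  have h1 : (w : Unitization ℂ A) ≤ 1 := by
    rw [← CStarAlgebra.norm_le_one_iff_of_nonneg _ h0, Unitization.norm_inr]; exact hw1
  have h2 : ‖(1 : Unitization ℂ A) - w‖ ≤ 1 := by
    rw [CStarAlgebra.norm_le_one_iff_of_nonneg _ (sub_nonneg.2 h1)]
    simpa using h0
  rw [← Unitization.norm_inr (𝕜 := ℂ), ← Unitization.norm_inr (𝕜 := ℂ) (y - y * w),
    ← Unitization.norm_inr (𝕜 := ℂ) y]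
  have e1 : ((y - w * y : A) : Unitization ℂ A) = (1 - w) * y := by push_cast; noncomm_ring
  have e2 : ((y - y * w : A) : Unitization ℂ A) = y * (1 - w) := by push_cast; noncomm_ring
  rw [e1, e2]
  constructor
  · refine (norm_mul_le _ _).trans ?_
    nlinarith [norm_nonneg (y : Unitization ℂ A)]
  · refine (norm_mul_le _ _).trans ?_
    nlinarith [norm_nonneg (y : Unitization ℂ A)]

lemma aux_au0 {A : Type*} [NonUnitalCStarAlgebra A] (x j : A) (κ : ℝ) (hκ : 0 < κ) :
    ∃ w r : A, w = star r * r ∧ ‖w‖ ≤ 1 ∧ ‖x - w * x‖ ≤ κ ∧ ‖x - x * w‖ ≤ κ ∧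
      ‖j - w * j‖ ≤ κ := by
  let _ : PartialOrder A := CStarAlgebra.spectralOrder _
  have _ : StarOrderedRing A := CStarAlgebra.spectralOrderedRing _
  have hl := CStarAlgebra.increasingApproximateUnit A
  have e (f : A → A) (m : A) (h : Tendsto f (CStarAlgebra.approximateUnit A) (𝓝 m)) :
      ∀ᶠ w in CStarAlgebra.approximateUnit A, ‖m - f w‖ ≤ κ := by
    filter_upwards [h (Metric.ball_mem_nhds m hκ)] with w hw
    have : dist (f w) m < κ := hw
    rw [dist_eq_norm, norm_sub_rev] at this
    exact this.le
  obtain ⟨w, h1, h2, h3, h4, h5⟩ := (hl.eventually_nonneg.and (hl.eventually_norm.and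
    ((e _ _ (hl.tendsto_mul_right x)).and ((e _ _ (hl.tendsto_mul_left x)).and
    (e _ _ (hl.tendsto_mul_right j)))))).exists
  obtain ⟨r, hr⟩ := CStarAlgebra.nonneg_iff_eq_star_mul_self.1 h1
  exact ⟨w, r, hr, h2, h3, h4, h5⟩

lemma aux_cont {A B : Type*} [NonUnitalCStarAlgebra A] [NonUnitalCStarAlgebra B]
    (π : A →⋆ₙₐ[ℂ] B) : Continuous π :=
  AddMonoidHomClass.continuous_of_bound π 1 fun a => by
    simpa using NonUnitalStarAlgHom.norm_apply_le π a

lemma aux_au {A B : Type*} [NonUnitalCStarAlgebra A] [NonUnitalCStarAlgebra B]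
    (π : A →⋆ₙₐ[ℂ] B) (x j : A) (hx : π x = 0) (hj : π j = 0) (κ : ℝ) (hκ : 0 < κ) :
    ∃ w r : A, w = star r * r ∧ ‖w‖ ≤ 1 ∧ π w = 0 ∧ ‖x - w * x‖ ≤ κ ∧ ‖x - x * w‖ ≤ κ ∧
      ‖j - w * j‖ ≤ κ := by
  let J : NonUnitalStarSubalgebra ℂ A :=
    { carrier := {a | π a = 0}
      add_mem' := by intro a b ha hb; simp_all
      zero_mem' := by simp
      mul_mem' := by intro a b ha hb; simp_all
      smul_mem' := by intro c a ha; simp_all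
      star_mem' := by intro a ha; simp_all [map_star] }
  have _ : IsClosed (J : Set A) := by
    have hc : Continuous π := aux_cont π
    exact isClosed_eq hc continuous_const
  obtain ⟨w, r, h1, h2, h3, h4, h5⟩ := aux_au0 (⟨x, hx⟩ : J) ⟨j, hj⟩ κ hκ
  exact ⟨w, r, congrArg Subtype.val h1, h2, w.2, h3, h4, h5⟩

lemma aux_cfc {A : Type*} [NonUnitalCStarAlgebra A] (c : A) (hc : IsSelfAdjoint c) (f : ℝ → ℝ)
    (hf : Continuous f) (hf0 : f 0 = 0) :
    cfcₙ (fun x => x - f x * x - (x * f x - f x * x * f x)) c =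
      c - cfcₙ f c * c - (c * cfcₙ f c - cfcₙ f c * c * cfcₙ f c) := by
  have hid : cfcₙ (fun x : ℝ => x) c = c := cfcₙ_id' ℝ c
  have c1 : Continuous fun x => f x * x := hf.mul continuous_id
  have c2 : Continuous fun x => x * f x := continuous_id.mul hf
  have c3 : Continuous fun x => f x * x * f x := c1.mul hf
  rw [cfcₙ_sub (fun x => x - f x * x) (fun x => x * f x - f x * x * f x) c
      (continuous_id.sub c1).continuousOn (by simp) (c2.sub c3).continuousOn (by simp),
    cfcₙ_sub (fun x => x) (fun x => f x * x) c continuous_id.continuousOn rfl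
      c1.continuousOn (by simp),
    cfcₙ_sub (fun x => x * f x) (fun x => f x * x * f x) c c2.continuousOn (by simp)
      c3.continuousOn (by simp),
    cfcₙ_mul (fun x => f x * x) f c c1.continuousOn (by simp) hf.continuousOn hf0,
    cfcₙ_mul f (fun x => x) c hf.continuousOn hf0 continuous_id.continuousOn rfl,
    cfcₙ_mul (fun x => x) f c continuous_id.continuousOn rfl hf.continuousOn hf0, hid]

lemma aux_lift {A B : Type*} [NonUnitalCStarAlgebra A] [NonUnitalCStarAlgebra B]
    (π : A →⋆ₙₐ[ℂ] B) (hsurj : Function.Surjective π) (b : B) (β : ℝ) (hβ : 0 < β)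
    (hb : ‖b‖ ≤ β) : ∃ a, π a = b ∧ ‖a‖ ≤ β := by
  obtain ⟨a, ha⟩ := hsurj b
  let f : ℝ → ℝ := fun x => 1 - β / max β (√x)
  have hpos : ∀ x, 0 < max β (√x) := fun x => lt_max_of_lt_left hβ
  have hf : Continuous f := by
    refine continuous_const.sub (continuous_const.div (by fun_prop) fun x => (hpos x).ne')
  have hf0 : f 0 = 0 := by simp [f, max_eq_left hβ.le, div_self hβ.ne']
  have hsa : IsSelfAdjoint (star a * a) := .star_mul_self a
  have hsb : IsSelfAdjoint (star b * b) := .star_mul_self b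
  have hc : Continuous π := aux_cont π
  have hπ : π (cfcₙ f (star a * a)) = 0 := by
    have hab : π (star a * a) = star b * b := by simp [map_star, ha]
    rw [NonUnitalStarAlgHom.map_cfcₙ π f (star a * a) hf.continuousOn hf0 hc hsa (by rwa [hab]), hab]
    rw [show cfcₙ f (star b * b) = cfcₙ (fun _ => (0:ℝ)) (star b * b) from ?_, cfcₙ_const_zero]
    refine cfcₙ_congr fun x hx => ?_
    have : ‖x‖ ≤ ‖star b * b‖ := by
      simpa using norm_apply_le_norm_cfcₙ (𝕜 := ℝ) id (star b * b) hx (by fun_prop) rfl hsb |>.trans_eq (by rw [cfcₙ_id ℝ (star b * b)])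
    rw [CStarRing.norm_star_mul_self] at this
    have h2 : √x ≤ β := by
      refine Real.sqrt_le_iff.2 ⟨hβ.le, ?_⟩
      nlinarith [le_abs_self x, Real.norm_eq_abs x, norm_nonneg b]
    simp [f, max_eq_left h2, div_self hβ.ne']
  refine ⟨a - a * cfcₙ f (star a * a), by simp [hπ, ha], ?_⟩
  set p := cfcₙ f (star a * a) with hp
  have hps : star p = p := (cfcₙ_predicate f (star a * a) : IsSelfAdjoint p).star_eq
  have h1 : star (a - a * p) * (a - a * p) = cfcₙ (fun x => x - f x * x - (x * f x - f x * x * f x)) (star a * a) := by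
    rw [aux_cfc _ hsa f hf hf0, ← hp]
    simp only [star_sub, star_mul, hps]
    noncomm_ring
  have h2 : ‖star (a - a * p) * (a - a * p)‖ ≤ β ^ 2 := by
    rw [h1]
    refine norm_cfcₙ_le fun x hx => ?_
    have hx0 : 0 ≤ x := by
      let _ : PartialOrder A := CStarAlgebra.spectralOrder _
      have _ : StarOrderedRing A := CStarAlgebra.spectralOrderedRing _
      exact quasispectrum_nonneg_of_nonneg _ (star_mul_self_nonneg a) x hx
    have : x - f x * x - (x * f x - f x * x * f x) = (β * (√x / max β (√x))) ^ 2 := by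
      rw [mul_pow, div_pow, Real.sq_sqrt hx0]; simp only [f]; have := (hpos x).ne'; field_simp; ring
    rw [this, Real.norm_of_nonneg (by positivity)]
    have h3 : √x / max β (√x) ≤ 1 := (div_le_one (hpos x)).2 (le_max_right _ _)
    have h4 : 0 ≤ √x / max β (√x) := by have := hpos x; positivity
    gcongr
    nlinarith
  rw [CStarRing.norm_star_mul_self] at h2
  exact abs_le_of_sq_le_sq' (by nlinarith) hβ.le |>.2

lemma aux_sq (q l k : ℝ) (hl : 0 ≤ l) (hk : 0 ≤ k) (h : q ^ 2 ≤ 1 + 2 * l * k + l ^ 2) :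
    q ≤ 1 + l * k + l ^ 2 / 2 := by
  have : q ^ 2 ≤ (1 + l * k + l ^ 2 / 2) ^ 2 := by
    have : 0 ≤ l * k := by positivity
    nlinarith [sq_nonneg (l * k + l ^ 2 / 2)]
  exact (abs_le_of_sq_le_sq' this (by positivity)).2

lemma aux_z {A : Type*} [NonUnitalCStarAlgebra A] (x d : A) (l k : ℝ) (hl : 0 ≤ l) (hk : 0 ≤ k)
    (hx : ‖x‖ ≤ 1) (hd : ‖d‖ ≤ 1) (hxd : ‖star x * d‖ ≤ k) :
    ‖x + l • d‖ ≤ 1 + l * k + l ^ 2 / 2 := by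
  refine aux_sq _ l k hl hk ?_
  have e : star (x + l • d) * (x + l • d)
      = star x * x + l • (star x * d) + (l • star (star x * d) + (l * l) • (star d * d)) := by
    simp only [star_add, star_smul, star_mul, star_star, add_mul, mul_add, smul_mul_assoc,
      mul_smul_comm, mul_smul, smul_add, star_trivial]
    abel
  have h1 : ‖star (x + l • d) * (x + l • d)‖ ≤ ‖x‖ * ‖x‖ + l * k + (l * k + l * l * (‖d‖ * ‖d‖)) := by
    rw [e]
    refine (norm_add_le _ _).trans (add_le_add ((norm_add_le _ _).trans (add_le_add ?_ ?_))
      ((norm_add_le _ _).trans (add_le_add ?_ ?_)))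
    · rw [CStarRing.norm_star_mul_self]
    · rw [norm_smul, Real.norm_of_nonneg hl]; gcongr
    · rw [norm_smul, Real.norm_of_nonneg hl, norm_star]; gcongr
    · rw [norm_smul, Real.norm_of_nonneg (by positivity), CStarRing.norm_star_mul_self]
  rw [CStarRing.norm_star_mul_self] at h1
  have h2 : ‖x‖ * ‖x‖ ≤ 1 := by nlinarith [norm_nonneg x]
  have h3 : ‖d‖ * ‖d‖ ≤ 1 := by nlinarith [norm_nonneg d]
  nlinarith [mul_nonneg hl hl]

lemma aux_fun {A B : Type*} [NonUnitalCStarAlgebra A] [NonUnitalCStarAlgebra B]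
    (π : A →⋆ₙₐ[ℂ] B) (f : A →L[ℝ] ℝ) (ε : ℝ) (hε : 0 < ε) :
    ∃ x : A, π x = 0 ∧ ∃ κ > 0, ∀ w r : A, w = star r * r → ‖w‖ ≤ 1 → π w = 0 →
      ‖x - w * x‖ ≤ κ → ‖x - x * w‖ ≤ κ → ∀ y, π y = 0 → ‖y‖ ≤ 1 →
      -f (y - w * y) ≤ ε ∧ -f (y - y * w) ≤ ε := by
  let S : Set ℝ := {c | ∃ x, π x = 0 ∧ ‖x‖ ≤ 1 ∧ f x = c}
  have hS0 : (0 : ℝ) ∈ S := ⟨0, by simp, by simp, by simp⟩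
  have hSb : BddAbove S := by
    refine ⟨‖f‖, ?_⟩
    rintro c ⟨x, -, hx, rfl⟩
    refine (le_abs_self _).trans ((f.le_opNorm x).trans ?_)
    nlinarith [norm_nonneg f]
  set N := sSup S with hN
  have hN0 : 0 ≤ N := le_csSup hSb hS0
  have hNle : ∀ z, π z = 0 → ∀ c : ℝ, 0 < c → ‖z‖ ≤ c → f z ≤ N * c := by
    intro z hz c hc hzc
    have : c⁻¹ * f z ≤ N := by
      refine le_csSup hSb ⟨c⁻¹ • z, ?_, ?_, by simp⟩
      · have : c⁻¹ • z = ((c⁻¹ : ℝ) : ℂ) • z := (Complex.coe_smul _ _).symm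
        rw [this, map_smul, hz, smul_zero]
      · rw [norm_smul, Real.norm_of_nonneg (by positivity)]
        rw [inv_mul_le_iff₀ hc]; linarith
    rw [inv_mul_le_iff₀ hc] at this
    linarith
  set l := ε / (3 * (N + 1)) with hl
  have hl0 : 0 < l := by positivity
  have hlN : N * l ≤ ε / 3 := by
    rw [hl, mul_div_assoc', div_le_div_iff₀ (by positivity) (by norm_num)]
    nlinarith
  obtain ⟨c, ⟨x, hx0, hx1, rfl⟩, hc⟩ := exists_lt_of_lt_csSup ⟨0, hS0⟩
    (show N - l * (ε / 3) < sSup S by rw [← hN]; have : 0 < l * (ε / 3) := by positivity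
                                      linarith)
  have main : ∀ d, π d = 0 → ‖x - l • d‖ ≤ 1 + l * l + l ^ 2 / 2 → -f d ≤ ε := by
    intro d hd h
    have hz : π (x - l • d) = 0 := by
      have : l • d = ((l : ℝ) : ℂ) • d := by simp
      rw [map_sub, this, map_smul, hd, smul_zero, hx0, sub_zero]
    have h1 := hNle _ hz _ (by positivity) h
    simp only [map_sub, map_smul, smul_eq_mul] at h1
    have : l * (-f d) ≤ l * ε := by nlinarith
    exact le_of_mul_le_mul_left this hl0
  refine ⟨x, hx0, l, hl0, fun w r hw hw1 hπw h1 h2 y hy hy1 => ?_⟩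
  have hws : star w = w := by rw [hw]; simp
  have hle := aux_le w r y hw hw1
  constructor
  · refine main _ (by simp [hy]) ?_
    have := aux_z x (-(y - w * y)) l l hl0.le hl0.le hx1
      (by rw [norm_neg]; exact hle.1.trans hy1) ?_
    · simpa [sub_eq_add_neg] using this
    · have e : star x * (-(y - w * y)) = - (star (x - w * x) * y) := by
        simp only [star_sub, star_mul, hws]; noncomm_ring
      rw [e, norm_neg]
      refine (norm_mul_le _ _).trans ?_
      rw [norm_star]
      nlinarith [norm_nonneg y, norm_nonneg (x - w * x)]
  · refine main _ (by simp [hy]) ?_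
    have := aux_z (star x) (-star (y - y * w)) l l hl0.le hl0.le (by rwa [norm_star])
      (by rw [norm_neg, norm_star]; exact hle.2.trans hy1) ?_
    · rw [← norm_star]
      simpa [sub_eq_add_neg] using this
    · have e : star (star x) * (-star (y - y * w)) = - ((x - x * w) * star y) := by
        simp only [star_sub, star_mul, hws, star_star]; noncomm_ring
      rw [e, norm_neg]
      refine (norm_mul_le _ _).trans ?_
      rw [norm_star]
      nlinarith [norm_nonneg y, norm_nonneg (x - x * w)]

lemma aux_step {A B : Type*} [NonUnitalCStarAlgebra A] [NonUnitalCStarAlgebra B]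
    (π : A →⋆ₙₐ[ℂ] B) (hsurj : Function.Surjective π) (t e : A) (b : B) (M η : ℝ) (hM : 0 < M)
    (ht : ‖t‖ ≤ M) (hb : ‖b‖ ≤ M) (hη : ‖(b - π t) * π e‖ < η) :
    ∃ t', ‖t'‖ ≤ M ∧ π t' = b ∧ ‖(t' - t) * e‖ < η := by
  by_contra! hcon
  have hη0 : 0 < η := (norm_nonneg _).trans_lt hη
  obtain ⟨s, hs, hsM⟩ := aux_lift π hsurj b M hM hb
  let T : Set A := {a | ∃ t', ‖t'‖ ≤ M ∧ π t' = b ∧ (t' - t) * e = a}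
  have hT : Convex ℝ T := by
    rintro _ ⟨t₁, h1, h1', rfl⟩ _ ⟨t₂, h2, h2', rfl⟩ p q hp hq hpq
    refine ⟨p • t₁ + q • t₂, ?_, ?_, ?_⟩
    · refine (norm_add_le _ _).trans ?_
      rw [norm_smul, norm_smul, Real.norm_of_nonneg hp, Real.norm_of_nonneg hq]
      calc _ ≤ p * M + q * M := by gcongr
        _ = M := by rw [← add_mul, hpq, one_mul]
    · have e1 : p • t₁ = ((p : ℝ) : ℂ) • t₁ := by simp
      have e2 : q • t₂ = ((q : ℝ) : ℂ) • t₂ := by simp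
      rw [e1, e2, map_add, map_smul, map_smul, h1', h2', ← add_smul, ← Complex.ofReal_add, hpq]
      simp
    · have : t = p • t + q • t := by rw [← add_smul, hpq, one_smul]
      nth_rewrite 1 [this]
      simp only [sub_mul, add_mul, smul_mul_assoc, smul_sub]
      abel
  obtain ⟨f, u, hf1, hf2⟩ := geometric_hahn_banach_open (convex_ball (0 : A) η) Metric.isOpen_ball hT
    (by
      rw [Set.disjoint_left]
      rintro a ha ⟨t', h1, h2, rfl⟩
      have := hcon t' h1 h2
      rw [mem_ball_zero_iff] at ha
      linarith)
  have hu : 0 < u := by simpa using hf1 0 (by simpa using hη0)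
  obtain ⟨p, hp⟩ : ∃ p, f p = 1 := by
    have h := hf2 _ ⟨s, hsM, hs, rfl⟩
    have h' : 0 < f ((s - t) * e) := hu.trans_le h
    exact ⟨(f ((s - t) * e))⁻¹ • ((s - t) * e), by simp [h'.ne']⟩
  obtain ⟨η', hη1, hη2⟩ := exists_between hη
  obtain ⟨η'', hη3, hη4⟩ := exists_between hη2
  have hη'0 : 0 < η' := (norm_nonneg _).trans_lt hη1
  set δ := (η - η'') / (2 * (‖p‖ + 1)) with hδ
  have hδ0 : 0 < δ := by have : 0 < η - η'' := sub_pos.2 hη4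
                         positivity
  have hball : ∀ a, ‖a‖ ≤ η'' → f a < u - δ := by
    intro a ha
    have := hf1 (a + δ • p) (by
      rw [mem_ball_zero_iff]
      refine (norm_add_le _ _).trans_lt ?_
      rw [norm_smul, Real.norm_of_nonneg hδ0.le]
      have : δ * (2 * (‖p‖ + 1)) = η - η'' := by rw [hδ]; field_simp
      nlinarith [norm_nonneg p])
    simp only [map_add, map_smul, hp, smul_eq_mul, mul_one] at this
    linarith
  let g : A →L[ℝ] ℝ := f.comp ((ContinuousLinearMap.mul ℝ A).flip e)
  have hg : ∀ a, g a = f (a * e) := fun a => rfl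
  obtain ⟨x, hx, κ, hκ, H⟩ := aux_fun π g (δ / (2 * M)) (by positivity)
  obtain ⟨a', ha', ha'n⟩ := aux_lift π hsurj (π ((s - t) * e)) η' hη'0
    (by rw [map_mul, map_sub, hs]; exact hη1.le)
  obtain ⟨w, r, hw, hw1, hπw, k1, k2, k3⟩ := aux_au π x ((s - t) * e - a') hx
    (by rw [map_sub, ha', sub_self]) (min κ (η'' - η')) (lt_min hκ (sub_pos.2 hη3))
  have H' : ∀ y, π y = 0 → ‖y‖ ≤ M → -g (y - w * y) ≤ δ / 2 ∧ -g (y - y * w) ≤ δ / 2 := by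
    intro y hy hyM
    have hMy : π (M⁻¹ • y) = 0 := by
      have : M⁻¹ • y = ((M⁻¹ : ℝ) : ℂ) • y := (Complex.coe_smul _ _).symm
      rw [this, map_smul, hy, smul_zero]
    have := H w r hw hw1 hπw (k1.trans (min_le_left _ _)) (k2.trans (min_le_left _ _)) (M⁻¹ • y) hMy
      (by rw [norm_smul, Real.norm_of_nonneg (by positivity), inv_mul_le_iff₀ hM]; linarith)
    simp only [mul_smul_comm, smul_mul_assoc, ← smul_sub, map_smul, smul_eq_mul, ← mul_neg,
      inv_mul_le_iff₀ hM] at this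
    have e : M * (δ / (2 * M)) = δ / 2 := by field_simp
    rwa [e] at this
  have hwM : ∀ y, ‖y‖ ≤ M → ‖w * y‖ ≤ M ∧ ‖y * w‖ ≤ M := by
    intro y hy
    constructor <;> refine (norm_mul_le _ _).trans ?_ <;> nlinarith [norm_nonneg y, norm_nonneg w]
  have q1 := (H' (w * t) (by simp [hπw]) (hwM t ht).1).2
  have q2 := (H' (s * w) (by simp [hπw]) (hwM s hsM).2).1
  set z := w * t * w + (s - w * s - (s * w - w * s * w)) with hz
  have q3 := hf2 _ ⟨z, aux_comb w r t s M hM.le hw hw1 ht hsM, by simp [hz, hπw, hs], rfl⟩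
  have q4 : f ((s - t) * e - w * ((s - t) * e)) < u - δ := by
    apply hball
    have : (s - t) * e - w * ((s - t) * e)
      = (a' - w * a') + (((s - t) * e - a') - w * ((s - t) * e - a')) := by noncomm_ring
    rw [this]
    refine (norm_add_le _ _).trans ?_
    have := (aux_le w r a' hw hw1).1
    have := k3.trans (min_le_right _ _)
    linarith
  have q5 : (z - t) * e = ((s - t) * e - w * ((s - t) * e)) - (w * t - w * t * w) * e
      - (s * w - w * (s * w)) * e := by
    rw [hz]; noncomm_ring
  rw [q5, map_sub, map_sub, ← hg, ← hg] at q3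
  linarith

theorem stmt11 {A B : Type*} [NonUnitalCStarAlgebra A] [NonUnitalCStarAlgebra B]
    -- `π : A → B` is a surjective ⋆-homomorphism
    (π : A →⋆ₙₐ[ℂ] B) (hsurj : Function.Surjective π)
    -- `A` is σ-unital
    (hσ : ∃ e : A, (∃ f : A, e = star f * f) ∧ Dense (Set.range fun a : A => e * a))
    -- `L` is a (bounded) left centralizer of `B`
    (L : B →L[ℂ] B) (hL : ∀ b b' : B, L (b * b') = L b * b') :
    ∃ L' : A →L[ℂ] A,
      (∀ a a' : A, L' (a * a') = L' a * a') ∧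
      (∀ a : A, π (L' a) = L (π a)) ∧
      ‖L'‖ = ‖L‖ := by
  obtain ⟨e, -, hd⟩ := hσ
  rcases (norm_nonneg L).eq_or_lt with h0 | hM
  · have hL0 : L = 0 := norm_eq_zero.1 h0.symm
    exact ⟨0, by simp, by simp [hL0], by simp [hL0]⟩
  set M := ‖L‖ with hMdef
  have hπc := aux_cont π
  have hπn : ∀ a, ‖π a‖ ≤ ‖a‖ := fun a => NonUnitalStarAlgHom.norm_apply_le π a
  -- one step
  have step : ∀ (n : ℕ) (t : A), ‖t‖ ≤ M ∧ ‖(L (π e) - π t * π e)‖ < (1 / 2 : ℝ) ^ n * (M * ‖e‖ + 1) →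
      ∃ t', (‖t'‖ ≤ M ∧ ‖(L (π e) - π t' * π e)‖ < (1 / 2 : ℝ) ^ (n + 1) * (M * ‖e‖ + 1)) ∧
        ‖(t' - t) * e‖ ≤ 2 * (M * ‖e‖ + 1) * (1 / 2 : ℝ) ^ n := by
    rintro n t ⟨ht, hte⟩
    set C := M * ‖e‖ + 1
    have hC : 0 < C := by positivity
    have hpow : 0 < (1 / 2 : ℝ) ^ (n + 1) * C := by positivity
    obtain ⟨v, r, hv, hv1, h1, -, -⟩ := aux_au0 e e ((1 / 2 : ℝ) ^ (n + 1) * C / (2 * M))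
      (by positivity)
    have hbv : ‖L (π v)‖ ≤ M := by
      refine (L.le_opNorm _).trans ?_
      nlinarith [hπn v]
    have hve : ‖L (π e) - L (π v) * π e‖ < (1 / 2 : ℝ) ^ (n + 1) * C := by
      rw [← hL, ← map_mul, ← map_sub, ← map_sub]
      refine (L.le_opNorm _).trans_lt ?_
      calc _ ≤ M * ((1 / 2 : ℝ) ^ (n + 1) * C / (2 * M)) := by
            rw [← hMdef]; gcongr; exact (hπn _).trans h1
        _ = (1 / 2 : ℝ) ^ (n + 1) * C / 2 := by field_simp
        _ < _ := by linarith
    obtain ⟨t', k1, k2, k3⟩ := aux_step π hsurj t e (L (π v)) M (2 * C * (1 / 2 : ℝ) ^ n) hM ht hbv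
      (by
        have : (L (π v) - π t) * π e = (L (π e) - π t * π e) - (L (π e) - L (π v) * π e) := by
          noncomm_ring
        rw [this]
        refine (norm_sub_le _ _).trans_lt ?_
        rw [pow_succ] at hve hpow
        nlinarith)
    exact ⟨t', ⟨k1, by rwa [k2]⟩, k3.le⟩
  choose! F hF1 hF2 using step
  let t : ℕ → A := fun n => Nat.rec 0 (fun n a => F n a) n
  have ht : ∀ n, ‖t n‖ ≤ M ∧ ‖(L (π e) - π (t n) * π e)‖ < (1 / 2 : ℝ) ^ n * (M * ‖e‖ + 1) := by
    intro n
    induction n with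
    | zero =>
      refine ⟨by simpa [t] using hM.le, ?_⟩
      have ht0 : t 0 = 0 := rfl
      simp only [ht0, map_zero, zero_mul, sub_zero, pow_zero, one_mul]
      refine (L.le_opNorm _).trans_lt ?_
      have := mul_le_mul_of_nonneg_left (hπn e) hM.le
      linarith
    | succ n ih => exact hF1 n _ ih
  have htd : ∀ n, ‖(t (n + 1) - t n) * e‖ ≤ 2 * (M * ‖e‖ + 1) * (1 / 2 : ℝ) ^ n :=
    fun n => hF2 n _ (ht n)
  have hce : CauchySeq fun n => t n * e := by
    refine cauchySeq_of_le_geometric (1 / 2) (2 * (M * ‖e‖ + 1)) (by norm_num) fun n => ?_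
    rw [dist_eq_norm, norm_sub_rev, ← sub_mul]
    exact htd n
  have hca : ∀ a, CauchySeq fun n => t n * a := by
    intro a
    rw [Metric.cauchySeq_iff']
    intro ε hε
    obtain ⟨_, ⟨c, rfl⟩, hc⟩ := hd.exists_dist_lt a (show 0 < ε / (4 * M) by positivity)
    have h1 : CauchySeq fun n => t n * (e * c) := by
      obtain ⟨l, hl⟩ := cauchySeq_tendsto_of_complete hce
      refine Tendsto.cauchySeq (x := l * c) ?_
      simpa [mul_assoc] using hl.mul_const c
    obtain ⟨K, hK⟩ := Metric.cauchySeq_iff'.1 h1 (ε / 2) (by positivity)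
    refine ⟨K, fun n hn => ?_⟩
    have h2 := hK n hn
    rw [dist_eq_norm] at h2 hc ⊢
    have h3 : ∀ m, ‖t m * (a - e * c)‖ ≤ ε / 4 := fun m => by
      refine (norm_mul_le _ _).trans ?_
      calc _ ≤ M * (ε / (4 * M)) := by gcongr; exact (ht m).1
        _ = _ := by field_simp
    have h4 : t n * a - t K * a = (t n * (a - e * c) - t K * (a - e * c))
        + (t n * (e * c) - t K * (e * c)) := by noncomm_ring
    rw [h4]
    have := norm_add_le (t n * (a - e * c) - t K * (a - e * c)) (t n * (e * c) - t K * (e * c))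
    have := norm_sub_le (t n * (a - e * c)) (t K * (a - e * c))
    linarith [h3 n, h3 K]
  choose G hG using fun a => cauchySeq_tendsto_of_complete (hca a)
  have hGn : ∀ a, ‖G a‖ ≤ M * ‖a‖ := fun a =>
    le_of_tendsto (hG a).norm (Eventually.of_forall fun n =>
      (norm_mul_le _ _).trans (by gcongr; exact (ht n).1))
  let L₀ : A →ₗ[ℂ] A :=
    { toFun := G
      map_add' := fun a b => tendsto_nhds_unique (hG (a + b))
        (by simpa [mul_add] using (hG a).add (hG b))
      map_smul' := fun c a => tendsto_nhds_unique (hG (c • a))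
        (by simpa [mul_smul_comm] using! (hG a).const_smul c) }
  let L' : A →L[ℂ] A := L₀.mkContinuous M hGn
  have hL'G : ∀ a, L' a = G a := fun a => rfl
  have hmul : ∀ a a' : A, L' (a * a') = L' a * a' := fun a a' =>
    tendsto_nhds_unique (hG (a * a')) (by simpa [mul_assoc] using! (hG a).mul_const a')
  have hπe : π (L' e) = L (π e) := by
    refine tendsto_nhds_unique ((hπc.tendsto _).comp (hG e)) ?_
    rw [tendsto_iff_norm_sub_tendsto_zero]
    refine squeeze_zero (fun _ => norm_nonneg _) (fun n => ?_)
      (g := fun n : ℕ => (1 / 2 : ℝ) ^ n * (M * ‖e‖ + 1)) ?_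
    · rw [norm_sub_rev]
      simpa using (ht n).2.le
    · simpa using (tendsto_pow_atTop_nhds_zero_of_lt_one (r := (1 / 2 : ℝ)) (by norm_num)
        (by norm_num)).mul_const (M * ‖e‖ + 1)
  have hπL : ∀ a, π (L' a) = L (π a) := by
    have : (fun a => π (L' a)) = fun a => L (π a) := by
      refine Continuous.ext_on hd (hπc.comp L'.continuous) (L.continuous.comp hπc) ?_
      rintro _ ⟨c, rfl⟩
      simp only [hmul, map_mul, hπe, hL]
    exact fun a => congrFun this a
  refine ⟨L', hmul, hπL, le_antisymm (L₀.mkContinuous_norm_le hM.le hGn) ?_⟩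
  refine L.opNorm_le_bound (norm_nonneg _) fun b => ?_
  refine le_of_forall_pos_le_add fun ε hε => ?_
  have hpos : 0 < ε / (‖L'‖ + 1) := by positivity
  obtain ⟨a, ha, han⟩ := aux_lift π hsurj b (‖b‖ + ε / (‖L'‖ + 1)) (by positivity) (by linarith)
  rw [← ha, ← hπL, ha]
  refine (hπn _).trans ((L'.le_opNorm a).trans ?_)
  have h1 : ‖L'‖ * ‖a‖ ≤ ‖L'‖ * (‖b‖ + ε / (‖L'‖ + 1)) := by gcongr
  have h2 : (‖L'‖ + 1) * (ε / (‖L'‖ + 1)) = ε := by field_simp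
  nlinarith
end
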